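/- The map sending the generators u, v, b of the presented group G to the classes modulo Z of the matrices u = γ₀u'γ₀⁻¹, v = γ₀v'γ₀⁻¹, b = γ₀b'γ₀⁻¹ extends to a group isomorphism from G onto U/Z. -/

import Mathlib

/-!
Conjugation by `γ₀` identifies `U` with the unitary group `UO` over `ℤ[ζ]` of the Hermitian form
`γ₀* F γ₀`, so the question is whether the homomorphism `piU` from the presented group `G` to
`PU = UO / {ζᵏ}` is bijective. The form is definite on the first two coordinates, has signature
`(2, 1)` for one real embedding of `ℚ(√3)`, and is definite for the other; hence `PU` acts on the
complex ball of negative lines, and the origin of the ball is the line of `e₃`.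

*The finite group.* The relations among `u` and `v` alone give a normal form for `K = ⟨u, v⟩`,
which shows that `K` maps injectively to matrices (`KR_one`). The stabiliser of the origin
in `PU` is the image of `K` (`stab_one`).

*Transitions.* For `A` in `UO`, the number `|A₃₃|²` measures how far `A` moves the origin. If it is
at most `9`, then it is `1`, `2 + √3` or `4 + 2√3` (`good_of_normSq`), and then the class of `A`
comes from the union `SS` of the double cosets `K`, `KbK`, `KtK`, where `t = b u⁻¹ b` (`classify`).
Using the relations of `G`, a product of two elements of `SS` whose image has one of
these three corner values lies again in `SS` (`SS.mul_of_good`), and `piU` has trivial kernel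
on `SS` (`SS.eq_one`).

*Covering.* Take a suitable ball around the origin as basic neighbourhood. Two of its translates
meet only if the transition between them has `|A₃₃|² ≤ 9` (`good_of_In`). A point outside the
basic neighbourhood is brought closer to the origin, by a definite factor, by the inverse of
some `kb` with `k ∈ K` (`closer`), so the translates under `G` cover the ball (`covering`). Surjectivity of
`piU` follows (`piU_surjective`).

*Simple connectivity.* In the affine model the ball and the translates of the basic neighbourhood
are convex. A choice of a translate, unique up to `SS`, can be continued consistently from
the origin over the whole ball (`Dev.exists_sec`), which forces an element of `G` whose translate
contains the origin to lie in `SS` (`Dev.mem_of_zero_mem`). In particular the kernel of `piU` lies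
in `SS`, so it is trivial (`piU_injective`).
-/

/-- Generators of the Cartwright–Steger lattice presentation. -/
inductive CSgen : Type
  | u : CSgen
  | v : CSgen
  | b : CSgen

open FreeGroup in
/-- Relators of the Cartwright–Steger lattice:
`u³ = v⁴ = b³ = 1`, `(uv)² = (vu)²`, `vb = bv`, `(buv)³ = 1`, `(buvu)²v = 1`. -/
def csRels : Set (FreeGroup CSgen) :=
  { (of CSgen.u) ^ 3,
    (of CSgen.v) ^ 4,
    (of CSgen.b) ^ 3,
    (of CSgen.u * of CSgen.v) ^ 2 * ((of CSgen.v * of CSgen.u) ^ 2)⁻¹,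
    of CSgen.v * of CSgen.b * (of CSgen.b * of CSgen.v)⁻¹,
    (of CSgen.b * of CSgen.u * of CSgen.v) ^ 3,
    (of CSgen.b * of CSgen.u * of CSgen.v * of CSgen.u) ^ 2 * of CSgen.v }

/-- The Cartwright–Steger lattice, as an abstract presented group. -/
abbrev CS : Type := PresentedGroup csRels

def gu : CS := PresentedGroup.of CSgen.u
def gv : CS := PresentedGroup.of CSgen.v
def gb : CS := PresentedGroup.of CSgen.b
/-- `j = (uv)²`. -/
def gj : CS := (gu * gv) ^ 2

open Matrix

noncomputable section

/-- The 12th cyclotomic field `ℓ = ℚ(ζ₁₂)`. -/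
abbrev L : Type := CyclotomicField 12 ℚ

/-- `r = ζ + ζ⁻¹` (a square root of 3). -/
def rr (ζ : L) : L := ζ + ζ⁻¹

/-- The Hermitian form `F = diag(1, 1, 1 − r)`. -/
def Fmat (ζ : L) : Matrix (Fin 3) (Fin 3) L := !![1, 0, 0; 0, 1, 0; 0, 0, 1 - rr ζ]

/-- The matrix `γ₀`. -/
def gamma0 (ζ : L) : Matrix (Fin 3) (Fin 3) L := !![1, 0, 0; 1, 1 - rr ζ, 0; 0, 0, 1]

/-- The matrix `u = γ₀ u' γ₀⁻¹`. -/
def umat (ζ : L) : Matrix (Fin 3) (Fin 3) L :=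
  gamma0 ζ *
    !![ζ ^ 3 + ζ ^ 2 - ζ, 1 - ζ, 0;
       ζ ^ 3 + ζ ^ 2 - 1, ζ - ζ ^ 3, 0;
       0, 0, 1] * (gamma0 ζ)⁻¹

/-- The matrix `v = γ₀ v' γ₀⁻¹`. -/
def vmat (ζ : L) : Matrix (Fin 3) (Fin 3) L :=
  gamma0 ζ *
    !![ζ ^ 3, 0, 0;
       ζ ^ 3 + ζ ^ 2 - ζ - 1, 1, 0;
       0, 0, 1] * (gamma0 ζ)⁻¹

/-- The matrix `b = γ₀ b' γ₀⁻¹`. -/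
def bmat (ζ : L) : Matrix (Fin 3) (Fin 3) L :=
  gamma0 ζ *
    !![1, 0, 0;
       -2 * ζ ^ 3 - ζ ^ 2 + 2 * ζ + 2, ζ ^ 3 + ζ ^ 2 - ζ - 1, -ζ ^ 3 - ζ ^ 2;
       ζ ^ 2 + ζ, -ζ ^ 3 - 1, -ζ ^ 3 + ζ + 1] * (gamma0 ζ)⁻¹

/-! ### The ring `ℤ[ζ₁₂]` in coordinates -/

/-- The ring `ℤ[ζ]` of integers of the 12th cyclotomic field, in coordinates:
`⟨a, b, c, d⟩` stands for `a + bζ + cζ² + dζ³`, where `ζ⁴ = ζ² - 1`. -/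
@[ext]
structure Oz where
  a : ℤ
  b : ℤ
  c : ℤ
  d : ℤ
deriving DecidableEq

namespace Oz

instance : Zero Oz := ⟨⟨0, 0, 0, 0⟩⟩
instance : One Oz := ⟨⟨1, 0, 0, 0⟩⟩
instance : Add Oz := ⟨fun x y => ⟨x.a + y.a, x.b + y.b, x.c + y.c, x.d + y.d⟩⟩
instance : Neg Oz := ⟨fun x => ⟨-x.a, -x.b, -x.c, -x.d⟩⟩
instance : Mul Oz := ⟨fun x y =>
  ⟨x.a * y.a - (x.b * y.d + x.c * y.c + x.d * y.b) - x.d * y.d,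
   x.a * y.b + x.b * y.a - (x.c * y.d + x.d * y.c),
   x.a * y.c + x.b * y.b + x.c * y.a + (x.b * y.d + x.c * y.c + x.d * y.b),
   x.a * y.d + x.b * y.c + x.c * y.b + x.d * y.a + (x.c * y.d + x.d * y.c)⟩⟩
/-- Complex conjugation `ζ ↦ ζ⁻¹ = ζ - ζ³`. -/
instance : Star Oz := ⟨fun x => ⟨x.a + x.c, x.b, -x.c, -x.b - x.d⟩⟩

theorem zero_def : (0 : Oz) = ⟨0, 0, 0, 0⟩ := rfl
theorem one_def : (1 : Oz) = ⟨1, 0, 0, 0⟩ := rfl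
theorem add_def (x y : Oz) : x + y = ⟨x.a + y.a, x.b + y.b, x.c + y.c, x.d + y.d⟩ := rfl
theorem neg_def (x : Oz) : -x = ⟨-x.a, -x.b, -x.c, -x.d⟩ := rfl
theorem mul_def (x y : Oz) : x * y =
  ⟨x.a * y.a - (x.b * y.d + x.c * y.c + x.d * y.b) - x.d * y.d,
   x.a * y.b + x.b * y.a - (x.c * y.d + x.d * y.c),
   x.a * y.c + x.b * y.b + x.c * y.a + (x.b * y.d + x.c * y.c + x.d * y.b),
   x.a * y.d + x.b * y.c + x.c * y.b + x.d * y.a + (x.c * y.d + x.d * y.c)⟩ := rfl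
theorem star_def (x : Oz) : star x = ⟨x.a + x.c, x.b, -x.c, -x.b - x.d⟩ := rfl

instance : CommRing Oz where
  add_assoc x y z := by ext <;> simp only [add_def] <;> ring
  zero_add x := by ext <;> simp only [add_def, zero_def] <;> ring
  add_zero x := by ext <;> simp only [add_def, zero_def] <;> ring
  add_comm x y := by ext <;> simp only [add_def] <;> ring
  neg_add_cancel x := by ext <;> simp only [add_def, neg_def, zero_def] <;> ring
  mul_assoc x y z := by ext <;> simp only [mul_def] <;> ring
  one_mul x := by ext <;> simp only [mul_def, one_def] <;> ring
  mul_one x := by ext <;> simp only [mul_def, one_def] <;> ring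
  mul_comm x y := by ext <;> simp only [mul_def] <;> ring
  left_distrib x y z := by ext <;> simp only [mul_def, add_def] <;> ring
  right_distrib x y z := by ext <;> simp only [mul_def, add_def] <;> ring
  zero_mul x := by ext <;> simp only [mul_def, zero_def] <;> ring
  mul_zero x := by ext <;> simp only [mul_def, zero_def] <;> ring
  nsmul := nsmulRec
  zsmul := zsmulRec

instance : StarRing Oz where
  star_involutive x := by ext <;> simp only [star_def] <;> ring
  star_mul x y := by ext <;> simp only [star_def, mul_def] <;> ring
  star_add x y := by ext <;> simp only [star_def, add_def] <;> ring

/-- The 12th root of unity `ζ`. -/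
def z : Oz := ⟨0, 1, 0, 0⟩

/-- The element `m + n√3` of `ℤ[ζ]`, with `√3 = ζ + ζ⁻¹ = 2ζ - ζ³`. -/
def zr (m n : ℤ) : Oz := ⟨m, 2 * n, 0, -n⟩

/-- The rational part of `|x|² = x̄x`. -/
def nm (x : Oz) : ℤ := x.a ^ 2 + x.b ^ 2 + x.c ^ 2 + x.d ^ 2 + x.a * x.c + x.b * x.d

/-- The coefficient of `√3` in `|x|² = x̄x`. -/
def nr (x : Oz) : ℤ := x.a * x.b + x.b * x.c + x.c * x.d

theorem star_mul_self (x : Oz) : star x * x = zr (nm x) (nr x) := by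
  ext <;> simp only [star_def, mul_def, zr, nm, nr] <;> ring

theorem z_pow_twelve : z ^ 12 = 1 := by decide +kernel

theorem zr_inj {m n m' n' : ℤ} (h : zr m n = zr m' n') : m = m' ∧ n = n' := by
  simp only [zr, Oz.mk.injEq] at h
  omega

theorem zr_add (m n m' n' : ℤ) : zr m n + zr m' n' = zr (m + m') (n + n') := by
  ext <;> simp only [zr, add_def] <;> ring

theorem zr_mul (m n m' n' : ℤ) :
    zr m n * zr m' n' = zr (m * m' + 3 * n * n') (m * n' + n * m') := by
  ext <;> simp only [zr, mul_def] <;> ring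

theorem zr_zero : zr 0 0 = 0 := rfl
theorem zr_one : zr 1 0 = 1 := rfl

theorem nm_nonneg (x : Oz) : 0 ≤ nm x := by
  unfold nm
  nlinarith [sq_nonneg (x.a + x.c), sq_nonneg (x.b + x.d), sq_nonneg x.a, sq_nonneg x.b,
    sq_nonneg x.c, sq_nonneg x.d]

/-- Both real embeddings of `|x|²` are nonnegative, so its norm to `ℚ` is. -/
theorem nr_sq_le (x : Oz) : 3 * nr x ^ 2 ≤ nm x ^ 2 := by
  unfold nm nr
  nlinarith [sq_nonneg (x.a ^ 2 + x.c ^ 2 + x.a * x.c - x.b ^ 2 - x.d ^ 2 - x.b * x.d),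
    sq_nonneg (x.a * x.b + x.b * x.c + x.c * x.d + 2 * (x.a * x.d - x.b * x.c))]

theorem coord_bound {x : Oz} (h : nm x ≤ 4) :
    x.a ∈ Finset.Icc (-2 : ℤ) 2 ∧ x.b ∈ Finset.Icc (-2 : ℤ) 2 ∧
      x.c ∈ Finset.Icc (-2 : ℤ) 2 ∧ x.d ∈ Finset.Icc (-2 : ℤ) 2 := by
  unfold nm at h
  simp only [Finset.mem_Icc]
  refine ⟨⟨?_, ?_⟩, ⟨?_, ?_⟩, ⟨?_, ?_⟩, ?_, ?_⟩ <;>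
  nlinarith [sq_nonneg (x.a + 2 * x.c), sq_nonneg (x.b + 2 * x.d), sq_nonneg (2 * x.a + x.c),
    sq_nonneg (2 * x.b + x.d)]

/-- The elements `x` with `|x|²` among `0, 1, 2, 2 + √3, 4 + 2√3`, up to roots of unity. -/
theorem small_table : ∀ a ∈ Finset.Icc (-2 : ℤ) 2, ∀ b ∈ Finset.Icc (-2 : ℤ) 2,
    ∀ c ∈ Finset.Icc (-2 : ℤ) 2, ∀ d ∈ Finset.Icc (-2 : ℤ) 2,
    (nm ⟨a, b, c, d⟩ = 0 → (⟨a, b, c, d⟩ : Oz) = 0) ∧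
    (nm ⟨a, b, c, d⟩ = 1 → ∃ k : Fin 12, (⟨a, b, c, d⟩ : Oz) = z ^ (k : ℕ)) ∧
    (nm ⟨a, b, c, d⟩ = 2 → nr ⟨a, b, c, d⟩ = 0 →
      ∃ k : Fin 12, (⟨a, b, c, d⟩ : Oz) = z ^ (k : ℕ) * ⟨1, 0, 0, 1⟩) ∧
    (nm ⟨a, b, c, d⟩ = 2 → nr ⟨a, b, c, d⟩ = 1 →
      ∃ k : Fin 12, (⟨a, b, c, d⟩ : Oz) = z ^ (k : ℕ) * ⟨1, 1, 0, -1⟩) ∧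
    (nm ⟨a, b, c, d⟩ = 4 → nr ⟨a, b, c, d⟩ = 2 →
      ∃ k : Fin 12, (⟨a, b, c, d⟩ : Oz) = z ^ (k : ℕ) * ⟨1, 2, 0, -1⟩) ∧
    ¬(nm ⟨a, b, c, d⟩ = 3 ∧ nr ⟨a, b, c, d⟩ = 1) ∧
    (nm ⟨a, b, c, d⟩ = 1 → nr ⟨a, b, c, d⟩ = 0) := by
  decide +kernel

theorem small {x : Oz} (h : nm x ≤ 4) :
    (nm x = 0 → x = 0) ∧
    (nm x = 1 → ∃ k : Fin 12, x = z ^ (k : ℕ)) ∧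
    (nm x = 2 → nr x = 0 → ∃ k : Fin 12, x = z ^ (k : ℕ) * ⟨1, 0, 0, 1⟩) ∧
    (nm x = 2 → nr x = 1 → ∃ k : Fin 12, x = z ^ (k : ℕ) * ⟨1, 1, 0, -1⟩) ∧
    (nm x = 4 → nr x = 2 → ∃ k : Fin 12, x = z ^ (k : ℕ) * ⟨1, 2, 0, -1⟩) ∧
    ¬(nm x = 3 ∧ nr x = 1) ∧ (nm x = 1 → nr x = 0) := by
  obtain ⟨ha, hb, hc, hd⟩ := coord_bound h
  exact small_table _ ha _ hb _ hc _ hd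

end Oz

/-! ### Words in the two reflections `u`, `v` and in `b` -/

section Words

variable {G : Type*} [Group G] {u v b j : G}

/-- The presentation of the complex reflection group of order 288 generated by `u` and `v`,
with a name `j` for its central element `(uv)²`. -/
structure URel (u v j : G) : Prop where
  hu : u ^ 3 = 1
  hv : v ^ 4 = 1
  hj : u * v * u * v = j
  hj' : v * u * v * u = j

namespace URel

theorem ju (h : URel u v j) : Commute j u := by
  show j * u = u * j
  rw [← h.hj']; nth_rewrite 1 [h.hj', ← h.hj]; group

theorem jv (h : URel u v j) : Commute j v := by
  show j * v = v * j
  rw [← h.hj]; nth_rewrite 1 [h.hj, ← h.hj']; group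

theorem u_inv (h : URel u v j) : u⁻¹ = u * u := by
  rw [inv_eq_iff_mul_eq_one, ← h.hu, pow_three]

theorem v_inv_sq (h : URel u v j) : v⁻¹ * v⁻¹ = v * v := by
  have := h.hv
  rw [← _root_.mul_inv_rev, inv_eq_iff_mul_eq_one, ← this, pow_succ, pow_three]; simp only [mul_assoc]

theorem uvu (h : URel u v j) : u * v * u = j * v⁻¹ := by rw [← h.hj]; group
theorem vuv (h : URel u v j) : v * u * v = j * u⁻¹ := by rw [← h.hj']; group
theorem uv (h : URel u v j) : u * v = j * (v⁻¹ * u⁻¹) := by rw [← h.hj]; group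
theorem vu (h : URel u v j) : v * u = j * (u⁻¹ * v⁻¹) := by rw [← h.hj']; group

theorem uu (h : URel u v j) : u * u = j⁻¹ * (v * u * v) := by rw [h.vuv, ← h.u_inv]; group

theorem uvvu (h : URel u v j) : u * (v * v) * u = j * j * (v⁻¹ * u * v⁻¹) := by
  have h1 : u * (v * v) * u = (u * v) * (v * u) := by group
  have h2 : u⁻¹ * u⁻¹ = u := by rw [← _root_.mul_inv_rev, ← h.u_inv]; simp
  rw [h1, h.uv, h.vu]
  calc _ = j * ((v⁻¹ * u⁻¹) * j) * (u⁻¹ * v⁻¹) := by group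
    _ = j * (j * (v⁻¹ * u⁻¹)) * (u⁻¹ * v⁻¹) := by
        rw [((h.jv.inv_right).mul_right (h.ju.inv_right)).eq]
    _ = j * j * (v⁻¹ * (u⁻¹ * u⁻¹) * v⁻¹) := by group
    _ = _ := by rw [h2]

theorem uv_uu (h : URel u v j) : u * v⁻¹ * (u * u) = j⁻¹ * j⁻¹ * (v * u * (v * v)) := by
  have h1 : v⁻¹ * u⁻¹ = j⁻¹ * (u * v) := by rw [h.uv]; group
  calc _ = u * (v⁻¹ * u⁻¹) := by rw [h.u_inv]; group
    _ = (u * j⁻¹) * (u * v) := by rw [h1]; group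
    _ = j⁻¹ * (u * u) * v := by rw [h.ju.inv_left.eq.symm]; group
    _ = _ := by rw [h.uu]; group

/-- Conjugation by `u v⁻¹ u` inverts `v` up to the centre. -/
theorem a_v (h : URel u v j) : u * v⁻¹ * u * v = j ^ 3 * (v⁻¹ * (u * v⁻¹ * u)) := by
  have h1 : u * v⁻¹ * u * v = j * (u * (v * v) * u⁻¹) := by
    calc _ = u * v⁻¹ * (u * v) := by group
      _ = (u * v⁻¹ * j) * (v⁻¹ * u⁻¹) := by rw [h.uv]; group
      _ = (j * (u * v⁻¹)) * (v⁻¹ * u⁻¹) := by rw [(h.ju.mul_right h.jv.inv_right).eq]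
      _ = j * (u * (v⁻¹ * v⁻¹) * u⁻¹) := by group
      _ = _ := by rw [h.v_inv_sq]
  have h2 : v⁻¹ * u = j⁻¹ * (u * v * u⁻¹) := by
    have : v⁻¹ = j⁻¹ * (u * v * u) := by rw [h.uvu]; group
    rw [this, h.u_inv]; group
  have h3 : u⁻¹ * v⁻¹ = j⁻¹ * (v * u) := by rw [h.vu]; group
  rw [h1]
  symm
  calc _ = j ^ 3 * ((v⁻¹ * u) * (v⁻¹ * u)) := by group
    _ = j ^ 3 * (j⁻¹ * (u * v * (u⁻¹ * v⁻¹) * u)) := by rw [h2]; nth_rewrite 2 [← h2]; group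
    _ = j ^ 2 * ((u * v) * j⁻¹ * (v * u * u)) := by rw [h3]; group
    _ = j ^ 2 * (j⁻¹ * (u * v) * (v * (u * u))) := by
        rw [((h.ju.mul_right h.jv).inv_left).eq]; group
    _ = _ := by rw [← h.u_inv]; group

theorem j_pow (h : URel u v j) : j ^ 12 = 1 := by
  have hc : Commute (j ^ 3) v⁻¹ := (h.jv.pow_left 3).inv_right
  have h1 : (u * v⁻¹ * u) * v * (u * v⁻¹ * u)⁻¹ = j ^ 3 * v⁻¹ := by rw [h.a_v]; group
  have h2 := congrArg (· ^ 4) h1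
  simp only [conj_pow, h.hv, hc.mul_pow, _root_.inv_pow] at h2
  simpa [← pow_mul] using h2.symm

end URel

/-- The normal form of an element of the group generated by `u` and `v`: powers of the centre
`j` times representatives of the three double cosets of `⟨j, v⟩`. -/
def NF1 (u v j k : G) : Prop :=
  ∃ n i : ℤ, k = j ^ n * v ^ i ∨ (∃ l : ℤ, k = j ^ n * v ^ i * u * v ^ l) ∨
    k = j ^ n * v ^ i * (u * v⁻¹ * u)

theorem URel.nf_v (h : URel u v j) {k : G} (hk : NF1 u v j k) : NF1 u v j (k * v) := by
  obtain ⟨n, i, rfl | ⟨l, rfl⟩ | rfl⟩ := hk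
  · exact ⟨n, i + 1, Or.inl (by group)⟩
  · exact ⟨n, i, Or.inr (Or.inl ⟨l + 1, by group⟩)⟩
  · refine ⟨n + 3, i - 1, Or.inr (Or.inr ?_)⟩
    rw [mul_assoc, h.a_v]
    have := ((h.jv.pow_left 3).zpow_right i).eq
    calc _ = j ^ n * (v ^ i * j ^ 3) * v⁻¹ * (u * v⁻¹ * u) := by group
      _ = j ^ n * (j ^ 3 * v ^ i) * v⁻¹ * (u * v⁻¹ * u) := by rw [this]
      _ = _ := by group

theorem URel.nf_u (h : URel u v j) {k : G} (hk : NF1 u v j k) : NF1 u v j (k * u) := by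
  have hc (m i : ℤ) : v ^ i * j ^ m = j ^ m * v ^ i :=
    ((h.jv.zpow_left m).zpow_right i).eq.symm
  obtain ⟨n, i, rfl | ⟨l, rfl⟩ | rfl⟩ := hk
  · exact ⟨n, i, Or.inr (Or.inl ⟨0, by group⟩)⟩
  · have h4 : v ^ (4 : ℤ) = 1 := by exact_mod_cast h.hv
    have hl : v ^ l = v ^ (l % 4) := by
      conv_lhs => rw [← Int.emod_add_mul_ediv l 4, _root_.zpow_add, _root_.zpow_mul, h4]
      simp
    rw [hl]
    have h0 := Int.emod_nonneg l (by norm_num : (4 : ℤ) ≠ 0)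
    have h5 := Int.emod_lt_of_pos l (by norm_num : (0 : ℤ) < 4)
    interval_cases l % 4
    · refine ⟨n - 1, i + 1, Or.inr (Or.inl ⟨1, ?_⟩)⟩
      calc _ = j ^ n * v ^ i * (u * u) := by group
        _ = j ^ n * (v ^ i * j ^ (-1 : ℤ)) * v * u * v := by rw [h.uu]; group
        _ = _ := by rw [hc]; group
    · refine ⟨n + 1, i - 1, Or.inl ?_⟩
      calc _ = j ^ n * v ^ i * (u * v * u) := by group
        _ = j ^ n * (v ^ i * j ^ (1 : ℤ)) * v⁻¹ := by rw [h.uvu]; group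
        _ = _ := by rw [hc]; group
    · refine ⟨n + 2, i - 1, Or.inr (Or.inl ⟨-1, ?_⟩)⟩
      calc _ = j ^ n * v ^ i * (u * (v * v) * u) := by rw [_root_.zpow_two]; group
        _ = j ^ n * (v ^ i * j ^ (2 : ℤ)) * v⁻¹ * u * v⁻¹ := by
            rw [h.uvvu, _root_.zpow_two]; group
        _ = _ := by rw [hc]; group
    · refine ⟨n, i, Or.inr (Or.inr ?_)⟩
      have h3 : v ^ (3 : ℤ) = v⁻¹ := by
        rw [eq_inv_iff_mul_eq_one, ← _root_.zpow_add_one]; exact h4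
      rw [h3]; group
  · refine ⟨n - 2, i + 1, Or.inr (Or.inl ⟨2, ?_⟩)⟩
    calc _ = j ^ n * v ^ i * (u * v⁻¹ * (u * u)) := by group
      _ = j ^ n * (v ^ i * j ^ (-2 : ℤ)) * v * u * (v * v) := by rw [h.uv_uu]; group
      _ = _ := by rw [hc, ← _root_.zpow_two]; group

theorem URel.nf (h : URel u v j) {k : G} (hk : k ∈ Subgroup.closure {u, v}) :
    NF1 u v j k := by
  have hu' : u⁻¹ = u * u := h.u_inv
  have hv' : v⁻¹ = v * v * v := by
    rw [inv_eq_iff_mul_eq_one, ← h.hv, pow_succ, pow_three]; simp only [mul_assoc]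
  induction hk using Subgroup.closure_induction_right with
  | one => exact ⟨0, 0, Or.inl (by simp)⟩
  | mul_right x _ y hy ih =>
    rcases hy with rfl | rfl
    · exact h.nf_u ih
    · exact h.nf_v ih
  | mul_inv_cancel x _ y hy ih =>
    rcases hy with rfl | rfl
    · rw [hu', ← mul_assoc]; exact h.nf_u (h.nf_u ih)
    · rw [hv', ← mul_assoc, ← mul_assoc]; exact h.nf_v (h.nf_v (h.nf_v ih))

theorem zpow_eq_pow_lt {x : G} {m : ℕ} (hm : 0 < m) (hx : x ^ m = 1) (n : ℤ) :
    ∃ k < m, x ^ n = x ^ k := by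
  have hm' : (0 : ℤ) < m := by exact_mod_cast hm
  refine ⟨(n % m).toNat, ?_, ?_⟩
  · have := Int.emod_lt_of_pos n hm'
    have := Int.emod_nonneg n hm'.ne'
    omega
  · rw [← zpow_natCast x (n % m).toNat, Int.toNat_of_nonneg (Int.emod_nonneg n hm'.ne')]
    have hx' : x ^ (m : ℤ) = 1 := by exact_mod_cast hx
    conv_lhs => rw [← Int.emod_add_mul_ediv n m, _root_.zpow_add, _root_.zpow_mul, hx']
    simp

/-- The normal form with exponents reduced modulo the orders of `j` and `v`. -/
theorem URel.nf_nat (h : URel u v j) {k : G} (hk : k ∈ Subgroup.closure {u, v}) :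
    ∃ n < 12, ∃ i < 4, k = j ^ n * v ^ i ∨ (∃ l < 4, k = j ^ n * v ^ i * u * v ^ l) ∨
      k = j ^ n * v ^ i * (u * v ^ 3 * u) := by
  have hv' : v⁻¹ = v ^ 3 := by
    rw [inv_eq_iff_mul_eq_one, ← h.hv]; group
  obtain ⟨n, i, hk⟩ := h.nf hk
  obtain ⟨n', hn', hn⟩ := zpow_eq_pow_lt (by norm_num) h.j_pow n
  obtain ⟨i', hi', hi⟩ := zpow_eq_pow_lt (by norm_num) h.hv i
  refine ⟨n', hn', i', hi', ?_⟩
  rw [hn, hi] at hk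
  rcases hk with hk | ⟨l, hk⟩ | hk
  · exact Or.inl hk
  · obtain ⟨l', hl', hl⟩ := zpow_eq_pow_lt (by norm_num) h.hv l
    exact Or.inr (Or.inl ⟨l', hl', hl ▸ hk⟩)
  · exact Or.inr (Or.inr (hv' ▸ hk))

/-- The relations between `b` and the finite group `⟨u, v⟩`. -/
structure BRel (u v b j : G) : Prop extends URel u v j where
  hb : b ^ 3 = 1
  vb : v * b = b * v
  h6 : (b * u * v) ^ 3 = 1
  h7 : (b * u * v * u) ^ 2 * v = 1

namespace BRel

theorem bb (h : BRel u v b j) : b * b = b⁻¹ := by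
  rw [eq_inv_iff_mul_eq_one, ← h.hb, pow_three, mul_assoc]

theorem bvi (h : BRel u v b j) : b * v⁻¹ = v⁻¹ * b := ((show Commute v b from h.vb).inv_left).eq.symm

theorem bjb (h : BRel u v b j) : b * j * b = v * j⁻¹ := by
  have h1 := h.h7
  have h2 : (b * u * v * u) ^ 2 * v = b * (u * v * u) * b * (u * v * u) * v := by
    rw [pow_two]; group
  rw [h2, h.uvu] at h1
  have h3 : b * (j * v⁻¹) * b * (j * v⁻¹) * v = (b * j * b) * (v⁻¹ * j) := by
    calc _ = b * j * (v⁻¹ * b) * j := by group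
      _ = _ := by rw [← h.bvi]; group
  rw [h3, mul_eq_one_iff_eq_inv] at h1
  rw [h1, _root_.mul_inv_rev, _root_.inv_inv]
  exact h.jv.inv_left.eq

theorem bj (h : BRel u v b j) : b * j = v * j⁻¹ * b⁻¹ := by rw [← h.bjb]; group
theorem jb (h : BRel u v b j) : j * b = b⁻¹ * (v * j⁻¹) := by rw [← h.bjb]; group
theorem bi (h : BRel u v b j) : b⁻¹ = j * b * (j * v⁻¹) := by
  have : j * v⁻¹ = (v * j⁻¹)⁻¹ := by group
  rw [this, ← h.bjb]; group

/-- The braid relation, hidden in `(buv)³ = 1`. -/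
theorem bub (h : BRel u v b j) : b * u * b = u * b * u := by
  have h1 : (b * u * b) * (v * u * b * (v * u * v)) = 1 := by
    rw [← h.h6]
    calc _ = b * u * (b * v) * u * (b * v) * u * v := by group
      _ = _ := by rw [← h.vb, pow_three]; group
  rw [mul_eq_one_iff_eq_inv] at h1
  calc _ = (v * u * v)⁻¹ * b⁻¹ * (v * u)⁻¹ := by rw [h1]; group
    _ = u * j⁻¹ * (j * b * (j * v⁻¹)) * (v * u)⁻¹ := by rw [h.vuv, ← h.bi]; group
    _ = u * b * j * (v * u * v)⁻¹ := by group
    _ = u * b * (j * u) * j⁻¹ := by rw [h.vuv]; group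
    _ = _ := by rw [h.ju.eq]; group

theorem ubui (h : BRel u v b j) : u * b * u⁻¹ = b⁻¹ * u * b := by
  calc _ = b⁻¹ * (b * u * b) * u⁻¹ := by group
    _ = _ := by rw [h.bub]; group
  
theorem biuibu (h : BRel u v b j) : b⁻¹ * u⁻¹ * b * u = u * b⁻¹ := by
  calc _ = b⁻¹ * u⁻¹ * (b * u * b) * b⁻¹ := by group
    _ = _ := by rw [h.bub]; group

/-- `t = b u⁻¹ b` satisfies `u t = t⁻¹`. -/
theorem u_t (h : BRel u v b j) : u * (b * u⁻¹ * b) = b⁻¹ * u * b⁻¹ := by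
  calc _ = (u * b * u⁻¹) * b := by group
    _ = b⁻¹ * u * (b * b) := by rw [h.ubui]; group
    _ = _ := by rw [h.bb]

theorem t_u (h : BRel u v b j) : b * u⁻¹ * b * u = u * (b * u⁻¹ * b) := by
  calc _ = b * b * (b⁻¹ * u⁻¹ * b * u) := by group
    _ = _ := by rw [h.biuibu, h.bb, h.u_t]; group

theorem t_t (h : BRel u v b j) : b * u⁻¹ * b * (b * u⁻¹ * b) = u⁻¹ := by
  have h1 : (b * u⁻¹ * b) * (u * (b * u⁻¹ * b)) = 1 := by rw [h.u_t]; group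
  rw [← mul_assoc, h.t_u] at h1
  rw [eq_inv_iff_mul_eq_one, mul_assoc, h.t_u, ← mul_assoc, h.t_u]
  exact h1

theorem bjjb (h : BRel u v b j) : b * (j * j) * b = v * j⁻¹ * b * (v * j⁻¹) := by
  have h2 : b⁻¹ * b⁻¹ = b := by rw [← _root_.mul_inv_rev, h.bb]; simp
  calc _ = (b * j) * (j * b) := by group
    _ = v * j⁻¹ * (b⁻¹ * b⁻¹) * (v * j⁻¹) := by rw [h.bj, h.jb]; group
    _ = _ := by rw [h2]

theorem bjub (h : BRel u v b j) : b * j * u * b = v * j⁻¹ * u * b * u⁻¹ := by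
  calc _ = v * j⁻¹ * (b⁻¹ * u * b) := by rw [h.bj]; group
    _ = _ := by rw [← h.ubui]; group

theorem bjjub (h : BRel u v b j) : b * (j * j) * u * b = v * j⁻¹ * u * (b * u⁻¹ * b) * (v * j⁻¹) := by
  calc _ = (b * j) * (j * u) * b := by group
    _ = (b * j) * u * (j * b) := by rw [h.ju.eq]; group
    _ = v * j⁻¹ * (b⁻¹ * u * b⁻¹) * (v * j⁻¹) := by rw [h.bj, h.jb]; group
    _ = _ := by rw [← h.u_t]; group

theorem bjiub (h : BRel u v b j) : b * j⁻¹ * u * b = v⁻¹ * (b * u⁻¹ * b) * v⁻¹ := by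
  have h1 : u = j * (v⁻¹ * u⁻¹) * v⁻¹ := by rw [← h.uv]; group
  calc _ = b * j⁻¹ * (j * (v⁻¹ * u⁻¹) * v⁻¹) * b := by rw [← h1]
    _ = (b * v⁻¹) * u⁻¹ * (v⁻¹ * b) := by group
    _ = _ := by rw [h.bvi, ← h.bvi]; nth_rewrite 1 [h.bvi]; group

theorem b_t (h : BRel u v b j) : b * (b * u⁻¹ * b) = u * b⁻¹ * u⁻¹ := by
  calc _ = (b * b) * u⁻¹ * b := by group
    _ = (b⁻¹ * u⁻¹ * b * u) * u⁻¹ := by rw [h.bb]; group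
    _ = _ := by rw [h.biuibu]

theorem bj_t (h : BRel u v b j) : b * j * (b * u⁻¹ * b) = v * j⁻¹ * u⁻¹ * b := by
  rw [← h.bjb]; group

theorem t_v_t (h : BRel u v b j) : b * u⁻¹ * b * v * (b * u⁻¹ * b) =
    u⁻¹ * v⁻¹ * (b * u⁻¹ * b) * (v⁻¹ * u⁻¹) := by
  have h1 : u * (b * u⁻¹ * b * v * (b * u⁻¹ * b)) * u = b * j⁻¹ * u * b := by
    have h2 : u * v * u⁻¹ = j * v⁻¹ * u := by
      calc _ = j * v⁻¹ * (u * u)⁻¹ := by rw [h.uv]; group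
        _ = _ := by rw [← h.u_inv]; group
    have h3 : b * u * b⁻¹ = u⁻¹ * b * u := by
      calc _ = u⁻¹ * (u * b * u) * b⁻¹ := by group
        _ = _ := by rw [← h.bub]; group
    have h4 : b⁻¹ * b⁻¹ = b := by rw [← _root_.mul_inv_rev, h.bb]; simp
    calc _ = (u * b * u⁻¹) * (b * v) * (b * u⁻¹ * b * u) := by group
      _ = (u * b * u⁻¹) * v * (b * b) * u⁻¹ * b * u := by rw [← h.vb]; group
      _ = (u * b * u⁻¹) * v * (b⁻¹ * u⁻¹ * b * u) := by rw [h.bb]; group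
      _ = b⁻¹ * u * (b * v) * u * b⁻¹ := by rw [h.ubui, h.biuibu]; group
      _ = b⁻¹ * u * v * (b * u * b⁻¹) := by rw [← h.vb]; group
      _ = b⁻¹ * (u * v * u⁻¹) * b * u := by rw [h3]; group
      _ = b⁻¹ * j * v⁻¹ * (u * b * u) := by rw [h2]; group
      _ = b⁻¹ * j * (v⁻¹ * b) * u * b := by rw [← h.bub]; group
      _ = b⁻¹ * (j * b) * v⁻¹ * u * b := by rw [← h.bvi]; group
      _ = (b⁻¹ * b⁻¹) * (v * j⁻¹) * v⁻¹ * u * b := by rw [h.jb]; group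
      _ = _ := by rw [h4, ← h.jv.inv_left.eq]; group
  rw [h.bjiub] at h1
  calc _ = u⁻¹ * (u * (b * u⁻¹ * b * v * (b * u⁻¹ * b)) * u) * u⁻¹ := by group
    _ = _ := by rw [h1]; group

theorem t_vi_t (h : BRel u v b j) : b * u⁻¹ * b * v⁻¹ * (b * u⁻¹ * b) = v * u * (b * u⁻¹ * b) * v := by
  have hT : (b * u⁻¹ * b)⁻¹ = u * (b * u⁻¹ * b) := by rw [h.u_t]; group
  have h1 := congrArg (·⁻¹) h.t_v_t
  simp only [_root_.mul_inv_rev _ (b * u⁻¹ * b), _root_.mul_inv_rev _ v,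
    _root_.mul_inv_rev _ (v⁻¹ * u⁻¹), hT] at h1
  rw [← h.t_u] at h1
  have h2 := congrArg (fun x => u⁻¹ * x * u⁻¹) h1
  calc _ = u⁻¹ * (u * (b * u⁻¹ * b) * v⁻¹ * (b * u⁻¹ * b * u)) * u⁻¹ := by group
    _ = v * (b * u⁻¹ * b * u) * v := by
      rw [← h.t_u, mul_assoc (b * u⁻¹ * b * u), h2]; group
    _ = _ := by rw [h.t_u]; group

end BRel
end Words

/-- Since `u` and `v` have finite order, `⟨u, v⟩` is generated by them as a monoid. -/
theorem URel.induction {G : Type*} [Group G] {u v j : G} (h : URel u v j) {p : G → Prop}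
    (h1 : p 1) (hpu : ∀ k, p k → p (k * u)) (hpv : ∀ k, p k → p (k * v)) {k : G}
    (hk : k ∈ Subgroup.closure {u, v}) : p k := by
  have hu' : u⁻¹ = u * u := h.u_inv
  have hv' : v⁻¹ = v * v * v := by
    rw [inv_eq_iff_mul_eq_one, ← h.hv, pow_succ, pow_three]; simp only [mul_assoc]
  induction hk using Subgroup.closure_induction_right with
  | one => exact h1
  | mul_right x _ y hy ih =>
    rcases hy with rfl | rfl
    · exact hpu _ ih
    · exact hpv _ ih
  | mul_inv_cancel x _ y hy ih =>
    rcases hy with rfl | rfl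
    · rw [hu', ← mul_assoc]; exact hpu _ (hpu _ ih)
    · rw [hv', ← mul_assoc, ← mul_assoc]; exact hpv _ (hpv _ (hpv _ ih))

open Oz

/-! ### The integral unitary group -/

/-- `3 × 3` matrices over `ℤ[ζ]`. -/
abbrev M3 := Matrix (Fin 3) (Fin 3) Oz

/-- The Gram matrix `γ₀* F γ₀` of the Hermitian form in the basis given by `γ₀`. -/
def Hm : M3 := !![2, zr 1 (-1), 0; zr 1 (-1), zr 4 (-2), 0; 0, 0, zr 1 (-1)]
/-- The matrix `u'`. -/
def uM : M3 := !![⟨0, -1, 1, 1⟩, ⟨1, -1, 0, 0⟩, 0; ⟨-1, 0, 1, 1⟩, ⟨0, 1, 0, -1⟩, 0; 0, 0, 1]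
/-- The matrix `v'`. -/
def vM : M3 := !![⟨0, 0, 0, 1⟩, 0, 0; ⟨-1, -1, 1, 1⟩, 1, 0; 0, 0, 1]
/-- The matrix `b'`. -/
def bM : M3 := !![1, 0, 0; ⟨2, 2, -1, -2⟩, ⟨-1, -1, 1, 1⟩, ⟨0, 0, -1, -1⟩;
  ⟨0, 1, 1, 0⟩, ⟨-1, 0, 0, -1⟩, ⟨1, 1, 0, -1⟩]
/-- The matrix `(u'v')² = diag(ζ, ζ, 1)`. -/
def jM : M3 := !![z, 0, 0; 0, z, 0; 0, 0, 1]

/-- The integral unitary group, in the coordinates given by `γ₀`. -/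
def UO : Subgroup M3ˣ where
  carrier := {A | (A : M3)ᴴ * Hm * (A : M3) = Hm}
  one_mem' := by simp
  mul_mem' {A B} hA hB := by
    simp only [Set.mem_ofPred_eq, Units.val_mul, Matrix.conjTranspose_mul] at *
    calc _ = (B : M3)ᴴ * ((A : M3)ᴴ * Hm * (A : M3)) * (B : M3) := by
          simp only [Matrix.mul_assoc]
      _ = _ := by rw [hA, hB]
  inv_mem' {A} hA := by
    simp only [Set.mem_ofPred_eq] at *
    have h1 : (A : M3) * ((A⁻¹ : M3ˣ) : M3) = 1 := by simp
    have h2 : ((A⁻¹ : M3ˣ) : M3)ᴴ * (A : M3)ᴴ = 1 := by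
      rw [← Matrix.conjTranspose_mul, h1, Matrix.conjTranspose_one]
    calc _ = ((A⁻¹ : M3ˣ) : M3)ᴴ * ((A : M3)ᴴ * Hm * (A : M3)) * ((A⁻¹ : M3ˣ) : M3) := by rw [hA]
      _ = (((A⁻¹ : M3ˣ) : M3)ᴴ * (A : M3)ᴴ) * Hm * ((A : M3) * ((A⁻¹ : M3ˣ) : M3)) := by
          simp only [Matrix.mul_assoc]
      _ = _ := by rw [h1, h2]; simp

/-- The underlying matrix of an element of the unitary group. -/
def mat : UO →* M3 := (Units.coeHom M3).comp UO.subtype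

theorem mat_inj {A B : UO} (h : mat A = mat B) : A = B := Subtype.ext (Units.ext h)

theorem mat_unitary (A : UO) : (mat A)ᴴ * Hm * mat A = Hm := A.2

/-- The element of `UO` with a given matrix and inverse. -/
def mkU (A B : M3) (h1 : A * B = 1) (h2 : B * A = 1) (h : Aᴴ * Hm * A = Hm) : UO :=
  ⟨⟨A, B, h1, h2⟩, h⟩

theorem mat_mkU (A B : M3) (h1 h2 h) : mat (mkU A B h1 h2 h) = A := rfl

/-- `u` as an element of the unitary group. -/
def uU : UO := mkU uM (uM * uM) (by decide +kernel) (by decide +kernel) (by decide +kernel)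
/-- `v` as an element of the unitary group. -/
def vU : UO := mkU vM (vM * vM * vM) (by decide +kernel) (by decide +kernel) (by decide +kernel)
/-- `b` as an element of the unitary group. -/
def bU : UO := mkU bM (bM * bM) (by decide +kernel) (by decide +kernel) (by decide +kernel)
/-- The scalar matrix `ζ`. -/
def zU : UO := mkU (z • 1) (z ^ 11 • 1) (by decide +kernel) (by decide +kernel) (by decide +kernel)
/-- `j = (uv)²` as an element of the unitary group. -/
def jU : UO := uU * vU * uU * vU

theorem mat_u : mat uU = uM := rfl
theorem mat_v : mat vU = vM := rfl
theorem mat_b : mat bU = bM := rfl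
theorem mat_z : mat zU = z • 1 := rfl
theorem mat_j : mat jU = jM := by
  simp only [jU, map_mul, mat_u, mat_v]; decide +kernel

/-- The central subgroup of scalar matrices `ζᵏ`. -/
def ZO : Subgroup UO := Subgroup.zpowers zU

theorem zU_comm (A : UO) : zU * A = A * zU := by
  apply mat_inj; simp [map_mul, mat_z]

theorem zU_pow (k : ℕ) : mat (zU ^ k) = z ^ k • 1 := by
  rw [map_pow, mat_z, smul_pow, one_pow]

theorem zU_pow12 : zU ^ 12 = 1 := by
  apply mat_inj; rw [zU_pow, z_pow_twelve]; simp

theorem mem_ZO {A : UO} : A ∈ ZO ↔ ∃ k < 12, mat A = z ^ k • 1 := by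
  constructor
  · rintro ⟨n, rfl⟩
    obtain ⟨k, hk, h⟩ := zpow_eq_pow_lt (by norm_num) zU_pow12 n
    exact ⟨k, hk, by simp only [h, zU_pow]⟩
  · rintro ⟨k, -, h⟩
    have : A = zU ^ k := mat_inj (by rw [h, zU_pow])
    rw [this]
    exact pow_mem (Subgroup.mem_zpowers zU) k

instance : ZO.Normal := by
  constructor
  rintro _ ⟨n, rfl⟩ g
  have h : Commute zU g := zU_comm g
  have h2 : g * zU ^ n = zU ^ n * g := (h.zpow_left n).eq.symm
  show g * zU ^ n * g⁻¹ ∈ ZO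
  rw [h2]
  exact ⟨n, by simp⟩

/-- The projective unitary group. -/
abbrev PU := UO ⧸ ZO

theorem mk_eq_of_mat {A B : UO} (k : ℕ) (h : mat A = z ^ k • mat B) :
    (QuotientGroup.mk A : PU) = QuotientGroup.mk B := by
  symm
  rw [QuotientGroup.eq]
  have : A = B * zU ^ k := mat_inj (by rw [map_mul, zU_pow, h]; simp)
  rw [this, inv_mul_cancel_left]
  exact pow_mem (Subgroup.mem_zpowers zU) k

theorem mat_of_mk_eq {A B : UO} (h : (QuotientGroup.mk A : PU) = QuotientGroup.mk B) :
    ∃ k < 12, mat B = z ^ k • mat A := by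
  rw [QuotientGroup.eq, mem_ZO] at h
  obtain ⟨k, hk, h⟩ := h
  refine ⟨k, hk, ?_⟩
  have : B = A * (A⁻¹ * B) := by group
  rw [this, map_mul, h]; simp

/-- The images of the generators. -/
def genPU : CSgen → PU
  | .u => QuotientGroup.mk uU
  | .v => QuotientGroup.mk vU
  | .b => QuotientGroup.mk bU

theorem mk_rel {A : UO} (k : ℕ) (h : mat A = z ^ k • 1) : (QuotientGroup.mk A : PU) = 1 :=
  mk_eq_of_mat (B := 1) k (by rw [h, map_one])

theorem genPU_rel : ∀ r ∈ csRels, FreeGroup.lift genPU r = 1 := by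
  intro r hr
  simp only [csRels, Set.mem_insert_iff, Set.mem_singleton_iff] at hr
  rcases hr with rfl | rfl | rfl | rfl | rfl | rfl | rfl
  · simp only [map_pow, FreeGroup.lift_apply_of, genPU]
    exact mk_rel (A := uU ^ 3) 0 (by simp only [map_pow, mat_u]; decide +kernel)
  · simp only [map_pow, FreeGroup.lift_apply_of, genPU]
    exact mk_rel (A := vU ^ 4) 0 (by simp only [map_pow, mat_v]; decide +kernel)
  · simp only [map_pow, FreeGroup.lift_apply_of, genPU]
    exact mk_rel (A := bU ^ 3) 0 (by simp only [map_pow, mat_b]; decide +kernel)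
  · simp only [map_pow, map_mul, map_inv, FreeGroup.lift_apply_of, genPU]
    rw [mul_inv_eq_one]
    exact mk_eq_of_mat (A := (uU * vU) ^ 2) (B := (vU * uU) ^ 2) 0
      (by simp only [map_pow, map_mul, mat_u, mat_v]; decide +kernel)
  · simp only [map_mul, map_inv, FreeGroup.lift_apply_of, genPU]
    rw [mul_inv_eq_one]
    exact mk_eq_of_mat (A := vU * bU) (B := bU * vU) 0
      (by simp only [map_mul, mat_b, mat_v]; decide +kernel)
  · simp only [map_pow, map_mul, FreeGroup.lift_apply_of, genPU]
    exact mk_rel (A := (bU * uU * vU) ^ 3) 11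
      (by simp only [map_pow, map_mul, mat_u, mat_v, mat_b]; decide +kernel)
  · simp only [map_pow, map_mul, FreeGroup.lift_apply_of, genPU]
    exact mk_rel (A := (bU * uU * vU * uU) ^ 2 * vU) 11
      (by simp only [map_pow, map_mul, mat_u, mat_v, mat_b]; decide +kernel)

/-- The homomorphism from the presented group to the projective unitary group. -/
def piU : CS →* PU := PresentedGroup.toGroup genPU_rel

theorem piU_u : piU gu = QuotientGroup.mk uU := PresentedGroup.toGroup.of genPU_rel
theorem piU_v : piU gv = QuotientGroup.mk vU := PresentedGroup.toGroup.of genPU_rel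
theorem piU_b : piU gb = QuotientGroup.mk bU := PresentedGroup.toGroup.of genPU_rel

theorem cs_rel {r : FreeGroup CSgen} (hr : r ∈ csRels) : PresentedGroup.mk csRels r = 1 :=
  PresentedGroup.one_of_mem hr

theorem gu_mk : gu = PresentedGroup.mk csRels (FreeGroup.of CSgen.u) := rfl
theorem gv_mk : gv = PresentedGroup.mk csRels (FreeGroup.of CSgen.v) := rfl
theorem gb_mk : gb = PresentedGroup.mk csRels (FreeGroup.of CSgen.b) := rfl

theorem brel : BRel gu gv gb gj := by
  have hj : gu * gv * gu * gv = gj := by rw [gj, pow_two]; simp only [mul_assoc]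
  refine { hu := ?_, hv := ?_, hj := hj, hj' := ?_, hb := ?_, vb := ?_, h6 := ?_, h7 := ?_ }
  · exact cs_rel (r := (FreeGroup.of CSgen.u) ^ 3) (by simp [csRels])
  · exact cs_rel (r := (FreeGroup.of CSgen.v) ^ 4) (by simp [csRels])
  · have := cs_rel (r := (FreeGroup.of CSgen.u * FreeGroup.of CSgen.v) ^ 2 *
      ((FreeGroup.of CSgen.v * FreeGroup.of CSgen.u) ^ 2)⁻¹) (by simp [csRels])
    rw [map_mul, map_inv, mul_inv_eq_one] at this
    rw [← hj]
    simpa [pow_two, gu_mk, gv_mk, mul_assoc] using this.symm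
  · exact cs_rel (r := (FreeGroup.of CSgen.b) ^ 3) (by simp [csRels])
  · have := cs_rel (r := FreeGroup.of CSgen.v * FreeGroup.of CSgen.b *
      (FreeGroup.of CSgen.b * FreeGroup.of CSgen.v)⁻¹) (by simp [csRels])
    rw [map_mul, map_inv, mul_inv_eq_one] at this
    simpa [gv_mk, gb_mk] using this
  · exact cs_rel (r := (FreeGroup.of CSgen.b * FreeGroup.of CSgen.u *
      FreeGroup.of CSgen.v) ^ 3) (by simp [csRels])
  · exact cs_rel (r := (FreeGroup.of CSgen.b * FreeGroup.of CSgen.u *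
      FreeGroup.of CSgen.v * FreeGroup.of CSgen.u) ^ 2 * FreeGroup.of CSgen.v) (by simp [csRels])

/-! ### The finite group generated by `u` and `v` -/

/-- `u` together with its matrix. -/
def ku : CS × UO := (gu, uU)
/-- `v` together with its matrix. -/
def kv : CS × UO := (gv, vU)
/-- `j` together with its matrix. -/
def kj : CS × UO := (gj, jU)

theorem krel : URel ku kv kj := by
  have h := brel
  refine ⟨Prod.ext h.hu (mat_inj ?_), Prod.ext h.hv (mat_inj ?_), Prod.ext h.hj rfl,
    Prod.ext h.hj' (mat_inj ?_)⟩
  · show mat (uU ^ 3) = mat 1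
    simp only [map_pow, map_one, mat_u]; decide +kernel
  · show mat (vU ^ 4) = mat 1
    simp only [map_pow, map_one, mat_v]; decide +kernel
  · show mat (vU * uU * vU * uU) = mat jU
    simp only [map_mul, mat_u, mat_v, mat_j]; decide +kernel

/-- The graph, inside `G × U`, of the correspondence between the subgroup of `G` generated by
`u` and `v` and a finite matrix group. -/
def KR : Subgroup (CS × UO) := Subgroup.closure {ku, kv}

theorem ku_mem : ku ∈ KR := Subgroup.subset_closure (by simp)
theorem kv_mem : kv ∈ KR := Subgroup.subset_closure (by simp)
theorem kj_mem : kj ∈ KR := by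
  rw [← krel.hj]
  exact mul_mem (mul_mem (mul_mem ku_mem kv_mem) ku_mem) kv_mem

theorem KR_pi {k : CS × UO} (hk : k ∈ KR) : piU k.1 = QuotientGroup.mk k.2 := by
  have : KR ≤ ((piU.comp (MonoidHom.fst CS UO)).eqLocus
      ((QuotientGroup.mk' ZO).comp (MonoidHom.snd CS UO))) := by
    rw [KR, Subgroup.closure_le]
    rintro x (rfl | rfl)
    · exact piU_u
    · exact piU_v
  exact this hk

/-- The matrix underlying a pair. -/
def kmat : CS × UO →* M3 := mat.comp (MonoidHom.snd CS UO)

theorem kmat_u : kmat ku = uM := rfl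
theorem kmat_v : kmat kv = vM := rfl
theorem kmat_j : kmat kj = jM := mat_j

theorem KR_shape {k : CS × UO} (hk : k ∈ KR) : kmat k 2 0 = 0 ∧ kmat k 2 1 = 0 ∧
    kmat k 2 2 = 1 ∧ kmat k 0 2 = 0 ∧ kmat k 1 2 = 0 := by
  refine krel.induction (p := fun k => kmat k 2 0 = 0 ∧ kmat k 2 1 = 0 ∧
    kmat k 2 2 = 1 ∧ kmat k 0 2 = 0 ∧ kmat k 1 2 = 0) ?_ ?_ ?_ hk
  · rw [map_one]; decide +kernel
  · rintro k ⟨h1, h2, h3, h4, h5⟩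
    rw [map_mul, kmat_u]
    simp [Matrix.mul_apply, Fin.sum_univ_three, uM, h1, h2, h3, h4, h5]
  · rintro k ⟨h1, h2, h3, h4, h5⟩
    rw [map_mul, kmat_v]
    simp [Matrix.mul_apply, Fin.sum_univ_three, vM, h1, h2, h3, h4, h5]

theorem F1_table : ∀ (n : Fin 12) (i : Fin 4),
    (jM ^ (n : ℕ) * vM ^ (i : ℕ) = 1 → n = 0 ∧ i = 0) ∧
    (∀ l : Fin 4, jM ^ (n : ℕ) * vM ^ (i : ℕ) * uM * vM ^ (l : ℕ) ≠ 1) ∧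
    jM ^ (n : ℕ) * vM ^ (i : ℕ) * (uM * vM ^ 3 * uM) ≠ 1 := by
  decide +kernel

/-- The matrix determines the element of `⟨u, v⟩ ⊆ G`. -/
theorem KR_one {k : CS × UO} (hk : k ∈ KR) (h : kmat k = 1) : k = 1 := by
  obtain ⟨n, hn, i, hi, rfl | ⟨l, hl, rfl⟩ | rfl⟩ := krel.nf_nat hk
  · have := (F1_table ⟨n, hn⟩ ⟨i, hi⟩).1 (by simpa [kmat_u, kmat_v, kmat_j] using h)
    simp only [Fin.ext_iff] at this
    simp only [Fin.val_zero] at this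
    simp [this.1, this.2]
  · exact absurd (by simpa [kmat_u, kmat_v, kmat_j] using h)
      ((F1_table ⟨n, hn⟩ ⟨i, hi⟩).2.1 ⟨l, hl⟩)
  · exact absurd (by simpa [kmat_u, kmat_v, kmat_j] using h) (F1_table ⟨n, hn⟩ ⟨i, hi⟩).2.2

theorem KR_eq {k l : CS × UO} (hk : k ∈ KR) (hl : l ∈ KR) (h : kmat k = kmat l) : k = l := by
  have := KR_one (mul_mem (inv_mem hk) hl)
    (by rw [map_mul, ← h, ← map_mul, inv_mul_cancel, map_one])
  exact (inv_mul_eq_one.mp this)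

/-! ### Double cosets of the finite group -/

/-- The element `t = b u⁻¹ b`. -/
def gt : CS := gb * gu⁻¹ * gb

/-- `t` as an element of the unitary group. -/
def tU : UO := bU * uU⁻¹ * bU

/-- The matrix of `t`. -/
def tM : M3 := !![⟨1, 0, -1, -1⟩, ⟨-1, 0, 1, 0⟩, ⟨0, 0, -1, 0⟩;
  ⟨2, 1, -2, -2⟩, ⟨-1, -2, 0, 2⟩, ⟨1, 0, -2, -2⟩; ⟨0, 1, 1, 0⟩, ⟨0, 0, -1, -1⟩, ⟨1, 2, 0, -1⟩]

theorem mat_t : mat tU = tM := by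
  have : mat uU⁻¹ = uM * uM := rfl
  simp only [tU, map_mul, mat_b, this]; decide +kernel

theorem piU_t : piU gt = QuotientGroup.mk tU := by
  simp only [gt, tU, map_mul, map_inv, piU_b, piU_u, QuotientGroup.mk_mul, QuotientGroup.mk_inv]

/-- Reading off a normal form relative to `⟨j, x⟩` on the left. -/
theorem kj_step {x : CS × UO} (hx : Commute kj x) (n i c d : ℕ) (w : CS × UO) :
    kj ^ n * x ^ i * (kj ^ c * x ^ d * w) = kj ^ (n + c) * x ^ (i + d) * w := by
  have := (hx.pow_pow c i).eq
  calc _ = kj ^ n * (x ^ i * kj ^ c) * x ^ d * w := by simp only [mul_assoc]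
    _ = _ := by rw [← this]; simp only [pow_add, mul_assoc]

theorem ku_red (l : ℕ) : ku ^ l = 1 ∨ ku ^ l = ku ∨ ku ^ l = ku ^ 2 := by
  obtain ⟨k, hk, h⟩ := zpow_eq_pow_lt (by norm_num) krel.hu l
  rw [zpow_natCast] at h
  interval_cases k
  · left; rw [h, pow_zero]
  · right; left; rw [h, pow_one]
  · right; right; exact h

/-- An identity between words in `u, v, j` can be checked on matrices. -/
theorem KR_word {k l : CS × UO}
    (hk : k ∈ KR ∧ l ∈ KR := by
      constructor <;> repeat' first
        | exact ku_mem | exact kv_mem | exact kj_mem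
        | apply pow_mem | apply mul_mem | apply one_mem)
    (h : kmat k = kmat l := by
      simp only [map_mul, map_pow, map_one, kmat_u, kmat_v, kmat_j]; decide +kernel) : k = l :=
  KR_eq hk.1 hk.2 h

/-- Representatives of `⟨v⟩\K/⟨u⟩` modulo the centre. -/
theorem nf_vu {k : CS × UO} (hk : k ∈ KR) : ∃ n i l : ℕ, k = kj ^ n * kv ^ i * ku ^ l ∨
    k = kj ^ n * kv ^ i * (ku * kv ^ 2 * ku ^ l) := by
  have e1 : ku * kv = kj ^ 1 * kv ^ 3 * ku ^ 2 :=
    KR_word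
  have e2 : ku ^ 2 * kv = kj ^ 11 * kv ^ 1 * (ku * kv ^ 2 * ku ^ 0) :=
    KR_word
  have e3 : ku * kv ^ 2 * kv = kj ^ 10 * kv ^ 1 * (ku * kv ^ 2 * ku ^ 1) :=
    KR_word
  have e4 : ku * kv ^ 2 * ku * kv = kj ^ 2 * kv ^ 3 * ku ^ 1 :=
    KR_word
  have e5 : ku * kv ^ 2 * ku ^ 2 * kv = kj ^ 3 * kv ^ 3 * (ku * kv ^ 2 * ku ^ 2) :=
    KR_word
  refine krel.induction (p := fun k => ∃ n i l : ℕ, k = kj ^ n * kv ^ i * ku ^ l ∨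
    k = kj ^ n * kv ^ i * (ku * kv ^ 2 * ku ^ l)) ⟨0, 0, 0, Or.inl (by simp)⟩ ?_ ?_ hk
  · rintro k ⟨n, i, l, rfl | rfl⟩
    · exact ⟨n, i, l + 1, Or.inl (by simp only [pow_succ, mul_assoc])⟩
    · exact ⟨n, i, l + 1, Or.inr (by simp only [pow_succ, mul_assoc])⟩
  · rintro k ⟨n, i, l, rfl | rfl⟩
    · rcases ku_red l with h | h | h <;> rw [h]
      · exact ⟨n, i + 1, 0, Or.inl (by simp only [pow_succ, pow_zero, mul_one, mul_assoc])⟩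
      · rw [mul_assoc, e1, kj_step krel.jv]; exact ⟨_, _, _, Or.inl rfl⟩
      · rw [mul_assoc, e2, kj_step krel.jv]; exact ⟨_, _, _, Or.inr rfl⟩
    · rcases ku_red l with h | h | h <;> rw [h]
      · rw [mul_one, mul_assoc, e3, kj_step krel.jv]; exact ⟨_, _, _, Or.inr rfl⟩
      · rw [mul_assoc, e4, kj_step krel.jv]; exact ⟨_, _, _, Or.inl rfl⟩
      · rw [mul_assoc, e5, kj_step krel.jv]; exact ⟨_, _, _, Or.inr rfl⟩

/-- Representatives of `⟨u⟩\K/⟨u⟩` modulo the centre. -/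
theorem nf_uu {k : CS × UO} (hk : k ∈ KR) : ∃ n i l : ℕ, ∃ x : CS × UO,
    (x = 1 ∧ l = 0 ∨ x = kv ∨ x = kv ^ 2 ∨ x = kv ^ 2 * ku ^ 2 * kv) ∧
      k = kj ^ n * ku ^ i * (x * ku ^ l) := by
  have e1 : kv * ku * kv = kj ^ 1 * ku ^ 2 * (1 * ku ^ 0) :=
    KR_word
  have e2 : kv * ku ^ 2 * kv = kj ^ 2 * ku ^ 2 * (kv ^ 2 * ku ^ 2) :=
    KR_word
  have e3 : kv ^ 2 * kv = kj ^ 11 * ku ^ 1 * (kv * ku ^ 1) :=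
    KR_word
  have e4 : kv ^ 2 * ku * kv = kj ^ 1 * ku ^ 0 * (kv * ku ^ 2) :=
    KR_word
  have e5 : kv ^ 2 * ku ^ 2 * kv * kv = kj ^ 9 * ku ^ 1 * (kv ^ 2 * ku ^ 1) :=
    KR_word
  have e6 : kv ^ 2 * ku ^ 2 * kv * ku * kv = kj ^ 1 * ku ^ 0 * (kv ^ 2 * ku ^ 1) :=
    KR_word
  have e7 : kv ^ 2 * ku ^ 2 * kv * ku ^ 2 * kv = kj ^ 5 * ku ^ 2 * (kv ^ 2 * ku ^ 1) :=
    KR_word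
  refine krel.induction (p := fun k => ∃ n i l : ℕ, ∃ x : CS × UO,
    (x = 1 ∧ l = 0 ∨ x = kv ∨ x = kv ^ 2 ∨ x = kv ^ 2 * ku ^ 2 * kv) ∧
      k = kj ^ n * ku ^ i * (x * ku ^ l)) ⟨0, 0, 0, 1, Or.inl ⟨rfl, rfl⟩, by simp⟩ ?_ ?_ hk
  · rintro k ⟨n, i, l, x, ⟨rfl, rfl⟩ | hx, rfl⟩
    · exact ⟨n, i + 1, 0, 1, Or.inl ⟨rfl, rfl⟩, by simp [pow_succ, mul_assoc]⟩
    · exact ⟨n, i, l + 1, x, Or.inr hx, by simp only [pow_succ, mul_assoc]⟩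
  · rintro k ⟨n, i, l, x, ⟨rfl, rfl⟩ | rfl | rfl | rfl, rfl⟩
    · exact ⟨n, i, 0, kv, Or.inr (Or.inl rfl), by simp [mul_assoc]⟩
    · rcases ku_red l with h | h | h <;> rw [h]
      · exact ⟨n, i, 0, kv ^ 2, Or.inr (Or.inr (Or.inl rfl)), by simp [mul_assoc, pow_two]⟩
      · rw [mul_assoc (kj ^ n * ku ^ i), e1, kj_step krel.ju]; exact ⟨_, _, _, _, Or.inl ⟨rfl, rfl⟩, rfl⟩
      · rw [mul_assoc (kj ^ n * ku ^ i), e2, kj_step krel.ju]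
        exact ⟨_, _, _, _, Or.inr (Or.inr (Or.inl rfl)), rfl⟩
    · rcases ku_red l with h | h | h <;> rw [h]
      · rw [mul_one, mul_assoc (kj ^ n * ku ^ i), e3, kj_step krel.ju]
        exact ⟨_, _, _, _, Or.inr (Or.inl rfl), rfl⟩
      · rw [mul_assoc (kj ^ n * ku ^ i), e4, kj_step krel.ju]
        exact ⟨_, _, _, _, Or.inr (Or.inl rfl), rfl⟩
      · exact ⟨n, i, 0, _, Or.inr (Or.inr (Or.inr rfl)), by simp [mul_assoc]⟩
    · rcases ku_red l with h | h | h <;> rw [h]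
      · rw [mul_one, mul_assoc (kj ^ n * ku ^ i), e5, kj_step krel.ju]
        exact ⟨_, _, _, _, Or.inr (Or.inr (Or.inl rfl)), rfl⟩
      · rw [mul_assoc (kj ^ n * ku ^ i), e6, kj_step krel.ju]
        exact ⟨_, _, _, _, Or.inr (Or.inr (Or.inl rfl)), rfl⟩
      · rw [mul_assoc (kj ^ n * ku ^ i), e7, kj_step krel.ju]
        exact ⟨_, _, _, _, Or.inr (Or.inr (Or.inl rfl)), rfl⟩

theorem kj_red (n : ℕ) : ∃ m : Fin 12, kj ^ n = kj ^ (m : ℕ) := by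
  obtain ⟨k, hk, h⟩ := zpow_eq_pow_lt (by norm_num) krel.j_pow n
  exact ⟨⟨k, hk⟩, by simpa using h⟩

/-- `|A₃₃|²`, as a pair `(m, n)` standing for `m + n√3`. -/
def Nn (A : UO) : ℤ × ℤ := (nm (mat A 2 2), nr (mat A 2 2))

theorem star_z_pow (k : ℕ) : star (z ^ k) * z ^ k = 1 := by
  have : star z * z = 1 := by decide +kernel
  rw [star_pow, ← mul_pow, this, one_pow]

theorem nm_nr_z (k : ℕ) (x : Oz) : nm (z ^ k * x) = nm x ∧ nr (z ^ k * x) = nr x := by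
  apply zr_inj
  rw [← star_mul_self, ← star_mul_self, star_mul]
  calc _ = star x * x * (star (z ^ k) * z ^ k) := by ring
    _ = _ := by rw [star_z_pow, mul_one]

theorem nm_nr_star (x : Oz) : nm (star x) = nm x ∧ nr (star x) = nr x := by
  constructor <;> simp only [nm, nr, star_def] <;> ring

theorem Nn_mk {A B : UO} (h : (QuotientGroup.mk A : PU) = QuotientGroup.mk B) : Nn A = Nn B := by
  obtain ⟨k, -, h⟩ := mat_of_mk_eq h
  rw [Nn, Nn, h, Matrix.smul_apply, smul_eq_mul, (nm_nr_z k _).1, (nm_nr_z k _).2]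

theorem Nn_K_left {k : CS × UO} (hk : k ∈ KR) (A : UO) : Nn (k.2 * A) = Nn A := by
  obtain ⟨h1, h2, h3, -, -⟩ := KR_shape hk
  have : mat (k.2 * A) 2 2 = mat A 2 2 := by
    change kmat k 2 0 = 0 at h1
    rw [map_mul, Matrix.mul_apply, Fin.sum_univ_three]
    show kmat k 2 0 * _ + kmat k 2 1 * _ + kmat k 2 2 * _ = _
    rw [h1, h2, h3]; ring
  rw [Nn, Nn, this]

theorem Nn_K_right {k : CS × UO} (hk : k ∈ KR) (A : UO) : Nn (A * k.2) = Nn A := by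
  obtain ⟨-, -, h3, h1, h2⟩ := KR_shape hk
  have : mat (A * k.2) 2 2 = mat A 2 2 := by
    rw [map_mul, Matrix.mul_apply, Fin.sum_univ_three]
    show _ * kmat k 0 2 + _ * kmat k 1 2 + _ * kmat k 2 2 = _
    rw [h1, h2, h3]; ring
  rw [Nn, Nn, this]

theorem zr_cancel {x y : Oz} (h : zr 1 (-1) * x = zr 1 (-1) * y) : x = y := by
  have h2 : zr (-2) 0 * x = zr (-2) 0 * y := by
    have : zr (-2) 0 = zr 1 1 * zr 1 (-1) := by decide +kernel
    rw [this, mul_assoc, h, mul_assoc]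
  ext
  all_goals
    simp only [zr, mul_def, Oz.mk.injEq] at h2
    omega

theorem mat_inv_22 (A : UO) : mat A⁻¹ 2 2 = star (mat A 2 2) := by
  have h : (mat A)ᴴ * Hm = Hm * mat A⁻¹ := by
    have h1 := mat_unitary A
    have h2 : mat A * mat A⁻¹ = 1 := by rw [← map_mul]; simp
    calc _ = (mat A)ᴴ * Hm * (mat A * mat A⁻¹) := by rw [h2, Matrix.mul_one]
      _ = (mat A)ᴴ * Hm * mat A * mat A⁻¹ := by simp only [Matrix.mul_assoc]
      _ = _ := by rw [h1]
  have h3 := congrFun (congrFun h 2) 2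
  simp [Matrix.mul_apply, Fin.sum_univ_three, Hm] at h3
  apply zr_cancel
  rw [← h3, mul_comm]

theorem Nn_inv (A : UO) : Nn A⁻¹ = Nn A := by
  rw [Nn, Nn, mat_inv_22, (nm_nr_star _).1, (nm_nr_star _).2]

/-- The values of `|A₃₃|²` on the three double cosets `K`, `KbK`, `KtK`. -/
def Good (x : ℤ × ℤ) : Prop := x = (1, 0) ∨ x = (2, 1) ∨ x = (4, 2)

instance (x : ℤ × ℤ) : Decidable (Good x) := by unfold Good; infer_instance

/-- The image of an element of `G` in the projective unitary group has a good corner entry. -/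
def GoodG (g : CS) : Prop := ∃ A : UO, piU g = QuotientGroup.mk A ∧ Good (Nn A)

theorem GoodG.good {g : CS} (h : GoodG g) {A : UO} (hA : piU g = QuotientGroup.mk A) :
    Good (Nn A) := by
  obtain ⟨B, hB, h⟩ := h
  rwa [Nn_mk (hA.symm.trans hB)]

theorem GoodG.inv {g : CS} (h : GoodG g) : GoodG g⁻¹ := by
  obtain ⟨A, hA, h⟩ := h
  exact ⟨A⁻¹, by rw [map_inv, hA]; rfl, by rwa [Nn_inv]⟩

/-- The finite subgroup `K` of `G` generated by `u` and `v`. -/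
def Kt : Subgroup CS := KR.map (MonoidHom.fst CS UO)

theorem gu_mem : gu ∈ Kt := ⟨ku, ku_mem, rfl⟩
theorem gv_mem : gv ∈ Kt := ⟨kv, kv_mem, rfl⟩
theorem gj_mem : gj ∈ Kt := ⟨kj, kj_mem, rfl⟩

theorem GoodG.mul_left {g k : CS} (hk : k ∈ Kt) (h : GoodG g) : GoodG (k * g) := by
  obtain ⟨A, hA, h⟩ := h
  obtain ⟨k, hk, rfl⟩ := hk
  exact ⟨k.2 * A, by rw [map_mul, hA]; erw [KR_pi hk]; rfl, by rwa [Nn_K_left hk]⟩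

theorem GoodG.mul_right {g k : CS} (hk : k ∈ Kt) (h : GoodG g) : GoodG (g * k) := by
  obtain ⟨A, hA, h⟩ := h
  obtain ⟨k, hk, rfl⟩ := hk
  exact ⟨A * k.2, by rw [map_mul, hA]; erw [KR_pi hk]; rfl, by rwa [Nn_K_right hk]⟩

/-- The union of the double cosets `K`, `KbK`, `KtK` in `G`. -/
def SS : Set CS := {g | ∃ k ∈ Kt, ∃ k' ∈ Kt, g = k * k' ∨ g = k * gb * k' ∨ g = k * gt * k'}

theorem SS.mul_left {g k : CS} (hk : k ∈ Kt) (h : g ∈ SS) : k * g ∈ SS := by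
  obtain ⟨k1, h1, k2, h2, rfl | rfl | rfl⟩ := h <;>
  refine ⟨k * k1, mul_mem hk h1, k2, h2, ?_⟩ <;> simp only [mul_assoc, true_or, or_true]

theorem SS.mul_right {g k : CS} (hk : k ∈ Kt) (h : g ∈ SS) : g * k ∈ SS := by
  obtain ⟨k1, h1, k2, h2, rfl | rfl | rfl⟩ := h <;>
  refine ⟨k1, h1, k2 * k, mul_mem h2 hk, ?_⟩ <;> simp only [mul_assoc, true_or, or_true]

theorem SS.of_K {k : CS} (hk : k ∈ Kt) : k ∈ SS := ⟨k, hk, 1, one_mem _, by simp⟩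
theorem gb_SS : gb ∈ SS := ⟨1, one_mem _, 1, one_mem _, by simp⟩
theorem gt_SS : gt ∈ SS := ⟨1, one_mem _, 1, one_mem _, by simp⟩

theorem gt_inv : gt⁻¹ = gu * gt := by
  rw [gt, brel.u_t]; group

theorem SS.inv {g : CS} (h : g ∈ SS) : g⁻¹ ∈ SS := by
  obtain ⟨k1, h1, k2, h2, rfl | rfl | rfl⟩ := h
  · exact SS.of_K (inv_mem (mul_mem h1 h2))
  · rw [_root_.mul_inv_rev, _root_.mul_inv_rev]
    refine SS.mul_left (inv_mem h2) (SS.mul_right (inv_mem h1) ?_)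
    rw [brel.bi]
    exact SS.mul_right (mul_mem gj_mem (inv_mem gv_mem)) (SS.mul_left gj_mem gb_SS)
  · rw [_root_.mul_inv_rev, _root_.mul_inv_rev]
    refine SS.mul_left (inv_mem h2) (SS.mul_right (inv_mem h1) ?_)
    rw [gt_inv]
    exact SS.mul_left gu_mem gt_SS

theorem SS.good {g : CS} (h : g ∈ SS) : GoodG g := by
  obtain ⟨k1, h1, k2, h2, rfl | rfl | rfl⟩ := h
  · have : GoodG 1 := ⟨1, by simp, by simp only [Nn, map_one]; decide +kernel⟩
    simpa using (this.mul_left h1).mul_right h2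
  · have : GoodG gb := ⟨bU, piU_b, by simp only [Nn, mat_b]; decide +kernel⟩
    exact (this.mul_left h1).mul_right h2
  · have : GoodG gt := ⟨tU, piU_t, by simp only [Nn, mat_t]; decide +kernel⟩
    exact (this.mul_left h1).mul_right h2

/-- The good corner entries of `x j^n w y` for the representatives `w` of the double cosets. -/
theorem T_table : ∀ n : Fin 12,
    (Good (nm ((bM * jM ^ (n : ℕ) * bM) 2 2), nr ((bM * jM ^ (n : ℕ) * bM) 2 2)) →
      n = 0 ∨ n = 1 ∨ n = 2) ∧
    (Good (nm ((bM * jM ^ (n : ℕ) * uM * bM) 2 2), nr ((bM * jM ^ (n : ℕ) * uM * bM) 2 2)) →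
      n = 0 ∨ n = 1 ∨ n = 2 ∨ n = 11) ∧
    (¬ Good (nm ((bM * jM ^ (n : ℕ) * (uM * vM ^ 3 * uM) * bM) 2 2),
      nr ((bM * jM ^ (n : ℕ) * (uM * vM ^ 3 * uM) * bM) 2 2))) ∧
    (Good (nm ((bM * jM ^ (n : ℕ) * tM) 2 2), nr ((bM * jM ^ (n : ℕ) * tM) 2 2)) →
      n = 0 ∨ n = 1) ∧
    (¬ Good (nm ((bM * jM ^ (n : ℕ) * (uM * vM ^ 2) * tM) 2 2),
      nr ((bM * jM ^ (n : ℕ) * (uM * vM ^ 2) * tM) 2 2))) ∧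
    (Good (nm ((tM * jM ^ (n : ℕ) * tM) 2 2), nr ((tM * jM ^ (n : ℕ) * tM) 2 2)) → n = 0) ∧
    (Good (nm ((tM * jM ^ (n : ℕ) * vM * tM) 2 2), nr ((tM * jM ^ (n : ℕ) * vM * tM) 2 2)) →
      n = 0 ∨ n = 11) ∧
    (¬ Good (nm ((tM * jM ^ (n : ℕ) * vM ^ 2 * tM) 2 2),
      nr ((tM * jM ^ (n : ℕ) * vM ^ 2 * tM) 2 2))) ∧
    (¬ Good (nm ((tM * jM ^ (n : ℕ) * (vM ^ 2 * uM ^ 2 * vM) * tM) 2 2),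
      nr ((tM * jM ^ (n : ℕ) * (vM ^ 2 * uM ^ 2 * vM) * tM) 2 2))) := by
  decide +kernel

theorem GoodG.of_mul_left {g k : CS} (hk : k ∈ Kt) (h : GoodG (k * g)) : GoodG g := by
  simpa using h.mul_left (inv_mem hk)

theorem GoodG.of_mul_right {g k : CS} (hk : k ∈ Kt) (h : GoodG (g * k)) : GoodG g := by
  simpa using h.mul_right (inv_mem hk)

theorem SS.of_LR {g k l : CS} (hk : k ∈ Kt) (hl : l ∈ Kt) (hg : GoodG g → g ∈ SS)
    (h : GoodG (k * g * l)) : k * g * l ∈ SS :=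
  SS.mul_right hl (SS.mul_left hk (hg (GoodG.of_mul_left hk (GoodG.of_mul_right hl h))))

theorem piU_j : piU gj = QuotientGroup.mk jU := KR_pi kj_mem

theorem gjv : Commute gj gv := brel.jv
theorem gju : Commute gj gu := brel.ju
theorem gvb : Commute gv gb := brel.vb
theorem gtu : Commute gt gu := brel.t_u

theorem gj12 : gj ^ 12 = 1 := brel.j_pow
theorem gj_inv : gj ^ 11 = gj⁻¹ := by
  rw [eq_inv_iff_mul_eq_one, ← pow_succ]; exact gj12

theorem T_bb_1 (n : Fin 12) (h : GoodG (gb * gj ^ (n : ℕ) * gb)) :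
    gb * gj ^ (n : ℕ) * gb ∈ SS := by
  have h2 := h.good (A := bU * jU ^ (n : ℕ) * bU)
    (by simp only [map_mul, map_pow, piU_b, piU_j]; rfl)
  simp only [Nn, map_mul, map_pow, mat_b, mat_j] at h2
  rcases (T_table n).1 h2 with rfl | rfl | rfl
  · have : gb * gj ^ ((0 : Fin 12) : ℕ) * gb = gj * gb * (gj * gv⁻¹) := by
      simp [brel.bb, ← brel.bi]
    rw [this]
    exact SS.mul_right (mul_mem gj_mem (inv_mem gv_mem)) (SS.mul_left gj_mem gb_SS)
  · have : gb * gj ^ ((1 : Fin 12) : ℕ) * gb = gv * gj⁻¹ := by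
      simp [brel.bjb]
    rw [this]
    exact SS.of_K (mul_mem gv_mem (inv_mem gj_mem))
  · have : gb * gj ^ ((2 : Fin 12) : ℕ) * gb = gv * gj⁻¹ * gb * (gv * gj⁻¹) := by
      rw [← brel.bjjb, ← pow_two]; rfl
    rw [this]
    exact SS.mul_right (mul_mem gv_mem (inv_mem gj_mem))
      (SS.mul_left (mul_mem gv_mem (inv_mem gj_mem)) gb_SS)

theorem T_bb_u (n : Fin 12) (h : GoodG (gb * gj ^ (n : ℕ) * gu * gb)) :
    gb * gj ^ (n : ℕ) * gu * gb ∈ SS := by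
  have h2 := h.good (A := bU * jU ^ (n : ℕ) * uU * bU)
    (by simp only [map_mul, map_pow, piU_b, piU_j, piU_u]; rfl)
  simp only [Nn, map_mul, map_pow, mat_b, mat_j, mat_u] at h2
  rcases (T_table n).2.1 h2 with rfl | rfl | rfl | rfl
  · have : gb * gj ^ ((0 : Fin 12) : ℕ) * gu * gb = gu * gb * gu := by
      simp [brel.bub]
    rw [this]
    exact SS.mul_right gu_mem (SS.mul_left gu_mem gb_SS)
  · have : gb * gj ^ ((1 : Fin 12) : ℕ) * gu * gb = gv * gj⁻¹ * gu * gb * gu⁻¹ := by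
      simp [brel.bjub]
    rw [this]
    exact SS.mul_right (inv_mem gu_mem)
      (SS.mul_left (mul_mem (mul_mem gv_mem (inv_mem gj_mem)) gu_mem) gb_SS)
  · have : gb * gj ^ ((2 : Fin 12) : ℕ) * gu * gb = gv * gj⁻¹ * gu * gt * (gv * gj⁻¹) := by
      rw [gt, ← brel.bjjub, ← pow_two]; rfl
    rw [this]
    exact SS.mul_right (mul_mem gv_mem (inv_mem gj_mem))
      (SS.mul_left (mul_mem (mul_mem gv_mem (inv_mem gj_mem)) gu_mem) gt_SS)
  · have : gb * gj ^ ((11 : Fin 12) : ℕ) * gu * gb = gv⁻¹ * gt * gv⁻¹ := by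
      rw [gt, ← brel.bjiub, ← gj_inv]; rfl
    rw [this]
    exact SS.mul_right (inv_mem gv_mem) (SS.mul_left (inv_mem gv_mem) gt_SS)

/-- The case of two elements of `KbK` in `SS.mul_of_good`. -/
theorem T_bb {k : CS} (hk : k ∈ Kt) (h : GoodG (gb * k * gb)) : gb * k * gb ∈ SS := by
  obtain ⟨k, hk, rfl⟩ := hk
  obtain ⟨n, hn, i, hi, e | ⟨l, hl, e⟩ | e⟩ := krel.nf_nat hk
  all_goals
    have e' := congrArg Prod.fst e
    change k.1 = _ at e'
    change GoodG (gb * k.1 * gb) at h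
    change gb * k.1 * gb ∈ SS
    rw [e'] at h ⊢
    clear e e'
  · have : gb * (gj ^ n * gv ^ i) * gb = 1 * (gb * gj ^ n * gb) * gv ^ i := by
      have := (gvb.pow_left i).eq
      calc _ = gb * gj ^ n * (gv ^ i * gb) := by simp only [mul_assoc]
        _ = _ := by rw [this]; simp only [mul_assoc, one_mul]
    change GoodG (gb * (gj ^ n * gv ^ i) * gb) at h
    change gb * (gj ^ n * gv ^ i) * gb ∈ SS
    rw [this] at h ⊢
    exact SS.of_LR (one_mem _) (pow_mem gv_mem _) (T_bb_1 ⟨n, hn⟩) h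
  · have : gb * (gj ^ n * gv ^ i * gu * gv ^ l) * gb =
        gv ^ i * (gb * gj ^ n * gu * gb) * gv ^ l := by
      have e1 := (gvb.pow_left i).eq
      have e2 := (gvb.pow_left l).eq
      have e3 := (gjv.pow_pow n i).eq
      calc _ = gb * (gj ^ n * gv ^ i) * gu * (gv ^ l * gb) := by simp only [mul_assoc]
        _ = (gb * gv ^ i) * gj ^ n * gu * (gb * gv ^ l) := by
            rw [e2, e3]; simp only [mul_assoc]
        _ = _ := by rw [← e1]; simp only [mul_assoc]
    change GoodG (gb * (gj ^ n * gv ^ i * gu * gv ^ l) * gb) at h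
    change gb * (gj ^ n * gv ^ i * gu * gv ^ l) * gb ∈ SS
    rw [this] at h ⊢
    exact SS.of_LR (pow_mem gv_mem _) (pow_mem gv_mem _) (T_bb_u ⟨n, hn⟩) h
  · have : gb * (gj ^ n * gv ^ i * (gu * gv ^ 3 * gu)) * gb =
        gv ^ i * (gb * gj ^ n * (gu * gv ^ 3 * gu) * gb) := by
      have e1 := (gvb.pow_left i).eq
      have e3 := (gjv.pow_pow n i).eq
      rw [e3]
      calc _ = (gb * gv ^ i) * gj ^ n * (gu * gv ^ 3 * gu) * gb := by simp only [mul_assoc]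
        _ = _ := by rw [← e1]; simp only [mul_assoc]
    change GoodG (gb * (gj ^ n * gv ^ i * (gu * gv ^ 3 * gu)) * gb) at h
    rw [this] at h
    have h2 := (h.of_mul_left (pow_mem gv_mem _)).good
      (A := bU * jU ^ n * (uU * vU ^ 3 * uU) * bU)
      (by simp only [map_mul, map_pow, piU_b, piU_j, piU_u, piU_v]; rfl)
    simp only [Nn, map_mul, map_pow, mat_b, mat_j, mat_u, mat_v] at h2
    exact absurd h2 (T_table ⟨n, hn⟩).2.2.1

/-- The case of an element of `KbK` times an element of `KtK`. -/
theorem T_bt {k : CS} (hk : k ∈ Kt) (h : GoodG (gb * k * gt)) : gb * k * gt ∈ SS := by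
  obtain ⟨k, hk, rfl⟩ := hk
  obtain ⟨n, i, l, e | e⟩ := nf_vu hk
  all_goals
    obtain ⟨n, hn⟩ := kj_red n
    rw [hn] at e
    have e' := congrArg Prod.fst e
    change k.1 = _ at e'
    change GoodG (gb * k.1 * gt) at h
    change gb * k.1 * gt ∈ SS
    rw [e'] at h ⊢
    clear e e'
    have e1 := (gvb.pow_left i).eq
    have e2 := (gtu.pow_right l).eq
    have e3 := (gjv.pow_pow n i).eq
  · have : gb * (gj ^ (n : ℕ) * gv ^ i * gu ^ l) * gt =
        gv ^ i * (gb * gj ^ (n : ℕ) * gt) * gu ^ l := by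
      calc _ = gb * (gj ^ (n : ℕ) * gv ^ i) * (gu ^ l * gt) := by simp only [mul_assoc]
        _ = (gb * gv ^ i) * gj ^ (n : ℕ) * (gt * gu ^ l) := by
            rw [e2, e3]; simp only [mul_assoc]
        _ = _ := by rw [← e1]; simp only [mul_assoc]
    change GoodG (gb * (gj ^ (n : ℕ) * gv ^ i * gu ^ l) * gt) at h
    change gb * (gj ^ (n : ℕ) * gv ^ i * gu ^ l) * gt ∈ SS
    rw [this] at h ⊢
    refine SS.of_LR (pow_mem gv_mem _) (pow_mem gu_mem _) (fun h => ?_) h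
    have h2 := h.good (A := bU * jU ^ (n : ℕ) * tU)
      (by simp only [map_mul, map_pow, piU_b, piU_j, piU_t]; rfl)
    simp only [Nn, map_mul, map_pow, mat_b, mat_j, mat_t] at h2
    rcases (T_table n).2.2.2.1 h2 with rfl | rfl
    · have : gb * gj ^ ((0 : Fin 12) : ℕ) * gt = gu * (gj * gb * (gj * gv⁻¹)) * gu⁻¹ := by
        rw [← brel.bi, ← brel.b_t]; simp [gt]
      rw [this]
      exact SS.mul_right (inv_mem gu_mem) (SS.mul_left gu_mem
        (SS.mul_right (mul_mem gj_mem (inv_mem gv_mem)) (SS.mul_left gj_mem gb_SS)))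
    · have : gb * gj ^ ((1 : Fin 12) : ℕ) * gt = gv * gj⁻¹ * gu⁻¹ * gb := by
        rw [← brel.bj_t]; simp [gt]
      rw [this]
      exact SS.mul_left (mul_mem (mul_mem gv_mem (inv_mem gj_mem)) (inv_mem gu_mem)) gb_SS
  · have : gb * (gj ^ (n : ℕ) * gv ^ i * (gu * gv ^ 2 * gu ^ l)) * gt =
        gv ^ i * (gb * gj ^ (n : ℕ) * (gu * gv ^ 2) * gt) * gu ^ l := by
      calc _ = gb * (gj ^ (n : ℕ) * gv ^ i) * (gu * gv ^ 2) * (gu ^ l * gt) := by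
            simp only [mul_assoc]
        _ = (gb * gv ^ i) * gj ^ (n : ℕ) * (gu * gv ^ 2) * (gt * gu ^ l) := by
            rw [e2, e3]; simp only [mul_assoc]
        _ = _ := by rw [← e1]; simp only [mul_assoc]
    change GoodG (gb * (gj ^ (n : ℕ) * gv ^ i * (gu * gv ^ 2 * gu ^ l)) * gt) at h
    change gb * (gj ^ (n : ℕ) * gv ^ i * (gu * gv ^ 2 * gu ^ l)) * gt ∈ SS
    rw [this] at h ⊢
    refine SS.of_LR (pow_mem gv_mem _) (pow_mem gu_mem _) (fun h => ?_) h
    have h2 := h.good (A := bU * jU ^ (n : ℕ) * (uU * vU ^ 2) * tU)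
      (by simp only [map_mul, map_pow, piU_b, piU_j, piU_t, piU_u, piU_v]; rfl)
    simp only [Nn, map_mul, map_pow, mat_b, mat_j, mat_t, mat_u, mat_v] at h2
    exact absurd h2 (T_table n).2.2.2.2.1

/-- The case of an element of `KtK` times an element of `KbK`, by inversion. -/
theorem T_tb {k : CS} (hk : k ∈ Kt) (h : GoodG (gt * k * gb)) : gt * k * gb ∈ SS := by
  have e : (gt * k * gb)⁻¹ = gj * (gb * ((gj * gv⁻¹) * k⁻¹ * gu) * gt) * 1 := by
    rw [_root_.mul_inv_rev, _root_.mul_inv_rev, gt_inv, brel.bi]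
    simp only [mul_assoc, mul_one]
  have hgood := h.inv
  rw [← _root_.inv_inv (gt * k * gb)]
  apply SS.inv
  rw [e] at hgood ⊢
  exact SS.of_LR gj_mem (one_mem _) (T_bt (mul_mem (mul_mem (mul_mem gj_mem (inv_mem gv_mem))
    (inv_mem hk)) gu_mem)) hgood

/-- The case of two elements of `KtK`. -/
theorem T_tt {k : CS} (hk : k ∈ Kt) (h : GoodG (gt * k * gt)) : gt * k * gt ∈ SS := by
  obtain ⟨k, hk, rfl⟩ := hk
  obtain ⟨n, i, l, x, hx, e⟩ := nf_uu hk
  obtain ⟨n, hn⟩ := kj_red n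
  rw [hn] at e
  have e' := congrArg Prod.fst e
  change k.1 = gj ^ (n : ℕ) * gu ^ i * (x.1 * gu ^ l) at e'
  change GoodG (gt * k.1 * gt) at h
  change gt * k.1 * gt ∈ SS
  have : gt * k.1 * gt = gu ^ i * (gt * gj ^ (n : ℕ) * x.1 * gt) * gu ^ l := by
    have e1 := (gtu.pow_right i).eq
    have e2 := (gtu.pow_right l).eq
    have e3 := (gju.pow_pow n i).eq
    rw [e']
    calc _ = gt * (gj ^ (n : ℕ) * gu ^ i) * x.1 * (gu ^ l * gt) := by simp only [mul_assoc]
      _ = (gt * gu ^ i) * gj ^ (n : ℕ) * x.1 * (gt * gu ^ l) := by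
          rw [← e2, e3]; simp only [mul_assoc]
      _ = _ := by rw [e1]; simp only [mul_assoc]
  rw [this] at h ⊢
  refine SS.of_LR (pow_mem gu_mem _) (pow_mem gu_mem _) (fun h => ?_) h
  rcases hx with ⟨rfl, -⟩ | rfl | rfl | rfl
  · simp only [Prod.fst_one, mul_one] at h ⊢
    have h2 := h.good (A := tU * jU ^ (n : ℕ) * tU)
      (by simp only [map_mul, map_pow, piU_j, piU_t]; rfl)
    simp only [Nn, map_mul, map_pow, mat_j, mat_t] at h2
    obtain rfl := (T_table n).2.2.2.2.2.1 h2
    have : gt * gj ^ ((0 : Fin 12) : ℕ) * gt = gu⁻¹ := by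
      rw [← brel.t_t]; simp [gt]
    rw [this]
    exact SS.of_K (inv_mem gu_mem)
  · change GoodG (gt * gj ^ (n : ℕ) * gv * gt) at h
    change gt * gj ^ (n : ℕ) * gv * gt ∈ SS
    have h2 := h.good (A := tU * jU ^ (n : ℕ) * vU * tU)
      (by simp only [map_mul, map_pow, piU_j, piU_t, piU_v]; rfl)
    simp only [Nn, map_mul, map_pow, mat_j, mat_t, mat_v] at h2
    rcases (T_table n).2.2.2.2.2.2.1 h2 with rfl | rfl
    · have : gt * gj ^ ((0 : Fin 12) : ℕ) * gv * gt = gu⁻¹ * gv⁻¹ * gt * (gv⁻¹ * gu⁻¹) := by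
        rw [gt, ← brel.t_v_t]; simp
      rw [this]
      exact SS.mul_right (mul_mem (inv_mem gv_mem) (inv_mem gu_mem))
        (SS.mul_left (mul_mem (inv_mem gu_mem) (inv_mem gv_mem)) gt_SS)
    · have : gt * gj ^ ((11 : Fin 12) : ℕ) * gv * gt =
          gu⁻¹ * (gv * gu * gt * gv) * gu⁻¹ := by
        have e1 : gj⁻¹ * gv = gu⁻¹ * gv⁻¹ * gu⁻¹ := by
          have : gv = gj * (gu⁻¹ * gv⁻¹) * gu⁻¹ := by rw [← brel.vu]; group
          nth_rewrite 1 [this]; group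
        have e2 := gtu.inv_right.eq
        calc _ = gt * (gj⁻¹ * gv) * gt := by rw [← gj_inv]; simp only [mul_assoc]; rfl
          _ = (gt * gu⁻¹) * gv⁻¹ * (gu⁻¹ * gt) := by rw [e1]; simp only [mul_assoc]
          _ = (gu⁻¹ * gt) * gv⁻¹ * (gt * gu⁻¹) := by
            have e3 : ∀ x y : CS, x = y → x * gv⁻¹ * y = y * gv⁻¹ * x := by
              rintro x _ rfl; rfl
            exact e3 _ _ e2
          _ = gu⁻¹ * (gt * gv⁻¹ * gt) * gu⁻¹ := by simp only [mul_assoc]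
          _ = _ := by rw [gt, brel.t_vi_t]
      rw [this]
      exact SS.mul_right (inv_mem gu_mem) (SS.mul_left (inv_mem gu_mem) (SS.mul_right gv_mem
        (SS.mul_left (mul_mem gv_mem gu_mem) gt_SS)))
  · change GoodG (gt * gj ^ (n : ℕ) * gv ^ 2 * gt) at h
    have h2 := h.good (A := tU * jU ^ (n : ℕ) * vU ^ 2 * tU)
      (by simp only [map_mul, map_pow, piU_j, piU_t, piU_v]; rfl)
    simp only [Nn, map_mul, map_pow, mat_j, mat_t, mat_v] at h2
    exact absurd h2 (T_table n).2.2.2.2.2.2.2.1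
  · change GoodG (gt * gj ^ (n : ℕ) * (gv ^ 2 * gu ^ 2 * gv) * gt) at h
    have h2 := h.good (A := tU * jU ^ (n : ℕ) * (vU ^ 2 * uU ^ 2 * vU) * tU)
      (by simp only [map_mul, map_pow, piU_j, piU_t, piU_v, piU_u]; rfl)
    simp only [Nn, map_mul, map_pow, mat_j, mat_t, mat_v, mat_u] at h2
    exact absurd h2 (T_table n).2.2.2.2.2.2.2.2

/-- A product of two elements of `SS` that could lie in `SS` by its image in the unitary group
does lie in `SS`: this is where the relations of `G` beyond those of `K` are used. -/
theorem SS.mul_of_good {p q : CS} (hp : p ∈ SS) (hq : q ∈ SS) (h : GoodG (p * q)) :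
    p * q ∈ SS := by
  obtain ⟨k1, h1, k2, h2, hp⟩ := hp
  obtain ⟨k3, h3, k4, h4, hq⟩ := hq
  have h23 := mul_mem h2 h3
  rcases hp with rfl | rfl | rfl
  · refine SS.mul_left (mul_mem h1 h2) ⟨k3, h3, k4, h4, hq⟩
  all_goals rcases hq with rfl | rfl | rfl
  · exact SS.mul_right (mul_mem h3 h4) (SS.mul_right h2 (SS.mul_left h1 gb_SS))
  · have e : k1 * gb * k2 * (k3 * gb * k4) = k1 * (gb * (k2 * k3) * gb) * k4 := by
      simp only [mul_assoc]
    rw [e] at h ⊢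
    exact SS.of_LR h1 h4 (T_bb h23) h
  · have e : k1 * gb * k2 * (k3 * gt * k4) = k1 * (gb * (k2 * k3) * gt) * k4 := by
      simp only [mul_assoc]
    rw [e] at h ⊢
    exact SS.of_LR h1 h4 (T_bt h23) h
  · exact SS.mul_right (mul_mem h3 h4) (SS.mul_right h2 (SS.mul_left h1 gt_SS))
  · have e : k1 * gt * k2 * (k3 * gb * k4) = k1 * (gt * (k2 * k3) * gb) * k4 := by
      simp only [mul_assoc]
    rw [e] at h ⊢
    exact SS.of_LR h1 h4 (T_tb h23) h
  · have e : k1 * gt * k2 * (k3 * gt * k4) = k1 * (gt * (k2 * k3) * gt) * k4 := by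
      simp only [mul_assoc]
    rw [e] at h ⊢
    exact SS.of_LR h1 h4 (T_tt h23) h

/-- The homomorphism to the projective unitary group is injective on `SS` at `1`. -/
theorem SS.eq_one {g : CS} (hg : g ∈ SS) (h : piU g = 1) : g = 1 := by
  have h1 : ∀ x : CS, ∀ A : UO, piU x = QuotientGroup.mk A → ∀ k ∈ Kt, ∀ k' ∈ Kt,
      g = k * x * k' → Nn A = (1, 0) := by
    rintro x A hA _ ⟨k, hk, rfl⟩ _ ⟨k', hk', rfl⟩ e
    change g = k.1 * x * k'.1 at e
    have : (QuotientGroup.mk (k.2 * A * k'.2) : PU) = QuotientGroup.mk 1 := by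
      have h2 : piU g = QuotientGroup.mk k.2 * QuotientGroup.mk A * QuotientGroup.mk k'.2 := by
        rw [e, map_mul, map_mul, KR_pi hk, KR_pi hk', hA]
      rw [h] at h2
      exact h2.symm
    have := Nn_mk this
    rw [Nn_K_right hk', Nn_K_left hk] at this
    rw [this, Nn, map_one]
    decide +kernel
  obtain ⟨k1, hk1, k2, hk2, hg | hg | hg⟩ := hg
  · obtain ⟨k, hk, rfl⟩ : g ∈ Kt := hg ▸ mul_mem hk1 hk2
    have h2 : (QuotientGroup.mk 1 : PU) = QuotientGroup.mk k.2 := by rw [← KR_pi hk]; exact h.symm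
    obtain ⟨n, -, h3⟩ := mat_of_mk_eq h2
    have h4 := (KR_shape hk).2.2.1
    have h5 : kmat k = z ^ n • 1 := by rw [map_one] at h3; exact h3
    rw [h5] at h4
    simp at h4
    rw [h4, one_smul] at h5
    rw [KR_one hk h5]; rfl
  · have := h1 gb bU piU_b k1 hk1 k2 hk2 hg
    rw [Nn, mat_b] at this
    exact absurd this (by decide +kernel)
  · have := h1 gt tU piU_t k1 hk1 k2 hk2 hg
    rw [Nn, mat_t] at this
    exact absurd this (by decide +kernel)

/-! ### Classification of unitary matrices with small corner entry -/

/-- Exponents `(e, a, c, d)` of words `vᵉ uᵃ vᶜ uᵈ` representing enough elements of `K` modulo its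
centre to reach the orbits below. -/
def kexp : Fin 13 → ℕ × ℕ × ℕ × ℕ :=
  ![(0, 0, 0, 0), (0, 0, 0, 1), (0, 0, 0, 2), (0, 0, 1, 0), (0, 0, 2, 0), (0, 1, 2, 0),
    (0, 0, 1, 2), (0, 0, 2, 2), (0, 1, 2, 2), (0, 0, 3, 0), (0, 2, 1, 0), (0, 2, 2, 0),
    (1, 2, 2, 0)]

/-- The matrix of the `i`-th word. -/
def kwM (i : Fin 13) : M3 :=
  vM ^ (kexp i).1 * uM ^ (kexp i).2.1 * vM ^ (kexp i).2.2.1 * uM ^ (kexp i).2.2.2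

theorem kwM_mem (i : Fin 13) (n : ℕ) : ∃ k ∈ KR, kmat k = jM ^ n * kwM i := by
  refine ⟨kj ^ n * (kv ^ (kexp i).1 * ku ^ (kexp i).2.1 * kv ^ (kexp i).2.2.1 *
    ku ^ (kexp i).2.2.2), ?_, ?_⟩
  · exact mul_mem (pow_mem kj_mem _) (mul_mem (mul_mem (mul_mem (pow_mem kv_mem _)
      (pow_mem ku_mem _)) (pow_mem kv_mem _)) (pow_mem ku_mem _))
  · simp only [kwM, map_mul, map_pow, kmat_u, kmat_v, kmat_j]

theorem jM_pow (n : ℕ) : jM ^ n = !![z ^ n, 0, 0; 0, z ^ n, 0; 0, 0, 1] := by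
  induction n with
  | zero => decide +kernel
  | succ n ih =>
    rw [pow_succ, ih, jM]
    refine Matrix.ext fun i j => ?_
    fin_cases i <;> fin_cases j <;> simp [Matrix.mul_apply, Fin.sum_univ_three, pow_succ]

/-- `(x₁, x₂)` lies in the orbit of `(y₁, y₂)` under `K` acting on the first two coordinates. -/
def Orb (y1 y2 x1 x2 : Oz) : Prop :=
  ∃ k ∈ KR, kmat k 0 0 * y1 + kmat k 0 1 * y2 = x1 ∧ kmat k 1 0 * y1 + kmat k 1 1 * y2 = x2

theorem Orb.of_table {y1 y2 x1 x2 : Oz} (n : ℕ) (h : ∃ i : Fin 13, ∃ m : Fin 12,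
    z ^ (m : ℕ) * (kwM i 0 0 * y1 + kwM i 0 1 * y2) = x1 ∧
    z ^ (m : ℕ) * (kwM i 1 0 * y1 + kwM i 1 1 * y2) = x2) :
    Orb y1 y2 (z ^ n * x1) (z ^ n * x2) := by
  obtain ⟨i, m, rfl, rfl⟩ := h
  obtain ⟨k, hk, e⟩ := kwM_mem i (n + m)
  refine ⟨k, hk, ?_, ?_⟩ <;>
  · rw [e, jM_pow]
    simp [Matrix.mul_apply, Fin.sum_univ_three, pow_add]
    ring

/-- Exact division by `2`. -/
def div2 (x : Oz) : Option Oz :=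
  if x.a % 2 = 0 ∧ x.b % 2 = 0 ∧ x.c % 2 = 0 ∧ x.d % 2 = 0 then
    some ⟨x.a / 2, x.b / 2, x.c / 2, x.d / 2⟩ else none

theorem two_mul_def (y : Oz) : (2 * y : Oz) = ⟨2 * y.a, 2 * y.b, 2 * y.c, 2 * y.d⟩ := by
  rw [two_mul, add_def]; ext <;> simp only <;> ring

theorem div2_eq {x y : Oz} (h : x = 2 * y) : div2 x = some y := by
  subst h
  rw [two_mul_def]
  simp [div2]

/-- A property of a quotient by `2`, when it exists, in a form suited to evaluation. -/
def IfDiv2 (x : Oz) (P : Oz → Prop) : Prop := ∀ y ∈ div2 x, P y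

instance (x : Oz) (P : Oz → Prop) [DecidablePred P] : Decidable (IfDiv2 x P) := by
  unfold IfDiv2
  cases div2 x with
  | none => exact isTrue (by simp)
  | some y => exact decidable_of_iff (P y) (by simp)

/-- The second coordinate of a lattice vector is determined by the values `p = x₁` and
`q = x₁ + (1 - r)x₂`. -/
theorem x2_eq {p q x2 : Oz} (h : q = p + zr 1 (-1) * x2) (n : ℕ) (x : Oz)
    (hx : q - p = z ^ n * x) : ∃ y, x2 = z ^ n * y ∧ zr (-1) (-1) * x = 2 * y := by
  have h1 : z ^ n * star (z ^ n) = 1 := by rw [mul_comm, star_z_pow]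
  refine ⟨star (z ^ n) * x2, by rw [← mul_assoc, h1, one_mul], ?_⟩
  have h2 : x = star (z ^ n) * (q - p) := by rw [hx, ← mul_assoc, star_z_pow, one_mul]
  have h3 : zr (-1) (-1) * zr 1 (-1) = 2 := by decide +kernel
  rw [h2, h]
  linear_combination (star (z ^ n) * x2) * h3

/-- The `K`-orbit of `e₁` and of the third column of `b`. -/
theorem orbit_two_table : ∀ y ∈ [((1 : Oz), (0 : Oz)), (0, ⟨0, 0, -1, -1⟩)],
    (∀ d : Fin 12, IfDiv2 (zr (-1) (-1) * (z ^ (d : ℕ) - 1)) fun x2 =>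
      ∃ i : Fin 13, ∃ m : Fin 12,
        z ^ (m : ℕ) * (kwM i 0 0 * y.1 + kwM i 0 1 * y.2) = 1 ∧
        z ^ (m : ℕ) * (kwM i 1 0 * y.1 + kwM i 1 1 * y.2) = x2) ∧
    (IfDiv2 (zr (-1) (-1) * (0 - ⟨1, 0, 0, 1⟩)) fun x2 =>
      ∃ i : Fin 13, ∃ m : Fin 12,
        z ^ (m : ℕ) * (kwM i 0 0 * y.1 + kwM i 0 1 * y.2) = ⟨1, 0, 0, 1⟩ ∧
        z ^ (m : ℕ) * (kwM i 1 0 * y.1 + kwM i 1 1 * y.2) = x2) ∧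
    (IfDiv2 (zr (-1) (-1) * (⟨1, 0, 0, 1⟩ - 0)) fun x2 =>
      ∃ i : Fin 13, ∃ m : Fin 12,
        z ^ (m : ℕ) * (kwM i 0 0 * y.1 + kwM i 0 1 * y.2) = 0 ∧
        z ^ (m : ℕ) * (kwM i 1 0 * y.1 + kwM i 1 1 * y.2) = x2) := by
  decide +kernel

/-- The `K`-orbit of the third column of `t`. -/
theorem orbit_three_table :
    (∀ d : Fin 12, IfDiv2 (zr (-1) (-1) * (z ^ (d : ℕ) * ⟨1, 1, 0, -1⟩ - 1)) fun x2 =>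
      ∃ i : Fin 13, ∃ m : Fin 12,
        z ^ (m : ℕ) * (kwM i 0 0 * tM 0 2 + kwM i 0 1 * tM 1 2) = 1 ∧
        z ^ (m : ℕ) * (kwM i 1 0 * tM 0 2 + kwM i 1 1 * tM 1 2) = x2) ∧
    (∀ d : Fin 12, IfDiv2 (zr (-1) (-1) * (z ^ (d : ℕ) - ⟨1, 1, 0, -1⟩)) fun x2 =>
      ∃ i : Fin 13, ∃ m : Fin 12,
        z ^ (m : ℕ) * (kwM i 0 0 * tM 0 2 + kwM i 0 1 * tM 1 2) = ⟨1, 1, 0, -1⟩ ∧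
        z ^ (m : ℕ) * (kwM i 1 0 * tM 0 2 + kwM i 1 1 * tM 1 2) = x2) := by
  decide +kernel

/-- Reduction of an orbit statement to the tables. -/
theorem Orb.of_ifDiv2 {y1 y2 p q x2 p' q' : Oz} (h : q = p + zr 1 (-1) * x2) (n : ℕ)
    (hp : p = z ^ n * p') (hq : q = z ^ n * q')
    (H : IfDiv2 (zr (-1) (-1) * (q' - p')) fun x2 => ∃ i : Fin 13, ∃ m : Fin 12,
        z ^ (m : ℕ) * (kwM i 0 0 * y1 + kwM i 0 1 * y2) = p' ∧
        z ^ (m : ℕ) * (kwM i 1 0 * y1 + kwM i 1 1 * y2) = x2) : Orb y1 y2 p x2 := by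
  obtain ⟨y, rfl, hy⟩ := x2_eq h n (q' - p') (by rw [hp, hq]; ring)
  rw [hp]
  exact Orb.of_table n (H y (div2_eq hy))

theorem z_pow_diff (a d : Fin 12) : ∃ e : Fin 12, z ^ (d : ℕ) = z ^ (a : ℕ) * z ^ (e : ℕ) := by
  refine ⟨d - a, ?_⟩
  revert a d
  decide +kernel

/-- The vectors of square length `2` in the definite plane form a single orbit of `K`, which contains
`e₁` and the first two coordinates of the third column of `b`. -/
theorem orbit_two {p q x2 : Oz} (h : q = p + zr 1 (-1) * x2) (h1 : nm p + nm q = 2)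
    (h2 : nr p + nr q = 0) : Orb 1 0 p x2 ∧ Orb 0 ⟨0, 0, -1, -1⟩ p x2 := by
  suffices H : ∀ y ∈ [((1 : Oz), (0 : Oz)), (0, ⟨0, 0, -1, -1⟩)], Orb y.1 y.2 p x2 from
    ⟨H (1, 0) (by simp), H (0, ⟨0, 0, -1, -1⟩) (by simp)⟩
  intro y hy
  obtain ⟨T1, T2, T3⟩ := orbit_two_table y hy
  have hp := nm_nonneg p
  have hq := nm_nonneg q
  have sp := small (x := p) (by omega)
  have sq := small (x := q) (by omega)
  rcases (by omega : nm p = 0 ∨ nm p = 1 ∨ nm p = 2) with e | e | e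
  · obtain rfl := sp.1 e
    obtain ⟨a, ha⟩ := sq.2.2.1 (by omega) (by simpa [nr, zero_def] using h2)
    exact Orb.of_ifDiv2 (p' := 0) (q' := ⟨1, 0, 0, 1⟩) h a (by simp) ha T3
  · obtain ⟨a, ha⟩ := sp.2.1 e
    obtain ⟨d, hd⟩ := sq.2.1 (by omega)
    obtain ⟨d', hd'⟩ := z_pow_diff a d
    exact Orb.of_ifDiv2 (p' := 1) (q' := z ^ (d' : ℕ)) h a (by simpa using ha) (hd.trans hd')
      (T1 d')
  · have := sq.1 (by omega)
    rw [this] at h2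
    obtain ⟨a, ha⟩ := sp.2.2.1 e (by simpa [nr, zero_def] using h2)
    exact Orb.of_ifDiv2 (p' := ⟨1, 0, 0, 1⟩) (q' := 0) h a ha (by simp [this]) T2

/-- The vectors of square length `3 + √3` in the definite plane form a single orbit of `K`, which
contains the first two coordinates of the third column of `t`. -/
theorem orbit_three {p q x2 : Oz} (h : q = p + zr 1 (-1) * x2) (h1 : nm p + nm q = 3)
    (h2 : nr p + nr q = 1) : Orb (tM 0 2) (tM 1 2) p x2 := by
  have hp := nm_nonneg p
  have hq := nm_nonneg q
  have sp := small (x := p) (by omega)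
  have sq := small (x := q) (by omega)
  rcases (by omega : nm p = 0 ∨ nm p = 1 ∨ nm p = 2 ∨ nm p = 3) with e | e | e | e
  · obtain rfl := sp.1 e
    exact absurd ⟨by omega, by simpa [nr, zero_def] using h2⟩ sq.2.2.2.2.2.1
  · obtain ⟨a, ha⟩ := sp.2.1 e
    have := sp.2.2.2.2.2.2 e
    obtain ⟨d, hd⟩ := sq.2.2.2.1 (by omega) (by omega)
    obtain ⟨d', hd'⟩ := z_pow_diff a d
    exact Orb.of_ifDiv2 h a (by simpa using ha) (by rw [hd, hd', mul_assoc]) (orbit_three_table.1 d')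
  · have := sq.2.2.2.2.2.2 (by omega)
    obtain ⟨d, hd⟩ := sq.2.1 (by omega)
    obtain ⟨a, ha⟩ := sp.2.2.2.1 (by omega) (by omega)
    obtain ⟨d', hd'⟩ := z_pow_diff a d
    exact Orb.of_ifDiv2 h a ha (hd.trans hd') (orbit_three_table.2 d')
  · have := sq.1 (by omega)
    rw [this] at h2
    exact absurd ⟨e, by simpa [nr, zero_def] using h2⟩ sp.2.2.2.2.2.1

/-- The value of the second diagonal coordinate on the `j`-th column. -/
def qc (A : M3) (j : Fin 3) : Oz := A 0 j + zr 1 (-1) * A 1 j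

theorem star_zr (m n : ℤ) : star (zr m n) = zr m n := by
  ext <;> simp only [star_def, zr] <;> ring

/-- The unitarity relation between two columns, in coordinates diagonalising the form. -/
theorem col_form (A : UO) (j k : Fin 3) :
    star (mat A 0 j) * mat A 0 k + star (qc (mat A) j) * qc (mat A) k +
      zr 1 (-1) * (star (mat A 2 j) * mat A 2 k) = Hm j k := by
  have h := congrFun (congrFun (mat_unitary A) j) k
  rw [← h]
  have h4 : zr 4 (-2) = zr 1 (-1) * zr 1 (-1) := by decide +kernel
  have h2 : (2 : Oz) = 1 + 1 := by norm_num
  simp only [qc, star_add, star_mul, star_zr, Matrix.mul_apply, Fin.sum_univ_three,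
    Matrix.conjTranspose_apply, Hm, h4, h2]
  simp
  ring

theorem col_norm (A : UO) (j : Fin 3) (m n : ℤ) (h : Hm j j = zr m n) :
    nm (mat A 0 j) + nm (qc (mat A) j) + nm (mat A 2 j) - 3 * nr (mat A 2 j) = m ∧
    nr (mat A 0 j) + nr (qc (mat A) j) + nr (mat A 2 j) - nm (mat A 2 j) = n := by
  have := col_form A j j
  rw [star_mul_self, star_mul_self, star_mul_self, zr_mul, zr_add, zr_add, h] at this
  have := zr_inj this
  constructor <;> linarith [this.1, this.2]

/-- If the third column is `e₃`, the third row is `(0, 0, 1)`. -/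
theorem row_of_col {A : UO} (h0 : mat A 0 2 = 0) (h1 : mat A 1 2 = 0) (h2 : mat A 2 2 = 1) :
    mat A 2 0 = 0 ∧ mat A 2 1 = 0 := by
  have a := col_form A 2 0
  have b := col_form A 2 1
  simp only [qc, h0, h1, h2] at a b
  constructor
  · apply zr_cancel
    simpa [Hm] using a
  · apply zr_cancel
    simpa [Hm] using b

/-- The complex reflections in `K` fixing `e₁` and `e₃`. -/
theorem refl_table : ∀ k : Fin 12, IfDiv2 (zr 1 (-1) * (1 - z ^ (k : ℕ))) fun x =>
    ∃ i : Fin 4, (jM ^ 2 * vM * uM ^ 2) ^ (i : ℕ) = !![1, x, 0; 0, z ^ (k : ℕ), 0; 0, 0, 1] := by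
  decide +kernel

/-- A unitary matrix fixing `e₁` and `e₃` lies in `K`. -/
theorem stab_two {A : UO} (h0 : mat A 0 2 = 0) (h1 : mat A 1 2 = 0) (h2 : mat A 2 2 = 1)
    (h3 : mat A 0 0 = 1) (h4 : mat A 1 0 = 0) : ∃ k ∈ KR, kmat k = mat A := by
  obtain ⟨h5, h6⟩ := row_of_col h0 h1 h2
  have a := col_form A 0 1
  have hn := col_form A 1 1
  simp only [qc, h3, h4, h5, h6] at a hn
  have a' : 2 * mat A 0 1 = zr 1 (-1) * (1 - mat A 1 1) := by
    have : 1 * mat A 0 1 + 1 * (mat A 0 1 + zr 1 (-1) * mat A 1 1) = zr 1 (-1) := by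
      simpa [Hm] using a
    linear_combination this
  have e4 : zr 4 (-2) = zr 1 (-1) * zr 1 (-1) := by decide +kernel
  have b' : 2 * star (mat A 0 1) = zr 1 (-1) * (1 - star (mat A 1 1)) := by
    have := congrArg star a'
    rw [star_mul, star_mul, star_sub, star_one, star_zr, star_ofNat] at this
    linear_combination this
  have c' : star (mat A 1 1) * mat A 1 1 = 1 := by
    have h : zr 1 (-1) * (zr 1 (-1) * (star (mat A 1 1) * mat A 1 1)) =
        zr 1 (-1) * (zr 1 (-1) * 1) := by
      have hn' : star (mat A 0 1) * mat A 0 1 + (star (mat A 0 1) + zr 1 (-1) * star (mat A 1 1)) *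
          (mat A 0 1 + zr 1 (-1) * mat A 1 1) = zr 1 (-1) * zr 1 (-1) := by
        rw [← e4]
        simpa [Hm, star_zr] using hn
      -- `|p|² + |q|² = |p + q|²` forces `|q - p|² = |p + q|²`
      linear_combination 2 * hn' - (mat A 0 1 * 2 + zr 1 (-1) * mat A 1 1) * b'
        - zr 1 (-1) * a'
    exact zr_cancel (zr_cancel h)
  have hk : nm (mat A 1 1) = 1 := by
    rw [star_mul_self, ← zr_one] at c'
    exact (zr_inj c').1
  obtain ⟨k, hk⟩ := (small (by omega)).2.1 hk
  rw [hk] at a'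
  obtain ⟨i, hi⟩ := refl_table k _ (div2_eq a'.symm)
  refine ⟨(kj ^ 2 * kv * ku ^ 2) ^ (i : ℕ), pow_mem (mul_mem (mul_mem (pow_mem kj_mem _) kv_mem)
    (pow_mem ku_mem _)) _, ?_⟩
  simp only [map_mul, map_pow, kmat_u, kmat_v, kmat_j]
  rw [hi]
  refine Matrix.ext fun i j => ?_
  fin_cases i <;> fin_cases j <;> simp [h0, h1, h2, h3, h4, h5, h6, hk]

/-- The matrix of a product with an element of `K` on the left. -/
theorem K_mul {k : CS × UO} (hk : k ∈ KR) (A : UO) (j : Fin 3) :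
    mat (k.2 * A) 0 j = kmat k 0 0 * mat A 0 j + kmat k 0 1 * mat A 1 j ∧
    mat (k.2 * A) 1 j = kmat k 1 0 * mat A 0 j + kmat k 1 1 * mat A 1 j ∧
    mat (k.2 * A) 2 j = mat A 2 j := by
  obtain ⟨h1, h2, h3, h4, h5⟩ := KR_shape hk
  rw [map_mul]
  simp only [Matrix.mul_apply, Fin.sum_univ_three]
  change kmat k 0 0 * _ + kmat k 0 1 * _ + kmat k 0 2 * _ = _ ∧
    kmat k 1 0 * _ + kmat k 1 1 * _ + kmat k 1 2 * _ = _ ∧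
    kmat k 2 0 * _ + kmat k 2 1 * _ + kmat k 2 2 * _ = _
  rw [h1, h2, h3, h4, h5]
  simp

/-- Multiplying on the left by the inverse of `B` turns a column of `A` shared with `B` into a
standard basis vector. -/
theorem col_inv {A B : UO} {j : Fin 3} (h : ∀ i, mat A i j = mat B i j) (i : Fin 3) :
    mat (B⁻¹ * A) i j = (1 : M3) i j := by
  have : (1 : M3) = mat B⁻¹ * mat B := by rw [← map_mul]; simp
  rw [this, map_mul, Matrix.mul_apply, Matrix.mul_apply]
  exact Finset.sum_congr rfl fun l _ => by rw [h]

/-- A unitary matrix fixing `e₃` lies in `K`. -/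
theorem stab_one {A : UO} (h0 : mat A 0 2 = 0) (h1 : mat A 1 2 = 0) (h2 : mat A 2 2 = 1) :
    ∃ k ∈ KR, k.2 = A := by
  obtain ⟨h5, h6⟩ := row_of_col h0 h1 h2
  have hn := col_norm A 0 2 0 rfl
  rw [h5] at hn
  obtain ⟨⟨k, hk, e0, e1⟩, -⟩ := orbit_two (p := mat A 0 0) (q := qc (mat A) 0) (x2 := mat A 1 0) rfl
    (by simpa [nm, nr, zero_def] using hn.1) (by simpa [nm, nr, zero_def] using hn.2)
  obtain ⟨-, -, s3, s4, s5⟩ := KR_shape hk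
  obtain ⟨s1, s2, -⟩ := KR_shape hk
  have c0 := col_inv (A := A) (B := k.2) (j := 0) (by
    intro i
    fin_cases i
    · exact (by simpa using e0.symm : mat A 0 0 = kmat k 0 0)
    · exact (by simpa using e1.symm : mat A 1 0 = kmat k 1 0)
    · exact h5.trans s1.symm)
  have c2 := col_inv (A := A) (B := k.2) (j := 2) (by
    intro i
    fin_cases i
    · exact h0.trans s4.symm
    · exact h1.trans s5.symm
    · exact h2.trans s3.symm)
  obtain ⟨l, hl, e⟩ := stab_two (c2 0) (c2 1) (c2 2) (c0 0) (c0 1)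
  refine ⟨k * l, mul_mem hk hl, ?_⟩
  have : l.2 = k.2⁻¹ * A := mat_inj e
  show k.2 * l.2 = A
  rw [this]; group

/-- If the third columns of `A` and `kB` agree up to a root of unity, with `k ∈ K`, then `A`
represents an element of `KBK`. -/
theorem coset_of_col {A B : UO} {g : CS} (hg : piU g = QuotientGroup.mk B) (n : ℕ)
    (h2 : mat A 2 2 = z ^ n * mat B 2 2)
    (h : ∃ x2, mat A 1 2 = z ^ n * x2 ∧ ∃ x1, mat A 0 2 = z ^ n * x1 ∧
      Orb (mat B 0 2) (mat B 1 2) x1 x2) :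
    ∃ k ∈ Kt, ∃ k' ∈ Kt, piU (k * g * k') = QuotientGroup.mk A := by
  obtain ⟨x2, e1, x1, e0, k, hk, rfl, rfl⟩ := h
  obtain ⟨a0, a1, a2⟩ := K_mul hk B 2
  have c := col_inv (A := A) (B := zU ^ n * (k.2 * B)) (j := 2) (by
    intro i
    rw [map_mul, zU_pow]
    fin_cases i
    · simp [e0, ← a0]
    · simp [e1, ← a1]
    · simp [h2, ← a2])
  obtain ⟨l, hl, e⟩ := stab_one (c 0) (c 1) (c 2)
  refine ⟨k.1, ⟨k, hk, rfl⟩, l.1, ⟨l, hl, rfl⟩, ?_⟩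
  rw [map_mul, map_mul, KR_pi hk, KR_pi hl, hg, e, ← QuotientGroup.mk_mul, ← QuotientGroup.mk_mul]
  symm
  refine mk_eq_of_mat n ?_
  have : A = zU ^ n * (k.2 * B * ((zU ^ n * (k.2 * B))⁻¹ * A)) := by group
  nth_rewrite 1 [this]
  rw [map_mul, zU_pow]; simp

/-- Every class in the projective unitary group with good corner entry comes from `SS`. -/
theorem classify {A : UO} (h : Good (Nn A)) : ∃ g ∈ SS, piU g = QuotientGroup.mk A := by
  have hn := col_norm A 2 1 (-1) rfl
  have hp := nm_nonneg (mat A 0 2)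
  have hq := nm_nonneg (qc (mat A) 2)
  have unscale : ∀ n : ℕ, ∀ x : Oz, x = z ^ n * (star (z ^ n) * x) := fun n x => by
    rw [← mul_assoc, mul_comm (z ^ n), star_z_pow, one_mul]
  have hs : ∀ n : ℕ, ∃ m : ℕ, star (z ^ n) = z ^ m := fun n => by
    refine ⟨11 * n, ?_⟩
    rw [star_pow, pow_mul]; congr 1
  have key : ∀ (g : CS) (B : UO), g ∈ SS → piU g = QuotientGroup.mk B → ∀ n : ℕ,
      mat A 2 2 = z ^ n * mat B 2 2 →
      (∀ p q x2 : Oz, q = p + zr 1 (-1) * x2 → nm p + nm q = 1 + 3 * nr (mat A 2 2) - nm (mat A 2 2)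
        → nr p + nr q = -1 - nr (mat A 2 2) + nm (mat A 2 2) →
        Orb (mat B 0 2) (mat B 1 2) p x2) → ∃ g ∈ SS, piU g = QuotientGroup.mk A := by
    intro g B hgS hg n h2 hO
    obtain ⟨m, hm⟩ := hs n
    obtain ⟨k, hk, k', hk', e⟩ := coset_of_col hg n h2 ⟨_, unscale n _, _, unscale n _,
      hO _ (star (z ^ n) * qc (mat A) 2) _ (by rw [qc]; ring)
        (by rw [hm, (nm_nr_z m _).1, (nm_nr_z m _).1]; linarith [hn.1])
        (by rw [hm, (nm_nr_z m _).2, (nm_nr_z m _).2]; linarith [hn.2])⟩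
    exact ⟨_, SS.mul_right hk' (SS.mul_left hk hgS), e⟩
  rcases h with h | h | h <;> rw [Nn, Prod.mk.injEq] at h
  · obtain ⟨n, hn'⟩ := (small (by omega)).2.1 h.1
    refine key 1 1 (SS.of_K (one_mem _)) (map_one _) n (by rw [map_one]; simpa using hn') ?_
    intro p q x2 h3 h4 h5
    rw [h.1, h.2] at h4
    have e1 := nm_nonneg p
    have e2 := nm_nonneg q
    have f1 := (small (x := p) (by omega)).1 (by omega)
    have f2 := (small (x := q) (by omega)).1 (by omega)
    refine ⟨1, one_mem _, ?_, ?_⟩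
    · rw [f1]; simp
    · rw [f1, f2] at h3
      have : x2 = 0 := by
        apply zr_cancel; rw [mul_zero]; linear_combination -h3
      rw [this]; simp
  · obtain ⟨n, hn'⟩ := (small (by omega)).2.2.2.1 h.1 h.2
    refine key gb bU gb_SS piU_b n (by rw [mat_b]; exact hn') ?_
    intro p q x2 h3 h4 h5
    exact (orbit_two h3 (by rw [h4]; omega) (by rw [h5]; omega)).2
  · obtain ⟨n, hn'⟩ := (small (by omega)).2.2.2.2.1 h.1 h.2
    refine key gt tU gt_SS piU_t n (by rw [mat_t]; exact hn') ?_
    intro p q x2 h3 h4 h5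
    rw [mat_t]
    exact orbit_three h3 (by rw [h4]; omega) (by rw [h5]; omega)

/-- The only possible values of `|A₃₃|²` up to `9`. -/
theorem good_of_le {A : UO} (h1 : nm (mat A 2 2) ≤ 9)
    (h2 : 3 * nr (mat A 2 2) ^ 2 ≤ (9 - nm (mat A 2 2)) ^ 2) : Good (Nn A) := by
  obtain ⟨hn, hn'⟩ := col_norm A 2 1 (-1) rfl
  have a1 := nm_nonneg (mat A 0 2)
  have a2 := nm_nonneg (qc (mat A) 2)
  have a3 := nm_nonneg (mat A 2 2)
  have b1 := nr_sq_le (mat A 0 2)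
  have b2 := nr_sq_le (qc (mat A) 2)
  have b3 := nr_sq_le (mat A 2 2)
  unfold Nn
  generalize nm (mat A 2 2) = m at *
  generalize nr (mat A 2 2) = n at *
  generalize nm (mat A 0 2) = m1 at *
  generalize nr (mat A 0 2) = n1 at *
  generalize nm (qc (mat A) 2) = m2 at *
  generalize nr (qc (mat A) 2) = n2 at *
  have hn0 : 0 ≤ n := by omega
  have hn9 : n ≤ 5 := by nlinarith
  have key : 3 * (m - 1 - n) ^ 2 ≤ (3 * n - m + 1) ^ 2 := by
    have e1 : m - 1 - n = n1 + n2 := by linarith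
    have e2 : 3 * n - m + 1 = m1 + m2 := by linarith
    rw [e1, e2]
    have : 3 * (n1 * n2) ≤ m1 * m2 := by
      have h : (3 * (n1 * n2)) ^ 2 ≤ (m1 * m2) ^ 2 := by
        calc (3 * (n1 * n2)) ^ 2 = (3 * n1 ^ 2) * (3 * n2 ^ 2) := by ring
          _ ≤ m1 ^ 2 * m2 ^ 2 := by gcongr
          _ = _ := by ring
      exact le_of_sq_le_sq h (by positivity)
    nlinarith
  have hm : 0 ≤ 3 * n - m + 1 := by omega
  clear hn hn' a1 a2 b1 b2
  unfold Good
  simp only [Prod.mk.injEq]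
  interval_cases n <;> interval_cases m <;> omega

/-! ### Simple connectivity: a development lemma -/

/-- A family of open convex sets indexed by a group, covering the sublevel set `{N < 1}` of a convex
function with compact sublevels, together with a set `S` of transitions that is transitive among
sets with a common point. -/
structure Dev (G E : Type*) [Group G] [NormedAddCommGroup E] [NormedSpace ℝ E] where
  I : G → Set E
  S : Set G
  N : E → ℝ
  compact : ∀ ρ < 1, IsCompact {x | N x ≤ ρ}
  convexN : ∀ ρ, Convex ℝ {x | N x ≤ ρ}
  N_zero : N 0 = 0
  lt_one : ∀ g, ∀ x ∈ I g, N x < 1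
  opn : ∀ g, IsOpen (I g)
  conv : ∀ g, Convex ℝ (I g)
  cov : ∀ x, N x < 1 → ∃ g, x ∈ I g
  zero_mem : 0 ∈ I 1
  one_mem : 1 ∈ S
  inv_mem : ∀ s ∈ S, s⁻¹ ∈ S
  trans : ∀ x g h k, x ∈ I g → x ∈ I h → x ∈ I k → g⁻¹ * h ∈ S → h⁻¹ * k ∈ S → g⁻¹ * k ∈ S
  ex : ∀ x g h, x ∈ I g → x ∈ I h → ∃ h', I h' = I h ∧ g⁻¹ * h' ∈ S

namespace Dev

variable {G E : Type*} [Group G] [NormedAddCommGroup E] [NormedSpace ℝ E] (D : Dev G E)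

theorem symm {g h : G} (H : g⁻¹ * h ∈ D.S) : h⁻¹ * g ∈ D.S := by
  have := D.inv_mem _ H
  simpa using this

/-- A locally constant (up to `S`) choice of an index over `{N ≤ ρ}`, with margin `ε`. -/
structure Sec (ρ ε : ℝ) (c : E → G) : Prop where
  pos : 0 < ε
  ball : ∀ x, D.N x ≤ ρ → Metric.ball x ε ⊆ D.I (c x)
  near : ∀ x y, D.N x ≤ ρ → D.N y ≤ ρ → dist x y < ε → (c x)⁻¹ * c y ∈ D.S
  zero : (c 0)⁻¹ * 1 ∈ D.S

/-- Sections exist: propagate the index `1` from the origin along rays in small steps. -/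
theorem exists_sec {ρ : ℝ} (h0 : 0 ≤ ρ) (h1 : ρ < 1) : ∃ ε c, D.Sec ρ ε c := by
  obtain ⟨δ, hδ, hL⟩ := lebesgue_number_lemma_of_metric (D.compact ρ h1) D.opn (by
    intro x hx
    obtain ⟨g, hg⟩ := D.cov x (lt_of_le_of_lt hx h1)
    exact Set.mem_iUnion.mpr ⟨g, hg⟩)
  obtain ⟨δ', hδ', hb⟩ := Metric.isOpen_iff.mp (D.opn 1) 0 D.zero_mem
  obtain ⟨R, hR⟩ := (D.compact ρ h1).isBounded.subset_ball (0 : E)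
  set ε := min δ δ' with hε
  have εpos : 0 < ε := lt_min hδ hδ'
  obtain ⟨M, hM⟩ := exists_nat_gt (2 * R / ε)
  have hRpos : 0 < R := by
    have : (0 : E) ∈ Metric.ball (0 : E) R := hR (by simpa [D.N_zero] using h0)
    simpa using this
  have hMpos : (0 : ℝ) < M := lt_trans (by positivity) hM
  have hstep : R / M < ε / 2 := by
    rw [div_lt_div_iff₀ hMpos (by norm_num)]
    rw [div_lt_iff₀ εpos] at hM
    linarith
  -- `k/M • x` stays in the convex sublevel set
  have hin : ∀ k ≤ M, ∀ x, D.N x ≤ ρ → D.N (((k : ℝ) / M) • x) ≤ ρ := by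
    intro k hk x hx
    have h := D.convexN ρ (show (0 : E) ∈ {x | D.N x ≤ ρ} by simpa [D.N_zero] using h0) hx
    have hk' : (k : ℝ) ≤ M := by exact_mod_cast hk
    have := h (a := 1 - (k : ℝ) / M) (b := (k : ℝ) / M)
      (by rw [sub_nonneg, div_le_one hMpos]; exact hk') (by positivity) (by ring)
    simpa using this
  have main : ∀ k ≤ M, ∃ c : E → G, (∀ x, D.N x ≤ ρ → Metric.ball (((k : ℝ) / M) • x) ε ⊆ D.I (c x)) ∧
      (∀ x y, D.N x ≤ ρ → D.N y ≤ ρ → dist x y < ε / 2 → (c x)⁻¹ * c y ∈ D.S) ∧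
      (c 0)⁻¹ * 1 ∈ D.S := by
    intro k
    induction k with
    | zero =>
      intro _
      refine ⟨fun _ => 1, fun x _ => ?_, fun x y _ _ _ => by simpa using D.one_mem,
        by simpa using D.one_mem⟩
      have : (((0 : ℕ) : ℝ) / M) • x = 0 := by simp
      rw [this]
      exact (Metric.ball_subset_ball (min_le_right _ _)).trans hb
    | succ k ih =>
      intro hk
      obtain ⟨c, hc1, hc2, hc3⟩ := ih (by omega)
      have hd : ∀ x, D.N x ≤ ρ →
          dist ((((k + 1 : ℕ) : ℝ) / M) • x) (((k : ℝ) / M) • x) < ε / 2 := by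
        intro x hx
        have hx' := hR hx
        rw [mem_ball_zero_iff] at hx'
        rw [dist_eq_norm, ← sub_smul, norm_smul]
        have : ‖((k + 1 : ℕ) : ℝ) / M - (k : ℝ) / M‖ = 1 / M := by
          rw [← sub_div]; push_cast; rw [add_sub_cancel_left, Real.norm_of_nonneg (by positivity)]
        rw [this]
        calc 1 / M * ‖x‖ ≤ 1 / M * R := by gcongr
          _ = R / M := by ring
          _ < _ := hstep
      have hsc : ∀ x y : E, dist ((((k + 1 : ℕ) : ℝ) / M) • x) ((((k + 1 : ℕ) : ℝ) / M) • y) ≤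
          dist x y := by
        intro x y
        rw [dist_smul₀, Real.norm_of_nonneg (by positivity)]
        have : ((k + 1 : ℕ) : ℝ) / M ≤ 1 := by
          rw [div_le_one hMpos]; exact_mod_cast hk
        exact mul_le_of_le_one_left dist_nonneg this
      have hnext : ∀ x, ∃ h, D.N x ≤ ρ →
          Metric.ball ((((k + 1 : ℕ) : ℝ) / M) • x) ε ⊆ D.I h ∧ (c x)⁻¹ * h ∈ D.S := by
        intro x
        by_cases hx : D.N x ≤ ρ
        · obtain ⟨g, hg⟩ := hL _ (hin (k + 1) hk x hx)
          have hg' := (Metric.ball_subset_ball (min_le_left δ δ')).trans hg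
          obtain ⟨h', e, hs⟩ := D.ex ((((k + 1 : ℕ) : ℝ) / M) • x) (c x) g
            (hc1 x hx (Metric.mem_ball.mpr (by linarith [hd x hx])))
            (hg' (Metric.mem_ball_self εpos))
          exact ⟨h', fun _ => ⟨by rw [e]; exact hg', hs⟩⟩
        · exact ⟨1, fun h => absurd h hx⟩
      choose c' hc' using hnext
      -- the four indices at `x, y` and levels `k, k + 1` share the point `(k+1)/M • x`
      refine ⟨c', fun x hx => (hc' x hx).1, fun x y hx hy hxy => ?_, ?_⟩
      · set w := (((k + 1 : ℕ) : ℝ) / M) • x with hw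
        have w1 : w ∈ D.I (c' x) := (hc' x hx).1 (Metric.mem_ball_self εpos)
        have w2 : w ∈ D.I (c' y) := (hc' y hy).1 (Metric.mem_ball.mpr (by linarith [hsc x y]))
        have w3 : w ∈ D.I (c x) := hc1 x hx (Metric.mem_ball.mpr (by linarith [hd x hx]))
        have w4 : w ∈ D.I (c y) := hc1 y hy (Metric.mem_ball.mpr (by
          have := dist_triangle w ((((k + 1 : ℕ) : ℝ) / M) • y) (((k : ℝ) / M) • y)
          linarith [hsc x y, hd y hy]))
        exact D.trans w _ _ _ w1 w3 w2 (D.symm (hc' x hx).2)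
          (D.trans w _ _ _ w3 w4 w2 (hc2 x y hx hy hxy) (hc' y hy).2)
      · have hz : D.N 0 ≤ ρ := by rw [D.N_zero]; exact h0
        have w1 : (0 : E) ∈ D.I (c' 0) := (hc' 0 hz).1 (by simpa using εpos)
        have w2 : (0 : E) ∈ D.I (c 0) := hc1 0 hz (by simpa using εpos)
        exact D.trans 0 _ _ _ w1 w2 D.zero_mem (D.symm (hc' 0 hz).2) hc3
  obtain ⟨c, a1, a2, a3⟩ := main M le_rfl
  refine ⟨ε / 2, c, by positivity, fun x hx => ?_, a2, a3⟩
  have := a1 x hx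
  rw [div_self hMpos.ne', one_smul] at this
  exact (Metric.ball_subset_ball (by linarith)).trans this

/-- Agreement with a section propagates along segments. -/
theorem Sec.path {D : Dev G E} {ρ ε : ℝ} {c : E → G} (H : D.Sec ρ ε c) {g : G} {x y : E}
    (hx : D.N x ≤ ρ) (hy : D.N y ≤ ρ) (gx : x ∈ D.I g) (gy : y ∈ D.I g)
    (h : (c x)⁻¹ * g ∈ D.S) : (c y)⁻¹ * g ∈ D.S := by
  obtain ⟨M, hM⟩ := exists_nat_gt (dist x y / ε)
  have hMpos : (0 : ℝ) < M := lt_of_le_of_lt (div_nonneg dist_nonneg H.pos.le) hM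
  have hstep : dist x y / M < ε := by
    rw [div_lt_iff₀ hMpos]; rw [div_lt_iff₀ H.pos] at hM; linarith
  let f : ℕ → E := fun k => (1 - (k : ℝ) / M) • x + ((k : ℝ) / M) • y
  have fmem : ∀ {s : Set E}, Convex ℝ s → x ∈ s → y ∈ s → ∀ k ≤ M, f k ∈ s := by
    intro s hs hx hy k hk
    have hk' : (k : ℝ) ≤ M := by exact_mod_cast hk
    exact hs hx hy (by rw [sub_nonneg, div_le_one hMpos]; exact hk') (by positivity) (by ring)
  have fd : ∀ k, dist (f k) (f (k + 1)) < ε := by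
    intro k
    have : f k - f (k + 1) = (1 / (M : ℝ)) • (x - y) := by
      simp only [f]; push_cast; module
    rw [dist_eq_norm, this, norm_smul, Real.norm_of_nonneg (by positivity), ← dist_eq_norm]
    calc _ = dist x y / M := by ring
      _ < _ := hstep
  have main : ∀ k ≤ M, (c (f k))⁻¹ * g ∈ D.S := by
    intro k
    induction k with
    | zero => intro _; simpa [f] using h
    | succ k ih =>
      intro hk
      have n1 := fmem (D.convexN ρ) hx hy k (by omega)
      have n2 := fmem (D.convexN ρ) hx hy (k + 1) hk
      refine D.trans (f (k + 1)) _ _ _ (H.ball _ n2 (Metric.mem_ball_self H.pos))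
        (H.ball _ n1 (Metric.mem_ball.mpr (by rw [dist_comm]; exact fd k)))
        (fmem (D.conv g) gx gy (k + 1) hk) (H.near _ _ n2 n1 (by rw [dist_comm]; exact fd k))
        (ih (by omega))
  have : f M = y := by simp [f, div_self hMpos.ne']
  rw [← this]
  exact main M le_rfl

/-- Agreement of `g` with every section over large enough sublevel sets. -/
def Agree (g : G) : Prop := ∃ ρ, 0 ≤ ρ ∧ ρ < 1 ∧ ∀ ρ', ρ ≤ ρ' → ρ' < 1 → ∀ ε c, D.Sec ρ' ε c →
  ∀ x ∈ D.I g, D.N x ≤ ρ' → (c x)⁻¹ * g ∈ D.S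

theorem agree_one : D.Agree 1 := by
  refine ⟨0, le_rfl, one_pos, fun ρ' h0 _ ε c H x hx hN => ?_⟩
  exact H.path (by rw [D.N_zero]; exact h0) hN D.zero_mem hx H.zero

theorem Agree.step {D : Dev G E} {g h : G} (hg : D.Agree g) (hs : g⁻¹ * h ∈ D.S)
    (hI : (D.I g ∩ D.I h).Nonempty) : D.Agree h := by
  obtain ⟨ρ, h0, h1, H⟩ := hg
  obtain ⟨y, hy1, hy2⟩ := hI
  refine ⟨max ρ (D.N y), le_max_of_le_left h0, max_lt h1 (D.lt_one _ _ hy1), ?_⟩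
  intro ρ' hρ hρ1 ε c hc x hx hN
  have hy : D.N y ≤ ρ' := (le_max_right _ _).trans hρ
  refine hc.path hy hN hy2 hx ?_
  exact D.trans y _ _ _ (hc.ball y hy (Metric.mem_ball_self hc.pos)) hy1 hy2
    (H ρ' ((le_max_left _ _).trans hρ) hρ1 ε c hc y hy1 hy) hs

/-- If neighbouring indices differ by generators, an index whose set contains the origin is a
transition. This expresses that the convex set `{N < 1}` is simply connected. -/
theorem mem_of_zero_mem (T : Set G) (hT : Subgroup.closure T = ⊤) (hTS : ∀ s ∈ T, s ∈ D.S)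
    (hI : ∀ g, ∀ s ∈ T, (D.I g ∩ D.I (g * s)).Nonempty) (g : G) (hg : 0 ∈ D.I g) : g ∈ D.S := by
  have hA : ∀ g ∈ Subgroup.closure T, D.Agree g := by
    intro g hg
    induction hg using Subgroup.closure_induction_right with
    | one => exact D.agree_one
    | mul_right x _ y hy ih =>
      exact ih.step (by simpa using hTS y hy) (hI x y hy)
    | mul_inv_cancel x _ y hy ih =>
      refine ih.step (by simpa using D.inv_mem _ (hTS y hy)) ?_
      have := hI (x * y⁻¹) y hy
      rwa [inv_mul_cancel_right, Set.inter_comm] at this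
  obtain ⟨ρ, h0, h1, H⟩ := hA g (by rw [hT]; trivial)
  obtain ⟨ε, c, hc⟩ := D.exists_sec h0 h1
  have hz : D.N 0 ≤ ρ := by rw [D.N_zero]; exact h0
  have := D.trans 0 _ _ _ D.zero_mem (hc.ball 0 hz (Metric.mem_ball_self hc.pos)) hg
    (D.symm hc.zero) (H ρ le_rfl h1 ε c hc 0 hg hz)
  simpa using this

end Dev

/-! ### The complex embedding -/

namespace Oz

/-- The ring homomorphism sending `ζ` to a root `t` of the 12th cyclotomic polynomial. -/
def lift {R : Type*} [CommRing R] (t : R) (h : t ^ 4 = t ^ 2 - 1) : Oz →+* R where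
  toFun x := x.a + x.b * t + x.c * t ^ 2 + x.d * t ^ 3
  map_zero' := by simp [zero_def]
  map_one' := by simp [one_def]
  map_add' x y := by simp only [add_def]; push_cast; ring
  map_mul' x y := by
    simp only [mul_def]; push_cast
    linear_combination (-(x.b * y.d + x.c * y.c + x.d * y.b) - (x.c * y.d + x.d * y.c) * t
      - x.d * y.d * (t ^ 2 + 1) : R) * h

theorem lift_apply {R : Type*} [CommRing R] (t : R) (h : t ^ 4 = t ^ 2 - 1) (x : Oz) :
    lift t h x = x.a + x.b * t + x.c * t ^ 2 + x.d * t ^ 3 := rfl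

theorem lift_z {R : Type*} [CommRing R] (t : R) (h : t ^ 4 = t ^ 2 - 1) : lift t h z = t := by
  simp [lift_apply, z]

end Oz

/-- `√3`. -/
def r3 : ℝ := Real.sqrt 3

theorem r3_sq : r3 ^ 2 = 3 := Real.sq_sqrt (by norm_num)
theorem r3_pos : 0 < r3 := Real.sqrt_pos.mpr (by norm_num)
theorem r3_lo : 1.732 < r3 := by nlinarith [r3_sq, r3_pos]
theorem r3_hi : r3 < 1.7321 := by nlinarith [r3_sq, r3_pos]

/-- The primitive 12th root of unity `exp(iπ/6)`. -/
def om : ℂ := ⟨r3 / 2, 1 / 2⟩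

theorem om_sq : om ^ 2 = ⟨1 / 2, r3 / 2⟩ := by
  rw [pow_two]
  apply Complex.ext
  · simp [om]; nlinarith [r3_sq]
  · simp [om]; ring

theorem om_cu : om ^ 3 = ⟨0, 1⟩ := by
  rw [pow_succ, om_sq]
  apply Complex.ext
  · simp [om]; ring
  · simp [om]; nlinarith [r3_sq]

theorem om_four : om ^ 4 = om ^ 2 - 1 := by
  rw [pow_succ, om_cu, om_sq]
  apply Complex.ext
  · simp [om]; ring
  · simp [om]

/-- The complex embedding of `ℤ[ζ]`. -/
def emb : Oz →+* ℂ := lift om om_four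

theorem emb_apply (x : Oz) : emb x = ⟨x.a + x.b * (r3 / 2) + x.c / 2, x.b / 2 + x.c * (r3 / 2) + x.d⟩ := by
  rw [emb, lift_apply, om_sq, om_cu]
  apply Complex.ext <;> simp [om] <;> ring

theorem emb_star (x : Oz) : emb (star x) = star (emb x) := by
  rw [emb_apply, emb_apply, star_def]
  apply Complex.ext <;> simp <;> ring

theorem emb_zr (m n : ℤ) : emb (zr m n) = ((m + n * r3 : ℝ) : ℂ) := by
  rw [emb_apply, zr]
  apply Complex.ext <;> simp <;> ring

theorem normSq_emb (x : Oz) : Complex.normSq (emb x) = nm x + nr x * r3 := by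
  have : ((Complex.normSq (emb x) : ℝ) : ℂ) = ((nm x + nr x * r3 : ℝ) : ℂ) := by
    rw [Complex.normSq_eq_conj_mul_self, ← emb_zr, ← star_mul_self, map_mul, emb_star]; rfl
  exact_mod_cast this

/-! ### The action on the complex ball -/

open Complex (normSq)

/-- The action of a unitary matrix on complex vectors. -/
def act (A : UO) (w : Fin 3 → ℂ) : Fin 3 → ℂ := (mat A).map emb *ᵥ w

theorem act_mul (A B : UO) (w) : act (A * B) w = act A (act B w) := by
  rw [act, act, act, Matrix.mulVec_mulVec, map_mul, Matrix.map_mul]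

theorem act_one (w) : act 1 w = w := by
  rw [act, map_one, Matrix.map_one _ (map_zero _) (map_one _), Matrix.one_mulVec]

theorem act_apply (A : UO) (w) (i : Fin 3) :
    act A w i = emb (mat A i 0) * w 0 + emb (mat A i 1) * w 1 + emb (mat A i 2) * w 2 := by
  simp [act, Matrix.mulVec, dotProduct, Fin.sum_univ_three]

/-- The second coordinate diagonalising the form. -/
def qv (w : Fin 3 → ℂ) : ℂ := w 0 + (1 - r3) * w 1

/-- The positive part of the Hermitian form. -/
def Wv (w : Fin 3 → ℂ) : ℝ := normSq (w 0) + normSq (qv w)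

/-- The Hermitian form of signature `(2, 1)`. -/
def hf (w : Fin 3 → ℂ) : ℝ := Wv w - (r3 - 1) * normSq (w 2)

theorem emb_qc (A : M3) (j : Fin 3) : emb (qc A j) = emb (A 0 j) + (1 - r3) * emb (A 1 j) := by
  rw [qc, map_add, map_mul, emb_zr]; push_cast; ring

theorem col_form_emb (A : UO) (j k : Fin 3) :
    star (emb (mat A 0 j)) * emb (mat A 0 k) + star (emb (qc (mat A) j)) * emb (qc (mat A) k) +
      (1 - r3) * (star (emb (mat A 2 j)) * emb (mat A 2 k)) = emb (Hm j k) := by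
  rw [← col_form A j k]
  simp only [map_add, map_mul, emb_star, emb_zr]
  push_cast; ring

theorem hf_act (A : UO) (w) : hf (act A w) = hf w := by
  have e : ∀ v : Fin 3 → ℂ, (hf v : ℂ) = star (v 0) * v 0 + star (qv v) * qv v +
      (1 - r3) * (star (v 2) * v 2) := by
    intro v
    simp only [hf, Wv]
    push_cast
    simp only [Complex.normSq_eq_conj_mul_self]
    simp only [starRingEnd_apply]; ring
  have hq : qv (act A w) = emb (qc (mat A) 0) * w 0 + emb (qc (mat A) 1) * w 1 +
      emb (qc (mat A) 2) * w 2 := by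
    simp only [qv, act_apply, emb_qc]; ring
  have : (hf (act A w) : ℂ) = (hf w : ℂ) := by
    rw [e, e, hq, act_apply, act_apply, qv]
    have sr : star (r3 : ℂ) = r3 := Complex.conj_ofReal r3
    have c := fun j k => col_form_emb A j k
    have H00 : emb (Hm 0 0) = 2 := by rw [show Hm 0 0 = zr 2 0 from rfl, emb_zr]; simp
    have H01 : emb (Hm 0 1) = 1 - r3 := by rw [show Hm 0 1 = zr 1 (-1) from rfl, emb_zr]; push_cast; ring
    have H10 : emb (Hm 1 0) = 1 - r3 := by rw [show Hm 1 0 = zr 1 (-1) from rfl, emb_zr]; push_cast; ring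
    have H22 : emb (Hm 2 2) = 1 - r3 := by rw [show Hm 2 2 = zr 1 (-1) from rfl, emb_zr]; push_cast; ring
    have H11 : emb (Hm 1 1) = (1 - r3) * (1 - r3) := by
      rw [show Hm 1 1 = zr 1 (-1) * zr 1 (-1) from by decide +kernel, map_mul, emb_zr]; push_cast; ring
    have H02 : emb (Hm 0 2) = 0 := map_zero _
    have H20 : emb (Hm 2 0) = 0 := map_zero _
    have H12 : emb (Hm 1 2) = 0 := map_zero _
    have H21 : emb (Hm 2 1) = 0 := map_zero _
    simp only [star_add, star_mul', star_sub, star_one, sr]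
    linear_combination star (w 0) * w 0 * (c 0 0).trans H00 + star (w 0) * w 1 * (c 0 1).trans H01
      + star (w 0) * w 2 * (c 0 2).trans H02 + star (w 1) * w 0 * (c 1 0).trans H10
      + star (w 1) * w 1 * (c 1 1).trans H11 + star (w 1) * w 2 * (c 1 2).trans H12
      + star (w 2) * w 0 * (c 2 0).trans H20 + star (w 2) * w 1 * (c 2 1).trans H21
      + star (w 2) * w 2 * (c 2 2).trans H22
  exact_mod_cast this

/-- The third coordinate of `A⁻¹w` is the Hermitian product of `w` with the third column of `A`. -/
theorem inv_two (A : UO) (w) : ((r3 - 1 : ℝ) : ℂ) * act A⁻¹ w 2 =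
    ((r3 - 1 : ℝ) : ℂ) * (star (emb (mat A 2 2)) * w 2) -
      (star (emb (mat A 0 2)) * w 0 + star (emb (qc (mat A) 2)) * qv w) := by
  obtain ⟨v, rfl⟩ : ∃ v, w = act A v := ⟨act A⁻¹ w, by rw [← act_mul]; simp [act_one]⟩
  rw [← act_mul, inv_mul_cancel, act_one]
  have hq : qv (act A v) = emb (qc (mat A) 0) * v 0 + emb (qc (mat A) 1) * v 1 +
      emb (qc (mat A) 2) * v 2 := by
    simp only [qv, act_apply, emb_qc]; ring
  have c := fun j k => col_form_emb A j k
  have H22 : emb (Hm 2 2) = 1 - r3 := by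
    rw [show Hm 2 2 = zr 1 (-1) from rfl, emb_zr]; push_cast; ring
  have H20 : emb (Hm 2 0) = 0 := map_zero _
  have H21 : emb (Hm 2 1) = 0 := map_zero _
  rw [hq, act_apply, act_apply]
  push_cast
  linear_combination v 0 * (c 2 0).trans H20 + v 1 * (c 2 1).trans H21 + v 2 * (c 2 2).trans H22

/-- `w` lies in the translate by `A` of the basic neighbourhood of the origin of the ball. -/
def In (A : UO) (w : Fin 3 → ℂ) : Prop := (r3 - 1) * normSq (act A⁻¹ w 2) < -2 * hf w

theorem In_act (A B : UO) (w) : In (A * B) (act A w) ↔ In B w := by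
  rw [In, In, hf_act, ← act_mul, _root_.mul_inv_rev, inv_mul_cancel_right]

theorem act_smul (A : UO) (c : ℂ) (w) : act A (c • w) = c • act A w := by
  rw [act, act, Matrix.mulVec_smul]

theorem hf_smul (c : ℂ) (w) : hf (c • w) = normSq c * hf w := by
  have : qv (c • w) = c * qv w := by simp [qv]; ring
  simp only [hf, Wv, this]
  simp only [Pi.smul_apply, smul_eq_mul, map_mul]; ring

theorem In_smul (A : UO) {c : ℂ} (hc : c ≠ 0) (w) : In A (c • w) ↔ In A w := by
  rw [In, In, hf_smul, act_smul]
  have : 0 < normSq c := Complex.normSq_pos.mpr hc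
  simp only [Pi.smul_apply, smul_eq_mul, map_mul]
  rw [show (r3 - 1) * (normSq c * normSq (act A⁻¹ w 2)) =
    normSq c * ((r3 - 1) * normSq (act A⁻¹ w 2)) by ring,
    show -2 * (normSq c * hf w) = normSq c * (-2 * hf w) by ring]
  exact mul_lt_mul_iff_right₀ this

theorem normSq_emb_z (n : ℕ) : normSq (emb (z ^ n)) = 1 := by
  have h := nm_nr_z n 1
  rw [mul_one] at h
  rw [normSq_emb, h.1, h.2]
  simp [nm, nr, one_def]

theorem In_congr {A B : UO} (h : (QuotientGroup.mk A : PU) = QuotientGroup.mk B) (w) :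
    In A w ↔ In B w := by
  obtain ⟨k, -, hk⟩ := mat_of_mk_eq h.symm
  have e : A = zU ^ k * B := mat_inj (by rw [map_mul, zU_pow, hk]; simp)
  have hz : emb (z ^ k) ≠ 0 := by
    intro h0
    have := normSq_emb_z k
    rw [h0] at this
    simp at this
  have h2 : act (zU ^ k) w = emb (z ^ k) • w := by
    ext i
    rw [act_apply, zU_pow]
    fin_cases i <;> simp
  rw [e, ← In_smul _ hz, ← h2, In_act]

theorem conj_nonneg (x : Oz) : 0 ≤ (nm x : ℝ) - nr x * r3 := by
  have h1 : (3 * (nr x : ℝ) ^ 2) ≤ (nm x : ℝ) ^ 2 := by exact_mod_cast nr_sq_le x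
  have h2 : (0 : ℝ) ≤ nm x := by exact_mod_cast nm_nonneg x
  have : nr x * r3 ≤ nm x := abs_le_of_sq_le_sq' (by nlinarith [r3_sq]) h2 |>.2
  linarith

/-- The third column of a unitary matrix is a vector of square length `1 - √3`. -/
theorem col_two (A : UO) : normSq (emb (mat A 0 2)) + normSq (emb (qc (mat A) 2)) =
    (r3 - 1) * (normSq (emb (mat A 2 2)) - 1) := by
  obtain ⟨h1, h2⟩ := col_norm A 2 1 (-1) rfl
  simp only [normSq_emb]
  have h1' : (nm (mat A 0 2) : ℝ) + nm (qc (mat A) 2) + nm (mat A 2 2) - 3 * nr (mat A 2 2) = 1 := by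
    exact_mod_cast h1
  have h2' : (nr (mat A 0 2) : ℝ) + nr (qc (mat A) 2) + nr (mat A 2 2) - nm (mat A 2 2) = -1 := by
    exact_mod_cast h2
  linear_combination h1' + r3 * h2' - nr (mat A 2 2) * r3_sq

/-- The conjugate of the real number `|A₃₃|²` under `√3 ↦ -√3` is bounded, because the conjugate
Hermitian form is definite; so only finitely many values up to `9` are possible. -/
theorem good_of_normSq {A : UO} (h : normSq (emb (mat A 2 2)) ≤ 9) : Good (Nn A) := by
  obtain ⟨h1, h2⟩ := col_norm A 2 1 (-1) rfl
  have h1' : (nm (mat A 0 2) : ℝ) + nm (qc (mat A) 2) + nm (mat A 2 2) - 3 * nr (mat A 2 2) = 1 := by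
    exact_mod_cast h1
  have h2' : (nr (mat A 0 2) : ℝ) + nr (qc (mat A) 2) + nr (mat A 2 2) - nm (mat A 2 2) = -1 := by
    exact_mod_cast h2
  have c1 := conj_nonneg (mat A 0 2)
  have c2 := conj_nonneg (qc (mat A) 2)
  have e := col_two A
  have n1 := Complex.normSq_nonneg (emb (mat A 0 2))
  have n2 := Complex.normSq_nonneg (emb (qc (mat A) 2))
  rw [normSq_emb (mat A 2 2)] at e h
  set m : ℝ := ((nm (mat A 2 2) : ℤ) : ℝ) with hm
  set n : ℝ := ((nr (mat A 2 2) : ℤ) : ℝ) with hn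
  have r1 := r3_lo
  have r2 := r3_hi
  have g1 : 1 ≤ m + n * r3 := by
    have : 0 ≤ (r3 - 1) * (m + n * r3 - 1) := by linarith
    nlinarith
  have g2 : m - n * r3 ≤ 1 := by
    have : (r3 + 1) * (1 - (m - n * r3)) = ((nm (mat A 0 2) : ℝ) - nr (mat A 0 2) * r3) +
        (nm (qc (mat A) 2) - nr (qc (mat A) 2) * r3) := by
      linear_combination -h1' + r3 * h2' + n * r3_sq
    nlinarith
  have g3 : 0 ≤ n := by nlinarith
  have g4 : 3 * n ^ 2 ≤ (9 - m) ^ 2 := by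
    have : (n * r3) ^ 2 ≤ (9 - m) ^ 2 := pow_le_pow_left₀ (by positivity) (by linarith) 2
    nlinarith [r3_sq]
  apply good_of_le
  · have : m ≤ 9 := by nlinarith
    rw [hm] at this
    exact_mod_cast this
  · rw [hm, hn] at g4
    exact_mod_cast g4

theorem normSq_cauchy (p q x y : ℂ) :
    normSq (star p * x + star q * y) ≤ (normSq p + normSq q) * (normSq x + normSq y) := by
  have : (normSq p + normSq q) * (normSq x + normSq y) - normSq (star p * x + star q * y) =
      normSq (p * y - q * x) := by
    simp only [Complex.normSq_apply, Complex.add_re, Complex.mul_re, Complex.add_im, Complex.mul_im,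
      Complex.star_def, Complex.conj_re, Complex.conj_im, Complex.sub_re, Complex.sub_im]
    ring
  have := Complex.normSq_nonneg (p * y - q * x)
  linarith

theorem normSq_add_le3 (x y : ℂ) : normSq (x + y) ≤ 3 * normSq x + 3 / 2 * normSq y := by
  simp only [Complex.normSq_apply, Complex.add_re, Complex.add_im]
  nlinarith [sq_nonneg (2 * x.re - y.re), sq_nonneg (2 * x.im - y.im)]

/-- Two translates of the basic neighbourhood meet only if the corner entry of the transition is
small. -/
theorem good_of_In_one {A : UO} {w : Fin 3 → ℂ} (h1 : In 1 w) (hA : In A w) : Good (Nn A) := by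
  apply good_of_normSq
  have e := inv_two A w
  rw [In, inv_one, act_one, hf, Wv] at h1
  rw [In, hf, Wv] at hA
  set a := emb (mat A 2 2)
  set p := emb (mat A 0 2)
  set q := emb (qc (mat A) 2)
  set v := act A⁻¹ w 2
  have e' : ((r3 - 1 : ℝ) : ℂ) * (star a * w 2) = ((r3 - 1 : ℝ) : ℂ) * v +
      (star p * w 0 + star q * qv w) := by rw [e]; ring
  have hP : normSq p + normSq q = (r3 - 1) * (normSq a - 1) := col_two A
  have hc := normSq_cauchy p q (w 0) (qv w)
  have ht := normSq_add_le3 (((r3 - 1 : ℝ) : ℂ) * v) (star p * w 0 + star q * qv w)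
  rw [← e', map_mul, map_mul, map_mul, Complex.normSq_ofReal, Complex.star_def, Complex.normSq_conj]
    at ht
  rw [hP] at hc
  have hW : 0 ≤ normSq (w 0) + normSq (qv w) := add_nonneg (Complex.normSq_nonneg _) (Complex.normSq_nonneg _)
  have hO := Complex.normSq_nonneg (w 2)
  set W := normSq (w 0) + normSq (qv w)
  set O := normSq (w 2)
  set N := normSq a
  set V := normSq v
  set s := r3 - 1 with hs
  have hs0 : 0 < s := by have := r3_lo; linarith
  have hsO : 0 < s * O := by linarith
  have k1 : s * (s * N * O) ≤ s * (3 * (s * V) + 3 / 2 * (N - 1) * W) := by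
    have : normSq ((starRingEnd ℂ) p * w 0 + (starRingEnd ℂ) q * qv w) ≤ s * (N - 1) * W := hc
    nlinarith
  have k2 := le_of_mul_le_mul_left k1 hs0
  by_contra hN
  push Not at hN
  have k3 : (N - 5) * W ≤ (N - 5) * (s * O / 2) :=
    mul_le_mul_of_nonneg_left (by linarith) (by linarith)
  nlinarith

theorem good_of_In {A B : UO} {w : Fin 3 → ℂ} (hA : In A w) (hB : In B w) :
    Good (Nn (A⁻¹ * B)) := by
  apply good_of_In_one (w := act A⁻¹ w)
  · rw [← In_act A⁻¹] at hA; simpa using hA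
  · rwa [In_act]

/-! ### The translates of the basic neighbourhood cover the ball -/

theorem rot_base {t : ℂ} (h1 : t.im ≤ (2 - r3) * t.re) (h2 : -t.im ≤ (2 - r3) * t.re) :
    0 ≤ t.re ∧ (2 + r3) / 4 * normSq t ≤ t.re ^ 2 := by
  have a := r3_lo
  have b := r3_hi
  have h0 : 0 ≤ t.re := by nlinarith
  refine ⟨h0, ?_⟩
  have h3 : t.im ^ 2 ≤ ((2 - r3) * t.re) ^ 2 := sq_le_sq' (by linarith) h1
  have e : t.re ^ 2 = (2 + r3) / 4 * (t.re ^ 2 + ((2 - r3) * t.re) ^ 2) := by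
    linear_combination t.re ^ 2 * (1 / 2 - r3 / 4) * r3_sq
  rw [e, Complex.normSq_apply]
  apply mul_le_mul_of_nonneg_left _ (by linarith)
  nlinarith

/-- Some 12th root of unity rotates a given complex number to within `15°` of the positive real
axis. -/
theorem rot (t : ℂ) : ∃ n : ℕ, 0 ≤ (om ^ n * t).re ∧
    (2 + r3) / 4 * normSq t ≤ (om ^ n * t).re ^ 2 := by
  have key : ∀ m : ℕ, ∀ t : ℂ, (∃ n : ℕ, 0 ≤ (om ^ n * (om ^ m * t)).re ∧
      (2 + r3) / 4 * normSq (om ^ m * t) ≤ (om ^ n * (om ^ m * t)).re ^ 2) →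
      ∃ n : ℕ, 0 ≤ (om ^ n * t).re ∧ (2 + r3) / 4 * normSq t ≤ (om ^ n * t).re ^ 2 := by
    rintro m t ⟨n, h1, h2⟩
    have e : normSq (om ^ m * t) = normSq t := by
      have : normSq om = 1 := by
        rw [Complex.normSq_apply]; simp only [om]; linear_combination r3_sq / 4
      rw [map_mul, map_pow, this, one_pow, one_mul]
    rw [e] at h2
    rw [← mul_assoc, ← pow_add] at h1 h2
    exact ⟨n + m, h1, h2⟩
  have a := r3_lo
  have b := r3_hi
  -- the quadrant around the positive real axis
  have quad : ∀ t : ℂ, t.im ≤ t.re → -t.im ≤ t.re → ∃ n : ℕ, 0 ≤ (om ^ n * t).re ∧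
      (2 + r3) / 4 * normSq t ≤ (om ^ n * t).re ^ 2 := by
    intro t h1 h2
    by_cases c1 : t.im ≤ (2 - r3) * t.re
    · by_cases c2 : -t.im ≤ (2 - r3) * t.re
      · exact ⟨0, by simpa using rot_base c1 c2⟩
      · apply key 1
        refine ⟨0, ?_⟩
        have := @rot_base (om ^ 1 * t)
        simp only [pow_zero, one_mul]
        simp only [pow_one, Complex.mul_re, Complex.mul_im, om] at this ⊢
        apply this <;> nlinarith [r3_sq]
    · apply key 11
      refine ⟨0, ?_⟩
      have e : om ^ 11 = ⟨r3 / 2, -1 / 2⟩ := by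
        rw [show om ^ 11 = om ^ 3 * om ^ 3 * om ^ 3 * om ^ 2 by ring, om_cu, om_sq]
        apply Complex.ext <;> simp <;> ring
      have := @rot_base (om ^ 11 * t)
      simp only [pow_zero, one_mul]
      rw [e] at this ⊢
      simp only [Complex.mul_re, Complex.mul_im] at this ⊢
      apply this <;> nlinarith [r3_sq]
  have e3 : om ^ 3 = ⟨0, 1⟩ := om_cu
  have e6 : om ^ 6 = ⟨-1, 0⟩ := by
    rw [show om ^ 6 = om ^ 3 * om ^ 3 by ring, om_cu]; apply Complex.ext <;> simp
  have e9 : om ^ 9 = ⟨0, -1⟩ := by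
    rw [show om ^ 9 = om ^ 3 * om ^ 3 * om ^ 3 by ring, om_cu]; apply Complex.ext <;> simp
  by_cases c1 : t.im ≤ t.re
  · by_cases c2 : -t.im ≤ t.re
    · exact quad t c1 c2
    · apply key 3
      apply quad <;> rw [e3] <;> simp only [Complex.mul_re, Complex.mul_im] <;> linarith
  · by_cases c2 : -t.im ≤ t.re
    · apply key 9
      apply quad <;> rw [e9] <;> simp only [Complex.mul_re, Complex.mul_im] <;> linarith
    · apply key 6
      apply quad <;> rw [e6] <;> simp only [Complex.mul_re, Complex.mul_im] <;> linarith

/-- Among six vectors (the vertices of an octahedron on the Riemann sphere), one has a large inner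
product with a given vector. -/
theorem octa (x y : ℂ) : ∃ p q x2 : Oz, q = p + zr 1 (-1) * x2 ∧ nm p + nm q = 2 ∧
    nr p + nr q = 0 ∧ (1 + r3 / 3) * (normSq x + normSq y) ≤
      normSq (star (emb p) * x + star (emb q) * y) := by
  set W := normSq x + normSq y with hW
  have hW0 : 0 ≤ W := add_nonneg (Complex.normSq_nonneg _) (Complex.normSq_nonneg _)
  set a := normSq x - normSq y with ha
  set b := 2 * (x.re * y.re + x.im * y.im) with hb
  set c := 2 * (x.im * y.re - x.re * y.im) with hc
  have hs : a ^ 2 + b ^ 2 + c ^ 2 = W ^ 2 := by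
    simp only [ha, hb, hc, hW, Complex.normSq_apply]; ring
  have big : r3 / 3 * W ≤ a ∨ r3 / 3 * W ≤ -a ∨ r3 / 3 * W ≤ b ∨ r3 / 3 * W ≤ -b ∨
      r3 / 3 * W ≤ c ∨ r3 / 3 * W ≤ -c := by
    by_contra hcon
    push Not at hcon
    obtain ⟨h1, h2, h3, h4, h5, h6⟩ := hcon
    have g1 : a ^ 2 < (r3 / 3 * W) ^ 2 := sq_lt_sq' (by linarith) h1
    have g2 : b ^ 2 < (r3 / 3 * W) ^ 2 := sq_lt_sq' (by linarith) h3
    have g3 : c ^ 2 < (r3 / 3 * W) ^ 2 := sq_lt_sq' (by linarith) h5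
    have : 3 * (r3 / 3 * W) ^ 2 = W ^ 2 := by linear_combination W ^ 2 / 3 * r3_sq
    linarith
  have e0 : emb 0 = 0 := map_zero _
  have e1 : emb 1 = 1 := map_one _
  have ei : emb ⟨0, 0, 0, 1⟩ = ⟨0, 1⟩ := by rw [emb_apply]; apply Complex.ext <;> simp
  have ei' : emb ⟨0, 0, 0, -1⟩ = ⟨0, -1⟩ := by rw [emb_apply]; apply Complex.ext <;> simp
  have em1 : emb ⟨-1, 0, 0, 0⟩ = ⟨-1, 0⟩ := by rw [emb_apply]; apply Complex.ext <;> simp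
  have e1i : emb ⟨1, 0, 0, 1⟩ = ⟨1, 1⟩ := by rw [emb_apply]; apply Complex.ext <;> simp
  rcases big with h | h | h | h | h | h
  · refine ⟨⟨1, 0, 0, 1⟩, 0, ⟨0, 1, 1, 0⟩, by decide +kernel, by decide +kernel, by decide +kernel, ?_⟩
    have : normSq (star (emb ⟨1, 0, 0, 1⟩) * x + star (emb 0) * y) = W + a := by
      rw [e0, e1i, hW, ha]; simp [Complex.normSq_apply]; ring
    rw [this]; linarith
  · refine ⟨0, ⟨1, 0, 0, 1⟩, ⟨0, -1, -1, 0⟩, by decide +kernel, by decide +kernel, by decide +kernel, ?_⟩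
    have : normSq (star (emb 0) * x + star (emb ⟨1, 0, 0, 1⟩) * y) = W - a := by
      rw [e0, e1i, hW, ha]; simp [Complex.normSq_apply]; ring
    rw [this]; linarith
  · refine ⟨1, 1, 0, by decide +kernel, by decide +kernel, by decide +kernel, ?_⟩
    have : normSq (star (emb 1) * x + star (emb 1) * y) = W + b := by
      rw [e1, hW, hb]; simp [Complex.normSq_apply]; ring
    rw [this]; linarith
  · refine ⟨1, ⟨-1, 0, 0, 0⟩, ⟨1, 2, 0, -1⟩, by decide +kernel, by decide +kernel, by decide +kernel, ?_⟩
    have : normSq (star (emb 1) * x + star (emb ⟨-1, 0, 0, 0⟩) * y) = W - b := by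
      rw [e1, em1, hW, hb]; simp [Complex.normSq_apply]; ring
    rw [this]; linarith
  · refine ⟨1, ⟨0, 0, 0, -1⟩, ⟨0, 1, 1, 0⟩, by decide +kernel, by decide +kernel, by decide +kernel, ?_⟩
    have : normSq (star (emb 1) * x + star (emb ⟨0, 0, 0, -1⟩) * y) = W + c := by
      rw [e1, ei', hW, hc]; simp [Complex.normSq_apply]; ring
    rw [this]; linarith
  · refine ⟨1, ⟨0, 0, 0, 1⟩, ⟨1, 1, -1, -1⟩, by decide +kernel, by decide +kernel, by decide +kernel, ?_⟩
    have : normSq (star (emb 1) * x + star (emb ⟨0, 0, 0, 1⟩) * y) = W - c := by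
      rw [e1, ei, hW, hc]; simp [Complex.normSq_apply]; ring
    rw [this]; linarith

theorem emb_star_z_pow (n : ℕ) : star (emb (star z ^ n)) = om ^ n := by
  rw [← emb_star, star_pow, star_star, map_pow, emb, lift_z]

theorem re_aux (s : ℝ) (a b c d : ℂ) :
    ((s : ℂ) * ((starRingEnd ℂ) a * b) * ((starRingEnd ℂ) (c) * (starRingEnd ℂ) d)).re =
      s * (c * (a * star b * d)).re := by
  simp only [Complex.mul_re, Complex.mul_im, Complex.ofReal_re, Complex.ofReal_im, Complex.conj_re,
    Complex.conj_im, Complex.star_def]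
  ring

/-- The numerical estimate behind `closer`: `O` and `V` are the square absolute values of the third
coordinate before and after the move, `W` is the positive part of the form, and `t`, `R` measure
the alignment of the point with the chosen column. -/
theorem closer_ineq {O W t R V : ℝ} (hO : 0 ≤ O) (ht : (1 + r3 / 3) * W ≤ t) (hc : t ≤ 2 * W)
    (h1 : (r3 - 1) * O ≤ 2 * W) (h2 : W ≤ (r3 - 1) * O) (hR : 0 ≤ R)
    (hn : (2 + r3) / 4 * ((2 + r3) * O * t) ≤ R ^ 2)
    (e : (r3 - 1) * (r3 - 1) * V = (r3 - 1) * (r3 - 1) * ((2 + r3) * O) + t - 2 * ((r3 - 1) * R)) :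
    V ≤ 0.94 * O := by
  have a := r3_lo
  have b := r3_hi
  have sq := r3_sq
  have hs : 0 < r3 - 1 := by linarith
  have hs2 : (r3 - 1) * (r3 - 1) = 4 - 2 * r3 := by linear_combination sq
  have e2 : (4 - 2 * r3) * V = 2 * O + t - 2 * ((r3 - 1) * R) := by
    rw [hs2] at e
    linear_combination e - 2 * O * sq
  have t1 : r3 / 3 * O ≤ t := by
    have : (1 + r3 / 3) * ((r3 - 1) * O / 2) ≤ (1 + r3 / 3) * W :=
      mul_le_mul_of_nonneg_left (by linarith) (by linarith)
    have e3 : (1 + r3 / 3) * ((r3 - 1) * O / 2) = r3 / 3 * O := by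
      linear_combination O / 6 * sq
    linarith
  have t1' : 0.5773 * O ≤ t := by nlinarith
  have t2 : t ≤ 1.5 * O := by nlinarith
  have t0 : 0 ≤ t := by linarith
  have hOt := mul_nonneg hO t0
  set D := (2 - 0.94 * (4 - 2 * r3)) * O + t with hD
  have hD0 : 0 ≤ D := by rw [hD]; nlinarith
  have hD1 : D ≤ 1.4965 * O + t := by rw [hD]; nlinarith
  have hD2 : D ^ 2 ≤ 7.464 * (O * t) := by
    have : D ^ 2 ≤ (1.4965 * O + t) ^ 2 := pow_le_pow_left₀ hD0 hD1 2
    nlinarith [mul_nonneg (sub_nonneg.mpr t1') (sub_nonneg.mpr t2),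
      mul_nonneg hO (sub_nonneg.mpr t1')]
  have hR2 : 2 * (2 + r3) * (O * t) ≤ (2 * ((r3 - 1) * R)) ^ 2 := by
    have e4 : (2 * ((r3 - 1) * R)) ^ 2 = 4 * (4 - 2 * r3) * R ^ 2 := by
      linear_combination 4 * R ^ 2 * sq
    rw [e4]
    have : 4 * (4 - 2 * r3) * ((2 + r3) / 4 * ((2 + r3) * O * t)) ≤ 4 * (4 - 2 * r3) * R ^ 2 :=
      mul_le_mul_of_nonneg_left hn (by linarith)
    have e5 : 4 * (4 - 2 * r3) * ((2 + r3) / 4 * ((2 + r3) * O * t)) = 2 * (2 + r3) * (O * t) := by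
      linear_combination -(2 * (2 + r3) * O * t) * sq
    linarith
  have hDR : D ≤ 2 * ((r3 - 1) * R) := by
    refine abs_le_of_sq_le_sq' ?_ (by positivity) |>.2
    nlinarith
  have : (4 - 2 * r3) * V ≤ (4 - 2 * r3) * (0.94 * O) := by
    rw [e2]; rw [hD] at hDR; linarith
  exact le_of_mul_le_mul_left this (by linarith)

/-- A point of the ball outside the basic neighbourhood is brought closer to the origin by
the inverse of some `kb` with `k` in the finite group `⟨u, v⟩`. -/
theorem closer {w : Fin 3 → ℂ} (h1 : (r3 - 1) * normSq (w 2) ≤ 2 * Wv w)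
    (h2 : Wv w ≤ (r3 - 1) * normSq (w 2)) : ∃ g A, piU g = QuotientGroup.mk A ∧
      normSq (act A⁻¹ w 2) ≤ 0.94 * normSq (w 2) := by
  obtain ⟨p, q, x2, hq, hm, hr, ht⟩ := octa (w 0) (qv w)
  set T := star (emb p) * w 0 + star (emb q) * qv w with hT
  set c0 : ℂ := emb (bM 2 2)
  have hc0 : normSq c0 = 2 + r3 := by
    rw [normSq_emb, show nm (bM 2 2) = 2 by decide +kernel,
      show nr (bM 2 2) = 1 by decide +kernel]; simp
  obtain ⟨n, hn0, hn⟩ := rot (c0 * star (w 2) * T)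
  have hz : star z ^ n = z ^ (11 * n) := by
    rw [pow_mul]; congr 1
  have hL := (@orbit_two (star z ^ n * p) (star z ^ n * q) (star z ^ n * x2) (by rw [hq]; ring)
    (by rw [hz, (nm_nr_z _ _).1, (nm_nr_z _ _).1, hm])
    (by rw [hz, (nm_nr_z _ _).2, (nm_nr_z _ _).2, hr])).2
  obtain ⟨k, hk, k0, k1⟩ := hL
  refine ⟨k.1 * gb, k.2 * bU, ?_, ?_⟩
  · rw [map_mul, KR_pi hk, piU_b]; rfl
  obtain ⟨m0, m1, m2⟩ := K_mul hk bU 2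
  have m0' : mat (k.2 * bU) 0 2 = star z ^ n * p := m0.trans k0
  have m1' : mat (k.2 * bU) 1 2 = star z ^ n * x2 := m1.trans k1
  have mq : qc (mat (k.2 * bU)) 2 = star z ^ n * q := by
    rw [qc, m0', m1', hq]; ring
  have e := inv_two (k.2 * bU) w
  rw [m0', mq, m2, mat_b, map_mul, map_mul, star_mul', star_mul', emb_star_z_pow] at e
  have e' : ((r3 - 1 : ℝ) : ℂ) * act (k.2 * bU)⁻¹ w 2 =
      ((r3 - 1 : ℝ) : ℂ) * (star c0 * w 2) - om ^ n * T := by rw [e, hT]; ring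
  have e2 := congrArg normSq e'
  rw [Complex.normSq_sub, map_mul, map_mul, map_mul, map_mul, map_mul, map_pow, Complex.normSq_ofReal,
    Complex.star_def, Complex.normSq_conj, hc0] at e2
  have hom : normSq om = 1 := by
    rw [Complex.normSq_apply]; simp only [om]; linear_combination r3_sq / 4
  rw [hom, one_pow, one_mul, re_aux] at e2
  rw [map_mul, map_mul, hc0, Complex.star_def, Complex.normSq_conj] at hn
  have hc := normSq_cauchy (emb p) (emb q) (w 0) (qv w)
  have h2' : normSq (emb p) + normSq (emb q) = 2 := by
    have hm' : (nm p : ℝ) + nm q = 2 := by exact_mod_cast hm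
    have hr' : (nr p : ℝ) + nr q = 0 := by exact_mod_cast hr
    rw [normSq_emb, normSq_emb]; linear_combination hm' + r3 * hr'
  rw [h2'] at hc
  exact closer_ineq (Complex.normSq_nonneg _) ht hc h1 h2 hn0 hn e2

/-- Every point of the ball lies in a translate of the basic neighbourhood by an element of the image
of `G`: apply `closer` until the origin is close enough. -/
theorem covering {w : Fin 3 → ℂ} (hw : hf w < 0) :
    ∃ g A, piU g = QuotientGroup.mk A ∧ In A w := by
  have main : ∀ n : ℕ, ∀ w : Fin 3 → ℂ, hf w < 0 →
      (r3 - 1) * normSq (w 2) * 0.94 ^ n < -hf w → ∃ g A, piU g = QuotientGroup.mk A ∧ In A w := by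
    intro n
    induction n with
    | zero =>
      intro w _ h
      have : 0 ≤ Wv w := add_nonneg (Complex.normSq_nonneg _) (Complex.normSq_nonneg _)
      rw [hf] at h
      linarith
    | succ n ih =>
      intro w hw h
      by_cases h1 : In 1 w
      · exact ⟨1, 1, map_one _, h1⟩
      · rw [In, inv_one, act_one, not_lt, hf] at h1
        obtain ⟨g, A, hg, hA⟩ := closer (w := w) (by linarith) (by rw [hf] at hw; linarith)
        have hs : 0 < r3 - 1 := by have := r3_lo; linarith
        obtain ⟨g', B, hg', hB⟩ := ih (act A⁻¹ w) (by rwa [hf_act]) (by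
          rw [hf_act]
          refine lt_of_le_of_lt ?_ h
          rw [pow_succ', ← mul_assoc]
          have h9 : (0 : ℝ) < 0.94 ^ n := by positivity
          apply mul_le_mul_of_nonneg_right _ h9.le
          nlinarith)
        refine ⟨g * g', A * B, by rw [map_mul, hg, hg']; rfl, ?_⟩
        rw [← In_act A] at hB
        rwa [← act_mul, mul_inv_cancel, act_one] at hB
  have hlim : Filter.Tendsto (fun n : ℕ => (r3 - 1) * normSq (w 2) * 0.94 ^ n) Filter.atTop
      (nhds ((r3 - 1) * normSq (w 2) * 0)) :=
    (tendsto_pow_atTop_nhds_zero_of_lt_one (by norm_num) (by norm_num)).const_mul _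
  rw [mul_zero] at hlim
  obtain ⟨n, hn⟩ := (hlim.eventually_lt_const (by linarith : (0 : ℝ) < -hf w)).exists
  exact main n w hw hn

/-! ### The presented group acts on the ball: injectivity and surjectivity -/

/-- The vector with diagonal coordinates `(x.1, x.2, 1)`. -/
def bvec (x : ℂ × ℂ) : Fin 3 → ℂ := ![x.1, (x.2 - x.1) / (1 - r3), 1]

theorem one_sub_r3_ne : (1 - (r3 : ℂ)) ≠ 0 := by
  intro h
  have h' : ((1 - r3 : ℝ) : ℂ) = 0 := by push_cast; exact h
  have : 1 - r3 = 0 := by exact_mod_cast h'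
  have := r3_lo
  linarith

theorem qv_bvec (x : ℂ × ℂ) : qv (bvec x) = x.2 := by
  have := one_sub_r3_ne
  simp only [qv, bvec, Matrix.cons_val_zero, Matrix.cons_val_one]
  field_simp; ring

theorem hf_bvec (x : ℂ × ℂ) : hf (bvec x) = normSq x.1 + normSq x.2 - (r3 - 1) := by
  rw [hf, Wv, qv_bvec]; simp [bvec]

/-- A vector of negative square length is proportional to some `bvec x`. -/
theorem exists_bvec {w : Fin 3 → ℂ} (h : hf w < 0) : ∃ (x : ℂ × ℂ) (c : ℂ), c ≠ 0 ∧ w = c • bvec x := by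
  have h2 : w 2 ≠ 0 := by
    intro h2
    have : 0 ≤ Wv w := add_nonneg (Complex.normSq_nonneg _) (Complex.normSq_nonneg _)
    rw [hf, h2] at h
    simp at h
    linarith
  have := one_sub_r3_ne
  refine ⟨(w 0 / w 2, qv w / w 2), w 2, h2, ?_⟩
  ext i
  fin_cases i
  · simp [bvec]; field_simp
  · simp [bvec, qv]; field_simp; ring
  · simp [bvec]

theorem hf_neg_of_In {A : UO} {w} (h : In A w) : hf w < 0 := by
  rw [In] at h
  have := r3_lo
  have := mul_nonneg (by linarith : 0 ≤ r3 - 1) (Complex.normSq_nonneg (act A⁻¹ w 2))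
  linarith

/-- The translate of the basic neighbourhood of the origin by an element of `G`. -/
def Ig (g : CS) : Set (ℂ × ℂ) := {x | ∃ A, piU g = QuotientGroup.mk A ∧ In A (bvec x)}

theorem mem_Ig {g : CS} {A : UO} (h : piU g = QuotientGroup.mk A) (x) : x ∈ Ig g ↔ In A (bvec x) :=
  ⟨fun ⟨_, hB, hx⟩ => (In_congr (hB.symm.trans h) _).mp hx, fun hx => ⟨A, h, hx⟩⟩

theorem Ig_congr {g h : CS} (e : piU g = piU h) : Ig g = Ig h := by simp only [Ig, e]

theorem normSq_convex {a b : ℝ} (ha : 0 ≤ a) (hb : 0 ≤ b) (hab : a + b = 1) (x y : ℂ) :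
    normSq (a * x + b * y) ≤ a * normSq x + b * normSq y := by
  obtain rfl : b = 1 - a := by linarith
  have e : a * normSq x + (1 - a) * normSq y - normSq (a * x + ((1 - a : ℝ) : ℂ) * y) =
      a * (1 - a) * normSq (x - y) := by
    simp only [Complex.normSq_apply, Complex.add_re, Complex.mul_re, Complex.add_im, Complex.mul_im,
      Complex.sub_re, Complex.sub_im, Complex.ofReal_re, Complex.ofReal_im]
    ring
  have := mul_nonneg (mul_nonneg ha hb) (Complex.normSq_nonneg (x - y))
  linarith

theorem convexOn_normSq_affine {f : ℂ × ℂ → ℂ}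
    (h : ∀ (a b : ℝ) x y, a + b = 1 → f (a • x + b • y) = a * f x + b * f y) :
    ConvexOn ℝ Set.univ fun x => normSq (f x) := by
  refine ⟨convex_univ, fun x _ y _ a b ha hb hab => ?_⟩
  dsimp only
  rw [h a b x y hab]
  exact normSq_convex ha hb hab _ _

theorem bvec_affine (a b : ℝ) (x y) (hab : a + b = 1) :
    bvec (a • x + b • y) = (a : ℂ) • bvec x + (b : ℂ) • bvec y := by
  have := one_sub_r3_ne
  ext i
  fin_cases i
  · simp [bvec]
  · simp [bvec]; ring
  · simp [bvec]; exact_mod_cast hab.symm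

theorem convexOn_W : ConvexOn ℝ Set.univ fun x : ℂ × ℂ => normSq x.1 + normSq x.2 :=
  (convexOn_normSq_affine (f := Prod.fst) (fun a b x y _ => by simp)).add
    (convexOn_normSq_affine (f := Prod.snd) (fun a b x y _ => by simp))

theorem Ig_eq {g : CS} {A : UO} (h : piU g = QuotientGroup.mk A) :
    Ig g = {x | (r3 - 1) * normSq (act A⁻¹ (bvec x) 2) + 2 * (normSq x.1 + normSq x.2) <
      2 * (r3 - 1)} := by
  ext x
  rw [mem_Ig h, In, hf_bvec, Set.mem_ofPred_eq]
  constructor <;> intro h <;> linarith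

theorem Ig_convex (g : CS) : Convex ℝ (Ig g) := by
  obtain ⟨A, hA⟩ := QuotientGroup.mk_surjective (piU g)
  rw [Ig_eq hA.symm]
  have h1 : ConvexOn ℝ Set.univ fun x : ℂ × ℂ => normSq (act A⁻¹ (bvec x) 2) := by
    apply convexOn_normSq_affine (f := fun x => act A⁻¹ (bvec x) 2)
    intro a b x y hab
    rw [bvec_affine a b x y hab]
    simp only [act_apply, Pi.add_apply, Pi.smul_apply, smul_eq_mul]
    ring
  have hs : 0 ≤ r3 - 1 := by have := r3_lo; linarith
  have := ((h1.smul hs).add (convexOn_W.smul (by norm_num : (0 : ℝ) ≤ 2))).convex_lt (2 * (r3 - 1))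
  simpa using this

theorem Ig_open (g : CS) : IsOpen (Ig g) := by
  obtain ⟨A, hA⟩ := QuotientGroup.mk_surjective (piU g)
  rw [Ig_eq hA.symm]
  apply isOpen_lt _ continuous_const
  have : Continuous fun x : ℂ × ℂ => act A⁻¹ (bvec x) 2 := by
    simp only [act_apply, bvec, Matrix.cons_val_zero, Matrix.cons_val_one, Matrix.cons_val]
    fun_prop
  have h2 := Complex.continuous_normSq
  fun_prop

theorem In_one_zero : In 1 (bvec 0) := by
  rw [In, hf_bvec, inv_one, act_one]
  have := r3_lo
  simp [bvec]
  linarith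

theorem Ig_good {g h : CS} {x} (hg : x ∈ Ig g) (hh : x ∈ Ig h) : GoodG (g⁻¹ * h) := by
  obtain ⟨A, hA, hxA⟩ := hg
  obtain ⟨B, hB, hxB⟩ := hh
  exact ⟨A⁻¹ * B, by rw [map_mul, map_inv, hA, hB]; rfl, good_of_In hxA hxB⟩

/-- The translates of the basic neighbourhood under `G`, as data for the development lemma. -/
def dev : Dev CS (ℂ × ℂ) where
  I := Ig
  S := SS
  N x := (normSq x.1 + normSq x.2) / (r3 - 1)
  compact ρ hρ := by
    have r1 := r3_lo
    have r2 := r3_hi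
    apply Metric.isCompact_of_isClosed_isBounded
    · apply isClosed_le _ continuous_const
      have h2 := Complex.continuous_normSq
      fun_prop
    · apply (Metric.isBounded_closedBall (x := (0 : ℂ × ℂ)) (r := 1)).subset
      intro x hx
      rw [Set.mem_ofPred_eq, div_le_iff₀ (by linarith)] at hx
      have n1 := Complex.normSq_nonneg x.1
      have n2 := Complex.normSq_nonneg x.2
      have hb : normSq x.1 + normSq x.2 ≤ 1 := by nlinarith
      rw [mem_closedBall_zero_iff, Prod.norm_def, max_le_iff]
      rw [Complex.normSq_eq_norm_sq] at *
      rw [Complex.normSq_eq_norm_sq] at *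
      constructor <;> nlinarith [norm_nonneg x.1, norm_nonneg x.2]
  convexN ρ := by
    have r1 := r3_lo
    have e : {x : ℂ × ℂ | (normSq x.1 + normSq x.2) / (r3 - 1) ≤ ρ} =
        {x | normSq x.1 + normSq x.2 ≤ ρ * (r3 - 1)} := by
      ext x
      rw [Set.mem_ofPred_eq, Set.mem_ofPred_eq, div_le_iff₀ (by linarith)]
    rw [e]
    simpa using convexOn_W.convex_le (ρ * (r3 - 1))
  N_zero := by simp
  lt_one g x hx := by
    obtain ⟨A, -, hA⟩ := hx
    have := hf_neg_of_In hA
    rw [hf_bvec] at this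
    rw [div_lt_one (by have := r3_lo; linarith)]
    linarith
  opn := Ig_open
  conv := Ig_convex
  cov x hx := by
    rw [div_lt_one (by have := r3_lo; linarith)] at hx
    obtain ⟨g, A, h⟩ := covering (w := bvec x) (by rw [hf_bvec]; linarith)
    exact ⟨g, A, h⟩
  zero_mem := ⟨1, map_one _, In_one_zero⟩
  one_mem := SS.of_K (one_mem _)
  inv_mem s hs := SS.inv hs
  trans x g h k hg _ hk h1 h2 := by
    have e : g⁻¹ * k = (g⁻¹ * h) * (h⁻¹ * k) := by group
    rw [e]
    exact SS.mul_of_good h1 h2 (by rw [← e]; exact Ig_good hg hk)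
  ex x g h hg hh := by
    obtain ⟨A, hA, hxA⟩ := hg
    obtain ⟨B, hB, hxB⟩ := hh
    obtain ⟨s, hs, e⟩ := classify (good_of_In hxA hxB)
    refine ⟨g * s, Ig_congr ?_, by simpa using hs⟩
    rw [map_mul, e, hA, hB, ← QuotientGroup.mk_mul, mul_inv_cancel_left]

theorem adj_of_common {s : CS} {B : UO} (hs : piU s = QuotientGroup.mk B) {w0 : Fin 3 → ℂ}
    (h1 : In 1 w0) (hB : In B w0) (g : CS) : (Ig g ∩ Ig (g * s)).Nonempty := by
  obtain ⟨A, hA⟩ := QuotientGroup.mk_surjective (piU g)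
  obtain ⟨x, c, hc, hw⟩ := exists_bvec (w := act A w0) (by rw [hf_act]; exact hf_neg_of_In h1)
  refine ⟨x, (mem_Ig hA.symm x).mpr ?_, (mem_Ig (A := A * B) ?_ x).mpr ?_⟩
  · have := (In_act A 1 w0).mpr h1
    rw [mul_one] at this
    rwa [← In_smul A hc, ← hw]
  · rw [map_mul, hs, ← hA]; rfl
  · rwa [← In_smul _ hc, ← hw, In_act]

theorem In_of_fix {B : UO} (h0 : mat B 0 2 = 0) (h1 : mat B 1 2 = 0) (h2 : mat B 2 2 = 1) :
    In B (bvec 0) := by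
  have e : act B (bvec 0) = bvec 0 := by
    ext i
    rw [act_apply]
    fin_cases i <;> simp [bvec, h0, h1, h2]
  have := (In_act B 1 (bvec 0)).mpr In_one_zero
  rwa [mul_one, e] at this

/-- The basic neighbourhood meets its translate by `b`, at a point near the middle of the segment joining the two centres. -/
theorem adj_b : ∃ w0, In 1 w0 ∧ In bU w0 := by
  have a := r3_lo
  have b := r3_hi
  have sq := r3_sq
  have hc0 : normSq (emb (bM 2 2)) = 2 + r3 := by
    rw [normSq_emb, show nm (bM 2 2) = 2 by decide +kernel,
      show nr (bM 2 2) = 1 by decide +kernel]; simp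
  have hc1 : normSq (emb (bM 1 2)) = 2 + r3 := by
    rw [normSq_emb, show nm (bM 1 2) = 2 by decide +kernel,
      show nr (bM 1 2) = 1 by decide +kernel]; simp
  set w0 : Fin 3 → ℂ := ![0, ((0.8 : ℝ) : ℂ) * emb (bM 1 2), emb (bM 2 2)] with hw0
  have hq : qv w0 = ((0.8 * (1 - r3) : ℝ) : ℂ) * emb (bM 1 2) := by
    simp only [qv, hw0, Matrix.cons_val_zero, Matrix.cons_val_one]; push_cast; ring
  have hh : hf w0 = 1.28 - (1 + r3) := by
    rw [hf, Wv, hq, map_mul, Complex.normSq_ofReal, hc1]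
    simp only [hw0, Matrix.cons_val_zero, Matrix.cons_val, map_zero, hc0]
    linear_combination (0.64 * r3 - 1) * sq
  refine ⟨w0, ?_, ?_⟩
  · rw [In, hh, inv_one, act_one]
    simp only [hw0, Matrix.cons_val, hc0]
    nlinarith
  · have e := inv_two bU w0
    have hqc : emb (qc (mat bU) 2) = ((1 - r3 : ℝ) : ℂ) * emb (bM 1 2) := by
      rw [emb_qc, mat_b, show bM 0 2 = 0 from rfl, map_zero]; push_cast; ring
    have e' : ((r3 - 1 : ℝ) : ℂ) * act bU⁻¹ w0 2 = ((r3 - 0.6 : ℝ) : ℂ) := by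
      rw [e, hqc, hq, mat_b, show bM 0 2 = 0 from rfl, map_zero, star_zero, zero_mul, zero_add,
        star_mul', Complex.star_def, Complex.conj_ofReal]
      have g1 : (starRingEnd ℂ) (emb (bM 2 2)) * emb (bM 2 2) = ((2 + r3 : ℝ) : ℂ) := by
        rw [← Complex.normSq_eq_conj_mul_self, hc0]
      have g2 : (starRingEnd ℂ) (emb (bM 1 2)) * emb (bM 1 2) = ((2 + r3 : ℝ) : ℂ) := by
        rw [← Complex.normSq_eq_conj_mul_self, hc1]
      have g3 : (r3 : ℂ) ^ 2 = 3 := by exact_mod_cast sq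
      have w2 : w0 2 = emb (bM 2 2) := rfl
      rw [w2]
      push_cast at g1 g2 ⊢
      linear_combination (r3 - 1) * g1 - 0.8 * (1 - r3) ^ 2 * g2 + (1 - 0.8 * r3) * g3
    have e2 := congrArg normSq e'
    rw [map_mul, Complex.normSq_ofReal, Complex.normSq_ofReal] at e2
    rw [In, hh]
    have hs : 0 < r3 - 1 := by linarith
    have : (r3 - 1) * ((r3 - 1) * normSq (act bU⁻¹ w0 2)) < (r3 - 1) * (-2 * (1.28 - (1 + r3))) := by
      nlinarith
    exact lt_of_mul_lt_mul_left this hs.le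

theorem closure_gens : Subgroup.closure ({gu, gv, gb} : Set CS) = ⊤ := by
  rw [← PresentedGroup.closure_range_of csRels]
  congr 1
  ext x
  constructor
  · rintro (rfl | rfl | rfl)
    exacts [⟨CSgen.u, rfl⟩, ⟨CSgen.v, rfl⟩, ⟨CSgen.b, rfl⟩]
  · rintro ⟨i, rfl⟩
    cases i
    exacts [Or.inl rfl, Or.inr (Or.inl rfl), Or.inr (Or.inr rfl)]

/-- An element of the kernel fixes the origin, so it lies in `SS` by the development lemma, and there
the kernel is trivial. -/
theorem piU_injective : Function.Injective piU := by
  rw [injective_iff_map_eq_one]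
  intro g hg
  refine SS.eq_one (dev.mem_of_zero_mem {gu, gv, gb} closure_gens ?_ ?_ g ?_) hg
  · rintro s (rfl | rfl | rfl)
    exacts [SS.of_K gu_mem, SS.of_K gv_mem, gb_SS]
  · rintro g s (rfl | rfl | rfl)
    · exact adj_of_common piU_u In_one_zero (In_of_fix rfl rfl rfl) g
    · exact adj_of_common piU_v In_one_zero (In_of_fix rfl rfl rfl) g
    · obtain ⟨w0, h1, h2⟩ := adj_b
      exact adj_of_common piU_b h1 h2 g
  · exact ⟨1, hg, In_one_zero⟩

/-- The centre of any translate by `C` lies in a translate coming from `G`; the two translates meet,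
so they differ by an element of `SS`. -/
theorem piU_surjective : Function.Surjective piU := by
  intro y
  obtain ⟨C, rfl⟩ := QuotientGroup.mk_surjective y
  have hC : In C (act C (bvec 0)) := by
    have := (In_act C 1 (bvec 0)).mpr In_one_zero
    rwa [mul_one] at this
  obtain ⟨g, A, hg, hA⟩ := covering (hf_neg_of_In hC)
  obtain ⟨s, -, hs⟩ := classify (good_of_In hA hC)
  exact ⟨g * s, by rw [map_mul, hg, hs, ← QuotientGroup.mk_mul, mul_inv_cancel_left]⟩

/-! ### Transfer to the cyclotomic field -/

theorem zeta_four {ζ : L} (hζ : IsPrimitiveRoot ζ 12) : ζ ^ 4 = ζ ^ 2 - 1 := by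
  have h12 := hζ.pow_eq_one
  have h6 : ζ ^ 6 ≠ 1 := hζ.pow_ne_one_of_pos_of_lt (by norm_num) (by norm_num)
  have h4 : ζ ^ 4 ≠ 1 := hζ.pow_ne_one_of_pos_of_lt (by norm_num) (by norm_num)
  have h6' : ζ ^ 6 + 1 = 0 := by
    have : (ζ ^ 6 - 1) * (ζ ^ 6 + 1) = 0 := by linear_combination h12
    exact (mul_eq_zero.mp this).resolve_left (sub_ne_zero.mpr h6)
  have h2 : ζ ^ 2 + 1 ≠ 0 := fun h => h4 (by linear_combination (ζ ^ 2 - 1) * h)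
  have : (ζ ^ 2 + 1) * (ζ ^ 4 - ζ ^ 2 + 1) = 0 := by linear_combination h6'
  linear_combination (mul_eq_zero.mp this).resolve_left h2

theorem zeta_inv {ζ : L} (h : ζ ^ 4 = ζ ^ 2 - 1) : ζ⁻¹ = ζ - ζ ^ 3 :=
  inv_eq_of_mul_eq_one_right (by linear_combination -h)

theorem sq_three {m n : ℤ} (h : m ^ 2 = 3 * n ^ 2) : m = 0 := by
  by_contra hm
  have hn : n ≠ 0 := by
    rintro rfl
    simp at h
    exact hm h
  apply Nat.Prime.irrational_sqrt Nat.prime_three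
  refine ⟨|(m : ℚ) / n|, ?_⟩
  have e : (3 : ℝ) = ((m : ℝ) / n) ^ 2 := by
    have h' : (m : ℝ) ^ 2 = 3 * n ^ 2 := by exact_mod_cast h
    have hn' : (n : ℝ) ≠ 0 := by exact_mod_cast hn
    field_simp
    linarith
  push_cast
  rw [e, Real.sqrt_sq_eq_abs]

/-- The embedding of `ℤ[ζ]` in the cyclotomic field is injective: an element of the kernel has
square absolute value `m + n√3 = 0`. -/
theorem lift_inj {ζ : L} (h : ζ ^ 4 = ζ ^ 2 - 1) : Function.Injective (lift ζ h) := by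
  rw [injective_iff_map_eq_zero]
  intro x hx
  have e : lift ζ h (star x * x) = 0 := by rw [map_mul, hx, mul_zero]
  rw [star_mul_self, lift_apply] at e
  simp only [zr] at e
  push_cast at e
  have e2 : ((nm x ^ 2 : ℤ) : L) = ((3 * nr x ^ 2 : ℤ) : L) := by
    push_cast
    linear_combination (nm x - nr x * (2 * ζ - ζ ^ 3)) * e - nr x ^ 2 * (3 - ζ ^ 2) * h
  have e3 : nm x = 0 := sq_three (by exact_mod_cast e2)
  exact (small (x := x) (by omega)).1 e3

theorem mem_adjoin {ζ : L} (h : ζ ^ 4 = ζ ^ 2 - 1) (y : L) :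
    y ∈ Algebra.adjoin ℤ ({ζ} : Set L) ↔ ∃ x, lift ζ h x = y := by
  constructor
  · intro hy
    induction hy using Algebra.adjoin_induction with
    | mem y hy => exact ⟨z, by rw [lift_z, Set.mem_singleton_iff.mp hy]⟩
    | algebraMap n => exact ⟨n, by simp⟩
    | add a b _ _ ha hb =>
      obtain ⟨a, rfl⟩ := ha
      obtain ⟨b, rfl⟩ := hb
      exact ⟨a + b, map_add _ _ _⟩
    | mul a b _ _ ha hb =>
      obtain ⟨a, rfl⟩ := ha
      obtain ⟨b, rfl⟩ := hb
      exact ⟨a * b, map_mul _ _ _⟩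
  · rintro ⟨x, rfl⟩
    have hz : ζ ∈ Algebra.adjoin ℤ ({ζ} : Set L) := Algebra.subset_adjoin rfl
    rw [lift_apply]
    exact add_mem (add_mem (add_mem (intCast_mem _ _) (mul_mem (intCast_mem _ _) hz))
      (mul_mem (intCast_mem _ _) (pow_mem hz _))) (mul_mem (intCast_mem _ _) (pow_mem hz _))

theorem lift_star {ζ : L} (h : ζ ^ 4 = ζ ^ 2 - 1) (σ : L ≃+* L) (hσ : σ ζ = ζ⁻¹) (x : Oz) :
    lift ζ h (star x) = σ (lift ζ h x) := by
  rw [zeta_inv h] at hσ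
  rw [lift_apply, lift_apply, star_def]
  simp only [map_add, map_mul, map_pow, hσ, map_intCast]
  push_cast
  linear_combination -(x.c * (ζ ^ 2 - 1) + x.d * (ζ - ζ ^ 3 + (ζ - ζ ^ 3) * (ζ ^ 2 - 1) + ζ ^ 3) : L) * h

theorem rr_eq {ζ : L} (h : ζ ^ 4 = ζ ^ 2 - 1) : rr ζ = 2 * ζ - ζ ^ 3 := by
  rw [rr, zeta_inv h]; ring

theorem lift_zr {ζ : L} (h : ζ ^ 4 = ζ ^ 2 - 1) (m n : ℤ) : lift ζ h (zr m n) = m + n * rr ζ := by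
  rw [rr_eq h, lift_apply, zr]; push_cast; ring

theorem gamma0_det {ζ : L} (h : ζ ^ 4 = ζ ^ 2 - 1) : (gamma0 ζ).det ≠ 0 := by
  have e : (gamma0 ζ).det = lift ζ h (zr 1 (-1)) := by
    rw [lift_zr, gamma0, Matrix.det_fin_three]; simp; ring
  rw [e]
  intro h0
  have := lift_inj h (h0.trans (map_zero _).symm)
  revert this
  decide +kernel

section Transfer

variable {ζ : L} (h : ζ ^ 4 = ζ ^ 2 - 1)

/-- `γ₀` as an invertible matrix. -/
def gam : GL (Fin 3) L := Matrix.GeneralLinearGroup.mkOfDetNeZero (gamma0 ζ) (gamma0_det h)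

theorem gam_coe : (gam h : Matrix (Fin 3) (Fin 3) L) = gamma0 ζ := rfl

theorem gam_inv_coe : ((gam h)⁻¹ : Matrix (Fin 3) (Fin 3) L) = (gamma0 ζ)⁻¹ := by
  rw [gam_coe]

/-- The embedding `A ↦ γ₀ A γ₀⁻¹` of the integral unitary group in `GL₃(ℓ)`. -/
def Psi : UO →* GL (Fin 3) L :=
  (MulAut.conj (gam h)).toMonoidHom.comp
    ((Units.map ((lift ζ h).mapMatrix : M3 →+* Matrix (Fin 3) (Fin 3) L).toMonoidHom).comp UO.subtype)

theorem Psi_coe (A : UO) : (Psi h A : Matrix (Fin 3) (Fin 3) L) =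
    gamma0 ζ * (mat A).map (lift ζ h) * (gamma0 ζ)⁻¹ := by
  have : Psi h A = gam h * (Units.map ((lift ζ h).mapMatrix :
    M3 →+* Matrix (Fin 3) (Fin 3) L).toMonoidHom) (A : M3ˣ) * (gam h)⁻¹ := rfl
  rw [this, Units.val_mul, Units.val_mul, Matrix.coe_units_inv, gam_coe]
  rfl

theorem gamma0_isUnit {ζ : L} (h : ζ ^ 4 = ζ ^ 2 - 1) : IsUnit (gamma0 ζ).det :=
  (gamma0_det h).isUnit

theorem conj_gamma0 {ζ : L} (h : ζ ^ 4 = ζ ^ 2 - 1) (X : Matrix (Fin 3) (Fin 3) L) :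
    (gamma0 ζ)⁻¹ * (gamma0 ζ * X * (gamma0 ζ)⁻¹) * gamma0 ζ = X := by
  have hu := gamma0_isUnit h
  rw [Matrix.mul_assoc, Matrix.mul_assoc, Matrix.nonsing_inv_mul _ hu, Matrix.mul_one,
    ← Matrix.mul_assoc, Matrix.nonsing_inv_mul _ hu, Matrix.one_mul]

theorem Psi_inj : Function.Injective (Psi h) := by
  intro A B hAB
  have e := congrArg (fun g : GL (Fin 3) L => (gamma0 ζ)⁻¹ * (g : Matrix (Fin 3) (Fin 3) L) * gamma0 ζ) hAB
  simp only [Psi_coe, conj_gamma0 h] at e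
  exact mat_inj (Matrix.map_injective (lift_inj h) e)

theorem gamma0_form : (gamma0 ζ)ᵀ * Fmat ζ * gamma0 ζ = Hm.map (lift ζ h) := by
  have sq : rr ζ ^ 2 = 3 := by
    rw [rr_eq h]; linear_combination (ζ ^ 2 - 3) * h
  refine Matrix.ext fun i j => ?_
  fin_cases i <;> fin_cases j <;>
    simp [gamma0, Fmat, Hm, Matrix.mul_apply, Fin.sum_univ_three, lift_zr,
      show (lift ζ h) 2 = 2 from map_ofNat _ 2] <;>
    first | ring1 | linear_combination sq

variable (σ : L ≃+* L)

/-- Conjugation by `γ₀` turns the form `F` into the form `Hm`. -/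
theorem form_iff (hσ : σ ζ = ζ⁻¹) (X : M3) :
    ((gamma0 ζ * X.map (lift ζ h) * (gamma0 ζ)⁻¹).map σ)ᵀ * Fmat ζ *
      (gamma0 ζ * X.map (lift ζ h) * (gamma0 ζ)⁻¹) = Fmat ζ ↔ Xᴴ * Hm * X = Hm := by
  have hu := gamma0_isUnit h
  have hr : σ (rr ζ) = rr ζ := by rw [rr, map_add, map_inv₀, hσ, inv_inv]; ring
  have g1 : (gamma0 ζ).map σ = gamma0 ζ := by
    refine Matrix.ext fun i j => ?_
    fin_cases i <;> fin_cases j <;> simp [gamma0, hr]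
  have g2 : ((gamma0 ζ)⁻¹).map σ = (gamma0 ζ)⁻¹ := by
    refine (Matrix.inv_eq_right_inv ?_).symm
    have : ((gamma0 ζ) * (gamma0 ζ)⁻¹).map σ = 1 := by
      rw [Matrix.mul_nonsing_inv _ hu, Matrix.map_one _ (map_zero _) (map_one _)]
    rwa [Matrix.map_mul, g1] at this
  have g3 : ((X.map (lift ζ h)).map σ)ᵀ = Xᴴ.map (lift ζ h) := by
    refine Matrix.ext fun i j => ?_
    simp only [Matrix.transpose_apply, Matrix.map_apply, Matrix.conjTranspose_apply]
    rw [lift_star h σ hσ]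
  have g4 : (gamma0 ζ)ᵀ * ((gamma0 ζ)⁻¹)ᵀ = 1 := by
    rw [← Matrix.transpose_mul, Matrix.nonsing_inv_mul _ hu, Matrix.transpose_one]
  have g5 : ((gamma0 ζ)⁻¹)ᵀ * (gamma0 ζ)ᵀ = 1 := by
    rw [← Matrix.transpose_mul, Matrix.mul_nonsing_inv _ hu, Matrix.transpose_one]
  have g6 := Matrix.nonsing_inv_mul _ hu
  have g7 := Matrix.mul_nonsing_inv _ hu
  have key : ((gamma0 ζ * X.map (lift ζ h) * (gamma0 ζ)⁻¹).map σ)ᵀ * Fmat ζ *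
      (gamma0 ζ * X.map (lift ζ h) * (gamma0 ζ)⁻¹) =
      ((gamma0 ζ)⁻¹)ᵀ * (Xᴴ * Hm * X).map (lift ζ h) * (gamma0 ζ)⁻¹ := by
    rw [Matrix.map_mul, Matrix.map_mul, g1, g2, Matrix.transpose_mul, Matrix.transpose_mul, g3,
      Matrix.map_mul, Matrix.map_mul, ← gamma0_form h]
    simp only [Matrix.mul_assoc]
  rw [key]
  have hF : Fmat ζ = ((gamma0 ζ)⁻¹)ᵀ * Hm.map (lift ζ h) * (gamma0 ζ)⁻¹ := by
    rw [← gamma0_form h]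
    calc Fmat ζ = (((gamma0 ζ)⁻¹)ᵀ * (gamma0 ζ)ᵀ) * Fmat ζ * (gamma0 ζ * (gamma0 ζ)⁻¹) := by
          rw [g5, g7, Matrix.one_mul, Matrix.mul_one]
      _ = _ := by simp only [Matrix.mul_assoc]
  constructor
  · intro e
    apply Matrix.map_injective (lift_inj h)
    have e2 := congrArg (fun Y => (gamma0 ζ)ᵀ * Y * gamma0 ζ) (e.trans hF)
    have cancel : ∀ Y : Matrix (Fin 3) (Fin 3) L,
        (gamma0 ζ)ᵀ * (((gamma0 ζ)⁻¹)ᵀ * Y * (gamma0 ζ)⁻¹) * gamma0 ζ = Y := fun Y =>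
      calc _ = ((gamma0 ζ)ᵀ * ((gamma0 ζ)⁻¹)ᵀ) * Y * ((gamma0 ζ)⁻¹ * gamma0 ζ) := by
            simp only [Matrix.mul_assoc]
        _ = Y := by rw [g4, g6, Matrix.one_mul, Matrix.mul_one]
    simpa only [cancel] using e2
  · intro e
    rw [e, ← hF]

theorem exists_lift {Y : Matrix (Fin 3) (Fin 3) L}
    (hY : ∀ i j, ((gamma0 ζ)⁻¹ * Y * gamma0 ζ) i j ∈ Algebra.adjoin ℤ ({ζ} : Set L)) :
    ∃ X : M3, Y = gamma0 ζ * X.map (lift ζ h) * (gamma0 ζ)⁻¹ := by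
  choose X hX using fun i j => (mem_adjoin h _).mp (hY i j)
  have hu := gamma0_isUnit h
  refine ⟨X, ?_⟩
  have : Matrix.map X (lift ζ h) = (gamma0 ζ)⁻¹ * Y * gamma0 ζ := Matrix.ext hX
  rw [this]
  calc Y = (gamma0 ζ * (gamma0 ζ)⁻¹) * Y * (gamma0 ζ * (gamma0 ζ)⁻¹) := by
        rw [Matrix.mul_nonsing_inv _ hu, Matrix.one_mul, Matrix.mul_one]
    _ = _ := by simp only [Matrix.mul_assoc]

theorem Psi_mem (hσ : σ ζ = ζ⁻¹) (A : UO) :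
    ((Psi h A : Matrix (Fin 3) (Fin 3) L).map σ)ᵀ * Fmat ζ * (Psi h A : Matrix (Fin 3) (Fin 3) L) =
        Fmat ζ ∧
      ∀ i j : Fin 3, ((gamma0 ζ)⁻¹ * (Psi h A : Matrix (Fin 3) (Fin 3) L) * gamma0 ζ) i j ∈
        Algebra.adjoin ℤ ({ζ} : Set L) := by
  rw [Psi_coe]
  refine ⟨(form_iff h σ hσ _).mpr (mat_unitary A), fun i j => ?_⟩
  rw [conj_gamma0 h, mem_adjoin h]
  exact ⟨mat A i j, rfl⟩

theorem lift_mul_eq_one {X Y : M3} {g g' : Matrix (Fin 3) (Fin 3) L} (hg : g * g' = 1)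
    (hX : g = gamma0 ζ * X.map (lift ζ h) * (gamma0 ζ)⁻¹)
    (hY : g' = gamma0 ζ * Y.map (lift ζ h) * (gamma0 ζ)⁻¹) : X * Y = 1 := by
  apply Matrix.map_injective (lift_inj h)
  have hu := gamma0_isUnit h
  change (X * Y).map (lift ζ h) = (1 : M3).map (lift ζ h)
  rw [Matrix.map_one _ (map_zero _) (map_one _), Matrix.map_mul]
  have e : gamma0 ζ * (X.map (lift ζ h) * Y.map (lift ζ h)) * (gamma0 ζ)⁻¹ = 1 := by
    rw [← hg, hX, hY]
    calc _ = gamma0 ζ * X.map (lift ζ h) * 1 * Y.map (lift ζ h) * (gamma0 ζ)⁻¹ := by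
          simp only [Matrix.mul_assoc, Matrix.one_mul]
      _ = _ := by
          rw [← Matrix.nonsing_inv_mul _ hu]
          simp only [Matrix.mul_assoc]
  have e2 := conj_gamma0 h (X.map (lift ζ h) * Y.map (lift ζ h))
  rw [e, Matrix.mul_one, Matrix.nonsing_inv_mul _ hu] at e2
  exact e2.symm

/-- The integrality condition is needed for `g` and for `g⁻¹`, so that the integral model of `g`
is invertible over `ℤ[ζ]`. -/
theorem exists_Psi (hσ : σ ζ = ζ⁻¹) (g : GL (Fin 3) L)
    (h1 : ((g : Matrix (Fin 3) (Fin 3) L).map σ)ᵀ * Fmat ζ * (g : Matrix (Fin 3) (Fin 3) L) =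
      Fmat ζ)
    (h2 : ∀ i j : Fin 3, ((gamma0 ζ)⁻¹ * (g : Matrix (Fin 3) (Fin 3) L) * gamma0 ζ) i j ∈
        Algebra.adjoin ℤ ({ζ} : Set L))
    (h3 : ∀ i j : Fin 3,
      ((gamma0 ζ)⁻¹ * ((g⁻¹ : GL (Fin 3) L) : Matrix (Fin 3) (Fin 3) L) * gamma0 ζ) i j ∈
        Algebra.adjoin ℤ ({ζ} : Set L)) : ∃ A, Psi h A = g := by
  obtain ⟨X, hX⟩ := exists_lift h h2
  obtain ⟨Y, hY⟩ := exists_lift h h3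
  rw [hX] at h1
  have hXU := (form_iff h σ hσ X).mp h1
  refine ⟨mkU X Y (lift_mul_eq_one h g.mul_inv hX hY) (lift_mul_eq_one h g.inv_mul hY hX) hXU, ?_⟩
  apply Units.ext
  rw [Psi_coe, mat_mkU, ← hX]

/-- Central elements correspond to central elements. -/
theorem Psi_scalar (A : UO) : (∃ k : Fin 12, (Psi h A : Matrix (Fin 3) (Fin 3) L) =
    ζ ^ (k : ℕ) • (1 : Matrix (Fin 3) (Fin 3) L)) ↔ A ∈ ZO := by
  have hu := gamma0_isUnit h
  have hm : ∀ k : ℕ, (z ^ k • (1 : M3)).map (lift ζ h) =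
      ζ ^ k • (1 : Matrix (Fin 3) (Fin 3) L) := by
    intro k
    refine Matrix.ext fun i j => ?_
    rw [Matrix.map_apply, Matrix.smul_apply, Matrix.smul_apply, smul_eq_mul, smul_eq_mul, map_mul,
      map_pow, lift_z, Matrix.one_apply, Matrix.one_apply]
    split_ifs <;> simp
  rw [mem_ZO]
  constructor
  · rintro ⟨k, hk⟩
    refine ⟨k, k.2, Matrix.map_injective (lift_inj h) ?_⟩
    change (mat A).map (lift ζ h) = (z ^ (k : ℕ) • (1 : M3)).map (lift ζ h)
    rw [hm, ← conj_gamma0 h ((mat A).map (lift ζ h)), ← Psi_coe, hk, Matrix.mul_smul,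
      Matrix.mul_one, Matrix.smul_mul, Matrix.nonsing_inv_mul _ hu]
  · rintro ⟨k, hk, e⟩
    refine ⟨⟨k, hk⟩, ?_⟩
    rw [Psi_coe, e, hm, Matrix.mul_smul, Matrix.mul_one, Matrix.smul_mul,
      Matrix.mul_nonsing_inv _ hu]

theorem Psi_u : (Psi h uU : Matrix (Fin 3) (Fin 3) L) = umat ζ := by
  rw [Psi_coe, umat, mat_u]
  congr 2
  refine Matrix.ext fun i j => ?_
  fin_cases i <;> fin_cases j <;> simp [uM, lift_apply, Oz.zero_def, Oz.one_def] <;> ring1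

theorem Psi_v : (Psi h vU : Matrix (Fin 3) (Fin 3) L) = vmat ζ := by
  rw [Psi_coe, vmat, mat_v]
  congr 2
  refine Matrix.ext fun i j => ?_
  fin_cases i <;> fin_cases j <;> simp [vM, lift_apply, Oz.zero_def, Oz.one_def] <;> ring1

theorem Psi_b : (Psi h bU : Matrix (Fin 3) (Fin 3) L) = bmat ζ := by
  rw [Psi_coe, bmat, mat_b]
  congr 2
  refine Matrix.ext fun i j => ?_
  fin_cases i <;> fin_cases j <;> simp [bM, lift_apply, Oz.zero_def, Oz.one_def] <;> ring1

end Transfer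

/-- sending the generators `u, v, b` of the presented group to the classes
modulo `Z` of the matrices `γ₀u'γ₀⁻¹`, `γ₀v'γ₀⁻¹`, `γ₀b'γ₀⁻¹` extends to a group
isomorphism from `G` onto `U/Z`. Here `U` is the group of matrices `g` with
`σ(g)ᵀ F g = F` whose conjugate `γ₀⁻¹ g γ₀` has all entries in `ℤ[ζ]`, and
`Z = {ζʲ·I : 0 ≤ j < 12}`. -/
theorem stmt_0 (ζ : L) (hζ : IsPrimitiveRoot ζ 12)
    (σ : L ≃+* L) (hσ : σ ζ = ζ⁻¹)
    (U : Subgroup (Matrix.GeneralLinearGroup (Fin 3) L))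
    (hU : ∀ g : Matrix.GeneralLinearGroup (Fin 3) L, g ∈ U ↔
      (((g : Matrix (Fin 3) (Fin 3) L).map σ)ᵀ * Fmat ζ * (g : Matrix (Fin 3) (Fin 3) L)
          = Fmat ζ ∧
        ∀ i j : Fin 3,
          ((gamma0 ζ)⁻¹ * (g : Matrix (Fin 3) (Fin 3) L) * gamma0 ζ) i j ∈
            Algebra.adjoin ℤ ({ζ} : Set L)))
    (Z : Subgroup U) [Z.Normal]
    (hZ : ∀ x : U, x ∈ Z ↔ ∃ k : Fin 12,
      ((x : Matrix.GeneralLinearGroup (Fin 3) L) : Matrix (Fin 3) (Fin 3) L)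
        = ζ ^ (k : ℕ) • (1 : Matrix (Fin 3) (Fin 3) L)) :
    ∃ (xu xv xb : U) (φ : CS ≃* (U ⧸ Z)),
      ((xu : Matrix.GeneralLinearGroup (Fin 3) L) : Matrix (Fin 3) (Fin 3) L) = umat ζ ∧
      ((xv : Matrix.GeneralLinearGroup (Fin 3) L) : Matrix (Fin 3) (Fin 3) L) = vmat ζ ∧
      ((xb : Matrix.GeneralLinearGroup (Fin 3) L) : Matrix (Fin 3) (Fin 3) L) = bmat ζ ∧
      φ gu = QuotientGroup.mk xu ∧
      φ gv = QuotientGroup.mk xv ∧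
      φ gb = QuotientGroup.mk xb := by
  have h := zeta_four hζ
  -- `Psi` maps `UO` isomorphically onto `U`, and `ZO` onto `Z`
  let ψ : UO →* U := (Psi h).codRestrict U fun A => (hU _).mpr (Psi_mem h σ hσ A)
  have hψ : ∀ A, ψ A ∈ Z ↔ A ∈ ZO := fun A => (hZ _).trans (Psi_scalar h A)
  have hsurj : Function.Surjective ψ := by
    intro g
    obtain ⟨h1, h2⟩ := (hU g).mp g.2
    obtain ⟨A, hA⟩ := exists_Psi h σ hσ g h1 h2 ((hU _).mp (U.inv_mem g.2)).2
    exact ⟨A, Subtype.ext hA⟩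
  let θ : PU →* U ⧸ Z := QuotientGroup.lift ZO ((QuotientGroup.mk' Z).comp ψ) fun A hA =>
    (QuotientGroup.eq_one_iff _).mpr ((hψ A).mpr hA)
  have hθ : ∀ A : UO, θ (QuotientGroup.mk A) = QuotientGroup.mk (ψ A) := fun A => rfl
  have hθi : Function.Injective θ := by
    rw [injective_iff_map_eq_one]
    intro x
    induction x using QuotientGroup.induction_on with
    | H A =>
      rw [hθ, QuotientGroup.eq_one_iff, QuotientGroup.eq_one_iff, hψ]
      exact id
  have hθs : Function.Surjective θ := by
    intro x
    induction x using QuotientGroup.induction_on with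
    | H g =>
      obtain ⟨A, rfl⟩ := hsurj g
      exact ⟨QuotientGroup.mk A, hθ A⟩
  refine ⟨ψ uU, ψ vU, ψ bU, MulEquiv.ofBijective (θ.comp piU)
    ⟨hθi.comp piU_injective, hθs.comp piU_surjective⟩, Psi_u h, Psi_v h, Psi_b h, ?_, ?_, ?_⟩
  · exact (congrArg θ piU_u).trans (hθ uU)
  · exact (congrArg θ piU_v).trans (hθ vU)
  · exact (congrArg θ piU_b).trans (hθ bU)

end
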